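/- arXiv:1802.10385 — 3 statements merged into one kernel-verified Lean document; each statement's English description precedes it below -/
import Mathlib

section
/- Let B = A₀ ⊆ A₁ ⊆ ⋯ ⊆ A_{s-1} ⊆ A_s = A be a chain of subalgebras (with the same identity) of an Artin algebra A such that rad(A_{i-1}) is a left ideal of A_i for all 1 ≤ i ≤ s, where s is a positive integer, and suppose that A is 1-syzygy-finite. If the quotient algebra A₁/(rad(A_{s-1})⋯rad(A₁)) is B-syzygy-finite (for example, representation-finite), then the finitistic dimension of B is finite. (When s = 1 the quotient A₁/(rad(A_{s-1})⋯rad(A₁)) is understood to be 0, so the hypothesis holds automatically.) -/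
universe u

open TensorProduct

section Basic

variable (Λ : Type u) [Ring Λ]

/-- `ProjDimLE Λ n M` : the module `M` admits a projective resolution of length `≤ n`
by finitely generated projective `Λ`-modules. -/
def ProjDimLE : ℕ → ModuleCat.{u} Λ → Prop
  | 0, M => Module.Projective Λ M
  | n + 1, M => ∃ (P : ModuleCat.{u} Λ) (g : P →ₗ[Λ] M),
      Module.Projective Λ P ∧ Module.Finite Λ P ∧ Function.Surjective g ∧
      ProjDimLE n (ModuleCat.of Λ (LinearMap.ker g))

/-- The finitistic dimension of `Λ` (computed on finitely generated modules) is finite. -/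
def FinFinDim : Prop :=
  ∃ n : ℕ, ∀ M : ModuleCat.{u} Λ, Module.Finite Λ M →
    (∃ k : ℕ, ProjDimLE Λ k M) → ProjDimLE Λ n M

/-- A module is indecomposable. -/
def ModIndec (M : ModuleCat.{u} Λ) : Prop :=
  Nontrivial M ∧ ∀ N₁ N₂ : Submodule Λ M, IsCompl N₁ N₂ → N₁ = ⊥ ∨ N₂ = ⊥

/-- A class of modules has only finitely many isomorphism classes of indecomposables. -/
def ClassRepFinite (C : ModuleCat.{u} Λ → Prop) : Prop :=
  ∃ (k : ℕ) (N : Fin k → ModuleCat.{u} Λ),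
    ∀ M : ModuleCat.{u} Λ, C M → ModIndec Λ M → ∃ i, Nonempty (M ≃ₗ[Λ] N i)

/-- `Λ` is representation-finite. -/
def RepFinite : Prop :=
  ClassRepFinite Λ (fun M => Module.Finite Λ M)

/-- `X` belongs to `add N`: it is a direct summand of a finite direct sum of copies of `N`. -/
def InAdd (N X : ModuleCat.{u} Λ) : Prop :=
  ∃ (k : ℕ) (i : X →ₗ[Λ] (Fin k → N)) (p : (Fin k → N) →ₗ[Λ] X),
    p.comp i = LinearMap.id

/-- A submodule is superfluous (small). -/
def IsSuperfluous {M : ModuleCat.{u} Λ} (N : Submodule Λ M) : Prop :=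
  ∀ L : Submodule Λ M, L ⊔ N = ⊤ → L = ⊤

/-- `K` is (isomorphic to) the kernel of a projective cover of `M`, i.e. a first syzygy. -/
def IsSyzygyOf (K M : ModuleCat.{u} Λ) : Prop :=
  ∃ (P : ModuleCat.{u} Λ) (g : P →ₗ[Λ] M), Module.Projective Λ P ∧ Module.Finite Λ P ∧
    Function.Surjective g ∧ IsSuperfluous Λ (LinearMap.ker g) ∧
    Nonempty (K ≃ₗ[Λ] LinearMap.ker g)

/-- `K` is an `n`-th syzygy of `M`. -/
def IsNthSyzygy : ℕ → ModuleCat.{u} Λ → ModuleCat.{u} Λ → Prop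
  | 0, K, M => Nonempty (K ≃ₗ[Λ] M)
  | n + 1, K, M => ∃ K' : ModuleCat.{u} Λ, IsNthSyzygy n K' M ∧ IsSyzygyOf Λ K K'

/-- A class `C` of modules is `m`-syzygy-finite. -/
def MSyzygyFiniteClass (m : ℕ) (C : ModuleCat.{u} Λ → Prop) : Prop :=
  ∃ N : ModuleCat.{u} Λ, Module.Finite Λ N ∧
    ∀ X, C X → ∀ K, IsNthSyzygy Λ m K X → InAdd Λ N K

/-- A class `C` of modules is syzygy-finite. -/
def SyzygyFiniteClass (C : ModuleCat.{u} Λ → Prop) : Prop :=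
  ∃ m : ℕ, MSyzygyFiniteClass Λ m C

/-- `Λ` is 1-syzygy-finite. -/
def OneSyzygyFinite : Prop :=
  MSyzygyFiniteClass Λ 1 (fun X => Module.Finite Λ X)

/-- `Λ` is syzygy-finite. -/
def AlgSyzygyFinite : Prop :=
  SyzygyFiniteClass Λ (fun X => Module.Finite Λ X)

/-- The Jacobson radical of `Λ` (intersection of the maximal left ideals). -/
def jacobsonRad : Ideal Λ := sInf {I : Ideal Λ | I.IsMaximal}

end Basic

/-- The Jacobson radical of a subalgebra, as a subset of the ambient algebra. -/
def radSet {R A : Type u} [CommRing R] [Ring A] [Algebra R A] (S : Subalgebra R A) : Set A :=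
  Subtype.val '' ((jacobsonRad ↥S : Ideal ↥S) : Set ↥S)

section Rel

variable {R : Type u} [CommRing R] {B A : Type u} [Ring B] [Ring A]
  [Algebra R B] [Algebra R A] (φ : B →ₐ[R] A)

/-- The tensor product `A ⊗_B X` of the (A,B)-bimodule `A` with a left `A`-module `X`
(viewed as a `B`-module via `φ`), realized as a quotient of `A ⊗_R X`. -/
noncomputable def relTensor (X : ModuleCat.{u} A) : ModuleCat.{u} A :=
  letI : Module R X := Module.compHom X (algebraMap R A)
  ModuleCat.of A ((A ⊗[R] X) ⧸ Submodule.span A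
    {z : A ⊗[R] X | ∃ (a : A) (b : B) (x : X),
      z = (a * φ b) ⊗ₜ[R] x - a ⊗ₜ[R] (φ b • x)})

/-- `X` is `(A,B)`-projective: a direct summand of `A ⊗_B X`. -/
noncomputable def RelProjective (X : ModuleCat.{u} A) : Prop :=
  ∃ (i : X →ₗ[A] relTensor φ X) (p : relTensor φ X →ₗ[A] X), p.comp i = LinearMap.id

/-- The map `g` admits a `B`-linear map `h` with `g ∘ h ∘ g = g`
(this encodes `(A,B)`-exactness of the corresponding short exact sequence). -/
def RelSplitB {P X : ModuleCat.{u} A} (g : P →ₗ[A] X) : Prop :=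
  ∃ h : X →+ P, (∀ (b : B) (x : X), h (φ b • x) = φ b • h x) ∧
    ∀ p : P, g (h (g p)) = g p

/-- `RelProjDimLE φ n X` : `X` has an `(A,B)`-exact resolution of length `≤ n` by
finitely generated `(A,B)`-projective modules, i.e. relative projective dimension `≤ n`. -/
noncomputable def RelProjDimLE : ℕ → ModuleCat.{u} A → Prop
  | 0, X => RelProjective φ X
  | n + 1, X => ∃ (P : ModuleCat.{u} A) (g : P →ₗ[A] X),
      RelProjective φ P ∧ Module.Finite A P ∧ Function.Surjective g ∧ RelSplitB φ g ∧
      RelProjDimLE n (ModuleCat.of A (LinearMap.ker g))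

/-- Restriction of scalars along `φ` of an `A`-module, as an object of `ModuleCat B`. -/
def resMod (X : ModuleCat.{u} A) : ModuleCat.{u} B :=
  @ModuleCat.of B _ X _ (Module.compHom X φ.toRingHom)

/-- The right `B`-module structure on `A` induced by `φ`. -/
def rightModB : Module Bᵐᵒᵖ A :=
  Module.compHom A (RingHom.op φ.toRingHom)

end Rel

namespace ArtinAlgebra

section ShortExact

variable (Λ : Type u) [Ring Λ]

/-- There is a short exact sequence `0 → X → Y → Z → 0`. -/
def SES (X Y Z : Type u) [AddCommGroup X] [Module Λ X] [AddCommGroup Y] [Module Λ Y]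
    [AddCommGroup Z] [Module Λ Z] : Prop :=
  ∃ (f : X →ₗ[Λ] Y) (g : Y →ₗ[Λ] Z),
    Function.Injective f ∧ Function.Exact f g ∧ Function.Surjective g

/-- `X` and `Y` become isomorphic after adding finitely generated projective modules. -/
def StabIso (X Y : Type u) [AddCommGroup X] [Module Λ X] [AddCommGroup Y] [Module Λ Y] : Prop :=
  ∃ P Q : ModuleCat.{u} Λ, (Module.Finite Λ P ∧ Module.Projective Λ P) ∧
    (Module.Finite Λ Q ∧ Module.Projective Λ Q) ∧ Nonempty ((X × P) ≃ₗ[Λ] (Y × Q))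

/-- The projective dimension of `X` is at most `n`. -/
abbrev PdLE (X : Type u) [AddCommGroup X] [Module Λ X] (n : ℕ) : Prop :=
  CategoryTheory.HasProjectiveDimensionLE (ModuleCat.of Λ X) n

variable {Λ}
variable {X Y Z X' Y' Z' K K' P P' : Type u}
  [AddCommGroup X] [Module Λ X] [AddCommGroup Y] [Module Λ Y] [AddCommGroup Z] [Module Λ Z]
  [AddCommGroup X'] [Module Λ X'] [AddCommGroup Y'] [Module Λ Y'] [AddCommGroup Z'] [Module Λ Z']
  [AddCommGroup K] [Module Λ K] [AddCommGroup K'] [Module Λ K']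
  [AddCommGroup P] [Module Λ P] [AddCommGroup P'] [Module Λ P']

lemma SES.congr (h : SES Λ X Y Z) (e₁ : X ≃ₗ[Λ] X') (e₂ : Y ≃ₗ[Λ] Y') (e₃ : Z ≃ₗ[Λ] Z') :
    SES Λ X' Y' Z' := by
  obtain ⟨f, g, hf, hfg, hg⟩ := h
  refine ⟨e₂.toLinearMap ∘ₗ f ∘ₗ e₁.symm.toLinearMap, e₃.toLinearMap ∘ₗ g ∘ₗ e₂.symm.toLinearMap,
    ?_, ?_, ?_⟩
  · simpa using e₂.injective.comp (hf.comp e₁.symm.injective)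
  · intro y
    constructor
    · intro hy
      obtain ⟨x, hx⟩ := (hfg (e₂.symm y)).1 (by simpa using hy)
      exact ⟨e₁ x, by simp [hx]⟩
    · rintro ⟨x, rfl⟩
      simp [hfg.apply_apply_eq_zero]
  · simpa using e₃.surjective.comp (hg.comp e₂.symm.surjective)

lemma SES.of_ker (g : Y →ₗ[Λ] Z) (hg : Function.Surjective g) : SES Λ (LinearMap.ker g) Y Z :=
  ⟨(LinearMap.ker g).subtype, g, Subtype.val_injective,
    (LinearMap.exact_subtype_ker_map g), hg⟩

lemma SES.of_submodule (N : Submodule Λ Y) : SES Λ N Y (Y ⧸ N) :=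
  ⟨N.subtype, N.mkQ, Subtype.val_injective, LinearMap.exact_subtype_mkQ N, N.mkQ_surjective⟩

lemma SES.prod (h : SES Λ X Y Z) (h' : SES Λ X' Y' Z') :
    SES Λ (X × X') (Y × Y') (Z × Z') := by
  obtain ⟨f, g, hf, hfg, hg⟩ := h
  obtain ⟨f', g', hf', hfg', hg'⟩ := h'
  refine ⟨f.prodMap f', g.prodMap g', ?_, ?_, ?_⟩
  · exact hf.prodMap hf'
  · rintro ⟨y, y'⟩
    have h1 := hfg y
    have h2 := hfg' y'
    simp only [LinearMap.prodMap_apply, Prod.mk_eq_zero, h1, h2, Set.mem_range, Prod.exists,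
      Prod.mk.injEq, exists_and_left, exists_and_right]
  · exact hg.prodMap hg'

lemma SES.id_left : SES Λ X X PUnit.{u + 1} :=
  ⟨LinearMap.id, 0, Function.injective_id, fun y => by simp, fun _ => ⟨0, rfl⟩⟩

lemma SES.id_right : SES Λ PUnit.{u + 1} X X :=
  ⟨0, LinearMap.id, fun _ _ _ => rfl, fun y => by simp [eq_comm], fun x => ⟨x, rfl⟩⟩

lemma SES.add_left (h : SES Λ X Y Z) (W : Type u) [AddCommGroup W] [Module Λ W] :
    SES Λ (X × W) (Y × W) Z :=
  (h.prod SES.id_left).congr (.refl Λ _) (.refl Λ _) (LinearEquiv.prodUnique)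

lemma SES.add_right (h : SES Λ X Y Z) (W : Type u) [AddCommGroup W] [Module Λ W] :
    SES Λ X (Y × W) (Z × W) :=
  (h.prod SES.id_right).congr (LinearEquiv.prodUnique) (.refl Λ _) (.refl Λ _)

/-- Rotation of a short exact sequence. -/
lemma SES.rotate (h : SES Λ X Y Z) (hP : SES Λ K P Z) [Module.Projective Λ P] :
    SES Λ K (X × P) Y := by
  obtain ⟨f, g, hf, hfg, hg⟩ := h
  obtain ⟨j, q, hj, hjq, hq⟩ := hP
  obtain ⟨r, hr⟩ := Module.projective_lifting_property g q hg
  have hr' : ∀ p, g (r p) = q p := fun p => LinearMap.congr_fun hr p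
  have key : ∀ k : K, ∃ x : X, f x = -r (j k) := fun k =>
    (hfg _).1 (by rw [map_neg, hr', hjq.apply_apply_eq_zero, neg_zero])
  choose a ha using key
  let A : K →ₗ[Λ] X :=
    { toFun := a
      map_add' := fun k l => hf (by simp [ha, add_comm])
      map_smul' := fun c k => hf (by simp [ha]) }
  refine ⟨A.prod j, f.coprod r, ?_, ?_, ?_⟩
  · intro k l hkl
    exact hj (congrArg Prod.snd hkl)
  · rintro ⟨x, p⟩
    constructor
    · intro hxp
      have hxp' : f x + r p = 0 := by simpa using hxp
      have : q p = 0 := by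
        rw [← hr', eq_neg_of_add_eq_zero_right hxp', map_neg, hfg.apply_apply_eq_zero, neg_zero]
      obtain ⟨k, rfl⟩ := (hjq p).1 this
      refine ⟨k, Prod.ext (hf ?_) rfl⟩
      exact (ha k).trans (eq_neg_of_add_eq_zero_left hxp').symm
    · rintro ⟨k, hk⟩
      rw [← hk]
      simp [A, ha]
  · intro y
    obtain ⟨p, hp⟩ := hq (g y)
    obtain ⟨x, hx⟩ := (hfg (y - r p)).1 (by rw [map_sub, hr', hp, sub_self])
    exact ⟨(x, p), by simp [hx]⟩

lemma SES.equiv_prod (h : SES Λ X Y Z) [Module.Projective Λ Z] : Nonempty (Y ≃ₗ[Λ] (X × Z)) := by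
  obtain ⟨f, g, hf, hfg, hg⟩ := h
  obtain ⟨l, hl⟩ := Module.projective_lifting_property g LinearMap.id hg
  exact ⟨(hfg.splitSurjectiveEquiv hf ⟨l, hl⟩).1⟩

/-- Schanuel's lemma. -/
lemma SES.schanuel (h : SES Λ K P X) (h' : SES Λ K' P' X)
    [Module.Projective Λ P] [Module.Projective Λ P'] :
    Nonempty ((K × P') ≃ₗ[Λ] (K' × P)) := by
  obtain ⟨e⟩ := (h'.rotate h).equiv_prod
  exact ⟨e.symm⟩

lemma StabIso.of_equiv (e : X ≃ₗ[Λ] Y) : StabIso Λ X Y :=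
  ⟨ModuleCat.of Λ PUnit, ModuleCat.of Λ PUnit, ⟨inferInstance, inferInstance⟩,
    ⟨inferInstance, inferInstance⟩, ⟨e.prodCongr (.refl Λ _)⟩⟩

lemma StabIso.refl : StabIso Λ X X := .of_equiv (.refl Λ X)

lemma StabIso.symm (h : StabIso Λ X Y) : StabIso Λ Y X := by
  obtain ⟨P, Q, hP, hQ, ⟨e⟩⟩ := h
  exact ⟨Q, P, hQ, hP, ⟨e.symm⟩⟩

lemma StabIso.trans (h : StabIso Λ X Y) (h' : StabIso Λ Y Z) : StabIso Λ X Z := by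
  obtain ⟨P, Q, ⟨_, _⟩, ⟨_, _⟩, ⟨e⟩⟩ := h
  obtain ⟨P', Q', ⟨_, _⟩, ⟨_, _⟩, ⟨e'⟩⟩ := h'
  refine ⟨ModuleCat.of Λ (P × P'), ModuleCat.of Λ (Q' × Q), ⟨inferInstance, inferInstance⟩,
    ⟨inferInstance, inferInstance⟩, ⟨?_⟩⟩
  exact (LinearEquiv.prodAssoc Λ X P P').symm ≪≫ₗ e.prodCongr (.refl Λ P') ≪≫ₗ
    LinearEquiv.prodAssoc Λ Y Q P' ≪≫ₗ
    (LinearEquiv.refl Λ Y).prodCongr (LinearEquiv.prodComm Λ Q P') ≪≫ₗ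
    (LinearEquiv.prodAssoc Λ Y P' Q).symm ≪≫ₗ e'.prodCongr (.refl Λ Q) ≪≫ₗ
    LinearEquiv.prodAssoc Λ Z Q' Q

lemma StabIso.prod (h : StabIso Λ X Y) (h' : StabIso Λ X' Y') :
    StabIso Λ (X × X') (Y × Y') := by
  obtain ⟨P, Q, ⟨_, _⟩, ⟨_, _⟩, ⟨e⟩⟩ := h
  obtain ⟨P', Q', ⟨_, _⟩, ⟨_, _⟩, ⟨e'⟩⟩ := h'
  refine ⟨ModuleCat.of Λ (P × P'), ModuleCat.of Λ (Q × Q'), ⟨inferInstance, inferInstance⟩,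
    ⟨inferInstance, inferInstance⟩, ⟨?_⟩⟩
  exact LinearEquiv.prodProdProdComm Λ X X' P P' ≪≫ₗ e.prodCongr e' ≪≫ₗ
    LinearEquiv.prodProdProdComm Λ Y Q Y' Q'

lemma StabIso.prod_projective [Module.Finite Λ P] [Module.Projective Λ P] :
    StabIso Λ (X × P) X :=
  ⟨ModuleCat.of Λ PUnit, ModuleCat.of Λ P, ⟨inferInstance, inferInstance⟩, ⟨‹_›, ‹_›⟩,
    ⟨LinearEquiv.prodUnique⟩⟩

/-- Syzygies of stably isomorphic modules are stably isomorphic. -/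
lemma StabIso.syzygy (h : StabIso Λ X Y) (hK : SES Λ K P X) (hK' : SES Λ K' P' Y)
    [Module.Finite Λ P] [Module.Projective Λ P]
    [Module.Finite Λ P'] [Module.Projective Λ P'] : StabIso Λ K K' := by
  obtain ⟨Q, Q', ⟨_, _⟩, ⟨_, _⟩, ⟨e⟩⟩ := h
  have h1 := (hK.add_right Q).congr (.refl Λ _) (.refl Λ _) e
  obtain ⟨e'⟩ := h1.schanuel (hK'.add_right Q')
  exact ⟨ModuleCat.of Λ (P' × Q'), ModuleCat.of Λ (P × Q), ⟨inferInstance, inferInstance⟩,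
    ⟨inferInstance, inferInstance⟩, ⟨e'⟩⟩

/-- The horseshoe lemma. -/
lemma SES.horseshoe (h : SES Λ X Y Z) (hX : SES Λ K P X) (hZ : SES Λ K' P' Z)
    [Module.Projective Λ P'] :
    ∃ L : ModuleCat.{u} Λ, SES Λ K L K' ∧ SES Λ L (P × P') Y := by
  obtain ⟨f, g, hf, hfg, hg⟩ := h
  obtain ⟨i, p, hi, hip, hp⟩ := hX
  obtain ⟨j, q, hj, hjq, hq⟩ := hZ
  obtain ⟨r, hr⟩ := Module.projective_lifting_property g q hg
  have hr' : ∀ b, g (r b) = q b := fun b => LinearMap.congr_fun hr b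
  let φ : (P × P') →ₗ[Λ] Y := (f ∘ₗ p).coprod r
  have hφ : ∀ a b, φ (a, b) = f (p a) + r b := fun a b => by simp [φ]
  have hφs : Function.Surjective φ := by
    intro y
    obtain ⟨b, hb⟩ := hq (g y)
    obtain ⟨x, hx⟩ := (hfg (y - r b)).1 (by rw [map_sub, hr', hb, sub_self])
    obtain ⟨a, rfl⟩ := hp x
    exact ⟨(a, b), by simp [hφ, hx]⟩
  refine ⟨ModuleCat.of Λ (LinearMap.ker φ), ?_, SES.of_ker φ hφs⟩
  have hqz : ∀ z : LinearMap.ker φ, q z.1.2 = 0 := by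
    rintro ⟨⟨a, b⟩, hz⟩
    rw [LinearMap.mem_ker, hφ] at hz
    change q b = 0
    rw [← hr', eq_neg_of_add_eq_zero_right hz, map_neg, hfg.apply_apply_eq_zero, neg_zero]
  have key : ∀ z : LinearMap.ker φ, ∃ k : K', j k = z.1.2 := fun z => (hjq _).1 (hqz z)
  choose c hc using key
  let C : LinearMap.ker φ →ₗ[Λ] K' :=
    { toFun := c
      map_add' := fun k l => hj (by simp [hc])
      map_smul' := fun a k => hj (by simp [hc]) }
  let I : K →ₗ[Λ] LinearMap.ker φ := LinearMap.codRestrict _ (LinearMap.inl Λ P P' ∘ₗ i) (by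
    intro k
    simp [hφ, hip.apply_apply_eq_zero])
  refine ⟨I, C, ?_, ?_, ?_⟩
  · intro k l hkl
    exact hi (congrArg (fun z => z.1.1) hkl)
  · intro z
    constructor
    · intro hz
      have hb : z.1.2 = 0 := by rw [← hc z, show c z = 0 from hz, map_zero]
      have hz' := z.2
      rw [LinearMap.mem_ker, show z.1 = (z.1.1, z.1.2) from rfl, hφ, hb, map_zero, add_zero] at hz'
      obtain ⟨k, hk⟩ := (hip z.1.1).1 (hf (hz'.trans (map_zero f).symm))
      exact ⟨k, Subtype.ext (Prod.ext hk hb.symm)⟩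
    · rintro ⟨k, rfl⟩
      exact hj ((hc _).trans (map_zero j).symm)
  · intro k
    obtain ⟨x, hx⟩ := (hfg (r (j k))).1 (by rw [hr', hjq.apply_apply_eq_zero])
    obtain ⟨a, rfl⟩ := hp x
    refine ⟨⟨(-a, j k), by simp [hφ, hx]⟩, hj (hc _)⟩

open CategoryTheory in
lemma shortExact_of_exact (f : X →ₗ[Λ] Y) (g : Y →ₗ[Λ] Z) (hf : Function.Injective f)
    (hfg : Function.Exact f g) (hg : Function.Surjective g) :
    (ShortComplex.mk (ModuleCat.ofHom f) (ModuleCat.ofHom g)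
      (by ext x; exact hfg.apply_apply_eq_zero x)).ShortExact where
  exact := (ShortComplex.ShortExact.moduleCat_exact_iff_function_exact _).2 hfg
  mono_f := (ModuleCat.mono_iff_injective _).2 hf
  epi_g := (ModuleCat.epi_iff_surjective _).2 hg

end ShortExact

section ProjectiveDimension

open CategoryTheory

variable {Λ : Type u} [Ring Λ] {X Y Z P : Type u}
  [AddCommGroup X] [Module Λ X] [AddCommGroup Y] [Module Λ Y] [AddCommGroup Z] [Module Λ Z]
  [AddCommGroup P] [Module Λ P]

lemma pdLE_zero_iff : PdLE Λ X 0 ↔ Module.Projective Λ X :=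
  (projective_iff_hasProjectiveDimensionLE_zero (X := ModuleCat.of Λ X)).symm.trans
    (IsProjective.iff_projective X).symm

lemma PdLE.of_projective [Module.Projective Λ P] (n : ℕ) : PdLE Λ P n := by
  have : HasProjectiveDimensionLT (ModuleCat.of Λ P) 1 := pdLE_zero_iff.2 ‹_›
  exact hasProjectiveDimensionLT_of_ge _ 1 _ (by omega)

lemma PdLE.mono {m n : ℕ} (h : PdLE Λ X m) (hmn : m ≤ n) : PdLE Λ X n :=
  hasProjectiveDimensionLT_of_ge _ (m + 1) _ (by omega)

lemma PdLE.of_retract {n : ℕ} (h : PdLE Λ Y n) (i : X →ₗ[Λ] Y) (p : Y →ₗ[Λ] X)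
    (hpi : p ∘ₗ i = LinearMap.id) : PdLE Λ X n :=
  Retract.hasProjectiveDimensionLT (X := ModuleCat.of Λ X) (Y := ModuleCat.of Λ Y)
    { i := ModuleCat.ofHom i
      r := ModuleCat.ofHom p
      retract := by rw [← ModuleCat.ofHom_comp, hpi]; rfl } (n + 1)

lemma PdLE.of_equiv {n : ℕ} (h : PdLE Λ X n) (e : X ≃ₗ[Λ] Y) : PdLE Λ Y n :=
  h.of_retract e.symm.toLinearMap e.toLinearMap (by ext; simp)

lemma SES.pdLE_right {n : ℕ} (h : SES Λ X Y Z) (hX : PdLE Λ X n) (hY : PdLE Λ Y (n + 1)) :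
    PdLE Λ Z (n + 1) := by
  obtain ⟨f, g, hf, hfg, hg⟩ := h
  exact (shortExact_of_exact f g hf hfg hg).hasProjectiveDimensionLT_X₃ (n + 1) hX hY

lemma SES.pdLE_mid {n : ℕ} (h : SES Λ X Y Z) (hX : PdLE Λ X n) (hZ : PdLE Λ Z n) :
    PdLE Λ Y n := by
  obtain ⟨f, g, hf, hfg, hg⟩ := h
  exact (shortExact_of_exact f g hf hfg hg).hasProjectiveDimensionLT_X₂ (n + 1) hX hZ

lemma SES.pdLE_left {n : ℕ} (h : SES Λ X Y Z) (hY : PdLE Λ Y n) (hZ : PdLE Λ Z (n + 1)) :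
    PdLE Λ X n := by
  obtain ⟨f, g, hf, hfg, hg⟩ := h
  exact (shortExact_of_exact f g hf hfg hg).hasProjectiveDimensionLT_X₁ (n + 1) hY hZ

lemma SES.pdLE_succ_iff {n : ℕ} (h : SES Λ X P Z) [Module.Projective Λ P] :
    PdLE Λ Z (n + 1) ↔ PdLE Λ X n :=
  ⟨fun hZ => h.pdLE_left (.of_projective n) hZ, fun hX => h.pdLE_right hX (.of_projective _)⟩

lemma PdLE.prod {n : ℕ} (hX : PdLE Λ X n) (hY : PdLE Λ Y n) : PdLE Λ (X × Y) n :=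
  SES.pdLE_mid (X := X) (Z := Y) ⟨LinearMap.inl Λ X Y, LinearMap.snd Λ X Y,
    LinearMap.inl_injective, .inl_snd, LinearMap.snd_surjective⟩ hX hY

lemma PdLE.pi {n k : ℕ} {M : Fin k → Type u} [∀ i, AddCommGroup (M i)] [∀ i, Module Λ (M i)]
    (h : ∀ i, PdLE Λ (M i) n) : PdLE Λ (∀ i, M i) n := by
  induction k with
  | zero => exact PdLE.of_projective n
  | succ k ih =>
    exact ((h 0).prod (ih fun i => h i.succ)).of_equiv (Fin.consLinearEquiv Λ M)

lemma StabIso.pdLE {n : ℕ} (h : StabIso Λ X Y) (hX : PdLE Λ X n) : PdLE Λ Y n := by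
  obtain ⟨P, Q, ⟨_, _⟩, ⟨_, _⟩, ⟨e⟩⟩ := h
  have : PdLE Λ (Y × Q) n := (hX.prod (.of_projective n)).of_equiv e
  exact this.of_retract (LinearMap.inl Λ Y Q) (LinearMap.fst Λ Y Q) (by ext; simp)

lemma projDimLE_iff [IsNoetherianRing Λ] (n : ℕ) (M : ModuleCat.{u} Λ) [Module.Finite Λ M] :
    ProjDimLE Λ n M ↔ PdLE Λ M n := by
  induction n generalizing M with
  | zero => exact pdLE_zero_iff.symm
  | succ n ih =>
    constructor
    · rintro ⟨P, g, _, _, hg, h⟩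
      exact (SES.of_ker g hg).pdLE_succ_iff.2 ((ih _).1 h)
    · intro h
      obtain ⟨k, g, hg⟩ := Module.Finite.exists_fin' Λ M
      exact ⟨ModuleCat.of Λ (Fin k → Λ), g, inferInstanceAs (Module.Projective Λ (Fin k → Λ)),
        inferInstanceAs (Module.Finite Λ (Fin k → Λ)), hg,
        (ih _).2 ((SES.of_ker g hg).pdLE_succ_iff.1 h)⟩

/-- If `0 → U → U × P → Z → 0` is exact with `P` projective and `Z` of finite projective
dimension, then any retract of `U` on which the component `U → U` is nilpotent has finite
projective dimension. -/
lemma PdLE.of_nilpotent {U U₀ : Type u} [AddCommGroup U] [Module Λ U] [AddCommGroup U₀]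
    [Module Λ U₀] [Module.Projective Λ P] {r k : ℕ} (h : U →ₗ[Λ] U × P) (g : (U × P) →ₗ[Λ] Z)
    (hh : Function.Injective h) (hhg : Function.Exact h g) (hg : Function.Surjective g)
    (hZ : PdLE Λ Z r) (i : U₀ →ₗ[Λ] U) (p : U →ₗ[Λ] U₀) (hpi : p ∘ₗ i = LinearMap.id)
    (hk : ((LinearMap.fst Λ U P ∘ₗ h : Module.End Λ U) ^ k) ∘ₗ i = 0) : PdLE Λ U₀ r := by
  let f : Module.End Λ U := LinearMap.fst Λ U P ∘ₗ h
  have := hasExt_of_enoughProjectives.{u} (ModuleCat.{u} Λ)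
  have hS := shortExact_of_exact h g hh hhg hg
  have hP : HasProjectiveDimensionLT (ModuleCat.of Λ P) (r + 1) := PdLE.of_projective r
  have hZ' : HasProjectiveDimensionLT (ModuleCat.of Λ Z) (r + 1) := hZ
  refine (hasProjectiveDimensionLT_iff _ _).2 fun n hn C x => ?_
  have step : ∀ y : Abelian.Ext (ModuleCat.of Λ U) C n,
      ∃ y' : Abelian.Ext (ModuleCat.of Λ U) C n,
        (Abelian.Ext.mk₀ (ModuleCat.ofHom f)).comp y' (zero_add n) = y := by
    intro y
    obtain ⟨w, hw⟩ := Abelian.Ext.contravariant_sequence_exact₁ hS C y (n₁ := 1 + n) rfl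
      (Abelian.Ext.eq_zero_of_hasProjectiveDimensionLT _ (r + 1) (by omega))
    refine ⟨(Abelian.Ext.mk₀ (ModuleCat.ofHom (LinearMap.inl Λ U P))).comp w (zero_add n), ?_⟩
    have hsum : ModuleCat.ofHom h = ModuleCat.ofHom f ≫ ModuleCat.ofHom (LinearMap.inl Λ U P) +
        ModuleCat.ofHom (LinearMap.snd Λ U P ∘ₗ h) ≫ ModuleCat.ofHom (LinearMap.inr Λ U P) := by
      ext u : 2
      change h u = ((h u).1, 0) + (0, (h u).2)
      simp
    have h0 : (Abelian.Ext.mk₀ (ModuleCat.ofHom (LinearMap.inr Λ U P))).comp w (zero_add n) = 0 :=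
      Abelian.Ext.eq_zero_of_hasProjectiveDimensionLT _ (r + 1) hn
    rw [← hw]
    change _ = (Abelian.Ext.mk₀ (ModuleCat.ofHom h)).comp w (zero_add n)
    rw [hsum, Abelian.Ext.mk₀_add, Abelian.Ext.add_comp, ← Abelian.Ext.mk₀_comp_mk₀,
      ← Abelian.Ext.mk₀_comp_mk₀, Abelian.Ext.comp_assoc_of_second_deg_zero,
      Abelian.Ext.comp_assoc_of_second_deg_zero, h0, Abelian.Ext.comp_zero, add_zero]
  have steps : ∀ (m : ℕ) (y : Abelian.Ext (ModuleCat.of Λ U) C n),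
      ∃ y' : Abelian.Ext (ModuleCat.of Λ U) C n,
        (Abelian.Ext.mk₀ (ModuleCat.ofHom (f ^ m))).comp y' (zero_add n) = y := by
    intro m
    induction m with
    | zero => exact fun y => ⟨y, y.mk₀_id_comp⟩
    | succ m ih =>
      intro y
      obtain ⟨y₁, rfl⟩ := step y
      obtain ⟨y₂, rfl⟩ := ih y₁
      refine ⟨y₂, ?_⟩
      rw [pow_succ, Module.End.mul_eq_comp, ModuleCat.ofHom_comp, ← Abelian.Ext.mk₀_comp_mk₀,
        Abelian.Ext.comp_assoc_of_second_deg_zero]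
  obtain ⟨y, hy⟩ := steps k ((Abelian.Ext.mk₀ (ModuleCat.ofHom p)).comp x (zero_add n))
  have h1 : ModuleCat.ofHom i ≫ ModuleCat.ofHom p = 𝟙 (ModuleCat.of Λ U₀) := by
    rw [← ModuleCat.ofHom_comp, hpi]; rfl
  have h2 : ModuleCat.ofHom i ≫ ModuleCat.ofHom (f ^ k) = 0 := by
    rw [← ModuleCat.ofHom_comp, hk]; rfl
  rw [← x.mk₀_id_comp, ← h1, ← Abelian.Ext.mk₀_comp_mk₀,
    Abelian.Ext.comp_assoc_of_second_deg_zero, ← hy, ← Abelian.Ext.comp_assoc_of_second_deg_zero,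
    Abelian.Ext.mk₀_comp_mk₀, h2, Abelian.Ext.mk₀_zero, Abelian.Ext.zero_comp]

end ProjectiveDimension

section Add

variable {Λ : Type u} [Ring Λ]

/-- The predicate `InAdd` with an arbitrary finite index type. -/
lemma inAdd_of_finite {N X : ModuleCat.{u} Λ} (ι : Type*) [Finite ι] (i : X →ₗ[Λ] (ι → N))
    (p : (ι → N) →ₗ[Λ] X) (h : p ∘ₗ i = LinearMap.id) : InAdd Λ N X := by
  obtain ⟨k, ⟨e⟩⟩ := Finite.exists_equiv_fin ι
  let E := LinearEquiv.funCongrLeft Λ N e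
  refine ⟨k, E.symm.toLinearMap ∘ₗ i, p ∘ₗ E.toLinearMap, ?_⟩
  refine LinearMap.ext fun x => ?_
  change p (E (E.symm (i x))) = x
  rw [E.apply_symm_apply]
  exact LinearMap.congr_fun h x

lemma inAdd_of_retract {N X Y : ModuleCat.{u} Λ} (h : InAdd Λ N Y) (i : X →ₗ[Λ] Y)
    (p : Y →ₗ[Λ] X) (hpi : p ∘ₗ i = LinearMap.id) : InAdd Λ N X := by
  obtain ⟨k, j, q, hqj⟩ := h
  refine ⟨k, j ∘ₗ i, p ∘ₗ q, ?_⟩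
  rw [LinearMap.comp_assoc, ← LinearMap.comp_assoc i, hqj, LinearMap.id_comp, hpi]

lemma inAdd_self (N : ModuleCat.{u} Λ) : InAdd Λ N N :=
  inAdd_of_finite Unit (LinearEquiv.funUnique Unit Λ N).symm.toLinearMap
    (LinearEquiv.funUnique Unit Λ N).toLinearMap (by ext; simp)

lemma inAdd_pi {N : ModuleCat.{u} Λ} {κ : Type} [Finite κ] {X : κ → ModuleCat.{u} Λ}
    (h : ∀ a, InAdd Λ N (X a)) : InAdd Λ N (ModuleCat.of Λ (∀ a, X a)) := by
  choose k i p hip using h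
  refine inAdd_of_finite (Σ a, Fin (k a))
    (LinearMap.pi fun s => LinearMap.proj s.2 ∘ₗ i s.1 ∘ₗ LinearMap.proj s.1)
    (LinearMap.pi fun a => p a ∘ₗ LinearMap.pi fun b => LinearMap.proj (⟨a, b⟩ : Σ a, Fin (k a))) ?_
  refine LinearMap.ext fun x => funext fun a => ?_
  exact LinearMap.congr_fun (hip a) (x a)

lemma inAdd_trans {M N X : ModuleCat.{u} Λ} (hM : InAdd Λ N M) (hX : InAdd Λ M X) :
    InAdd Λ N X := by
  obtain ⟨k, i, p, hpi⟩ := hX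
  exact inAdd_of_retract (inAdd_pi (X := fun _ : Fin k => M) fun _ => hM) i p hpi

lemma inAdd_prod {N X Y : ModuleCat.{u} Λ} (hX : InAdd Λ N X) (hY : InAdd Λ N Y) :
    InAdd Λ N (ModuleCat.of Λ (X × Y)) := by
  obtain ⟨k, i, p, hpi⟩ := hX
  obtain ⟨l, j, q, hqj⟩ := hY
  refine inAdd_of_finite (Fin k ⊕ Fin l)
    ((LinearEquiv.sumArrowLequivProdArrow (Fin k) (Fin l) Λ N).symm.toLinearMap ∘ₗ i.prodMap j)
    (p.prodMap q ∘ₗ (LinearEquiv.sumArrowLequivProdArrow (Fin k) (Fin l) Λ N).toLinearMap) ?_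
  refine LinearMap.ext fun x => ?_
  simpa using Prod.ext (LinearMap.congr_fun hpi x.1) (LinearMap.congr_fun hqj x.2)

lemma inAdd_left {N N' X : ModuleCat.{u} Λ} (h : InAdd Λ N X) :
    InAdd Λ (ModuleCat.of Λ (N × N')) X :=
  inAdd_trans (inAdd_of_retract (inAdd_self _) (LinearMap.inl Λ N N') (LinearMap.fst Λ N N')
    (by ext; simp)) h

lemma inAdd_right {N N' X : ModuleCat.{u} Λ} (h : InAdd Λ N' X) :
    InAdd Λ (ModuleCat.of Λ (N × N')) X :=
  inAdd_trans (inAdd_of_retract (inAdd_self _) (LinearMap.inr Λ N N') (LinearMap.snd Λ N N')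
    (by ext; simp)) h

lemma inAdd_of_projective (P : ModuleCat.{u} Λ) [Module.Finite Λ P] [Module.Projective Λ P] :
    InAdd Λ (ModuleCat.of Λ Λ) P := by
  obtain ⟨n, g, hg⟩ := Module.Finite.exists_fin' Λ P
  obtain ⟨l, hl⟩ := Module.projective_lifting_property g LinearMap.id hg
  exact ⟨n, l, g, hl⟩

lemma StabIso.inAdd {N X Y : ModuleCat.{u} Λ} (h : StabIso Λ X Y) (hX : InAdd Λ N X)
    (hN : InAdd Λ N (ModuleCat.of Λ Λ)) : InAdd Λ N Y := by
  obtain ⟨P, Q, ⟨_, _⟩, ⟨_, _⟩, ⟨e⟩⟩ := h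
  have h1 := inAdd_prod hX (inAdd_trans hN (inAdd_of_projective P))
  refine inAdd_of_retract h1 (e.symm.toLinearMap ∘ₗ LinearMap.inl Λ Y Q)
    (LinearMap.fst Λ Y Q ∘ₗ e.toLinearMap) ?_
  ext; simp

lemma finite_of_inAdd {N X : ModuleCat.{u} Λ} [Module.Finite Λ N] (h : InAdd Λ N X) :
    Module.Finite Λ X := by
  obtain ⟨k, i, p, hpi⟩ := h
  exact Module.Finite.of_surjective p fun x => ⟨i x, LinearMap.congr_fun hpi x⟩

end Add

section KrullSchmidt

variable {Λ : Type u} [Ring Λ]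

/-- The direct sum of `a i` copies of `N i` over all `i`. -/
abbrev Dir {t : ℕ} (N : Fin t → ModuleCat.{u} Λ) (a : Fin t → ℕ) : ModuleCat.{u} Λ :=
  ModuleCat.of Λ (∀ i, Fin (a i) → N i)

/-- Splitting a dependent function into products. -/
def piProdEquiv {ι : Type*} (M M' : ι → Type*) [∀ i, AddCommGroup (M i)] [∀ i, Module Λ (M i)]
    [∀ i, AddCommGroup (M' i)] [∀ i, Module Λ (M' i)] :
    (∀ i, M i × M' i) ≃ₗ[Λ] (∀ i, M i) × (∀ i, M' i) where
  toFun f := (fun i => (f i).1, fun i => (f i).2)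
  invFun g i := (g.1 i, g.2 i)
  map_add' _ _ := rfl
  map_smul' _ _ := rfl
  left_inv _ := rfl
  right_inv _ := rfl

/-- `Dir` is additive in the multiplicities. -/
def dirAddEquiv {t : ℕ} (N : Fin t → ModuleCat.{u} Λ) (a b : Fin t → ℕ) :
    Dir N (a + b) ≃ₗ[Λ] (Dir N a × Dir N b) :=
  LinearEquiv.piCongrRight (fun i =>
    LinearEquiv.funCongrLeft Λ (N i) (finSumFinEquiv (m := a i) (n := b i)) ≪≫ₗ
      LinearEquiv.sumArrowLequivProdArrow (Fin (a i)) (Fin (b i)) Λ (N i)) ≪≫ₗ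
    piProdEquiv (fun i => Fin (a i) → N i) (fun i => Fin (b i) → N i)

/-- `Dir` of a unit vector. -/
lemma dir_single {t : ℕ} (N : Fin t → ModuleCat.{u} Λ) (i : Fin t) :
    Nonempty (Dir N (Pi.single i 1) ≃ₗ[Λ] N i) := by
  let f : Dir N (Pi.single i 1) →ₗ[Λ] N i :=
    LinearMap.proj (⟨0, by simp⟩ : Fin ((Pi.single i 1 : Fin t → ℕ) i)) ∘ₗ LinearMap.proj i
  refine ⟨LinearEquiv.ofBijective f ⟨?_, ?_⟩⟩
  · intro x y hxy
    funext j b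
    by_cases hj : j = i
    · subst hj
      have hb : b = ⟨0, by simp⟩ := by
        have := b.2
        simp only [Pi.single_eq_same] at this
        exact Fin.ext (by simpa using this)
      rw [hb]
      exact hxy
    · exact absurd b.2 (by simp [Pi.single_eq_of_ne hj])
  · intro y
    refine ⟨fun j _ => if h : j = i then h ▸ y else 0, ?_⟩
    change (if h : i = i then h ▸ y else 0) = y
    simp

lemma exists_dir_of_pi {t l : ℕ} (N : Fin t → ModuleCat.{u} Λ) (E : Fin l → ModuleCat.{u} Λ)
    (h : ∀ j, ∃ i, Nonempty (E j ≃ₗ[Λ] N i)) :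
    ∃ a, Nonempty ((∀ j, E j) ≃ₗ[Λ] Dir N a) := by
  induction l with
  | zero =>
    refine ⟨0, ⟨?_⟩⟩
    have : Subsingleton (Dir N 0) := ⟨fun x y => funext fun i => funext fun b => b.elim0⟩
    exact LinearEquiv.ofSubsingleton _ _
  | succ l ih =>
    obtain ⟨a, ⟨e⟩⟩ := ih (fun j => E j.succ) (fun j => h j.succ)
    obtain ⟨i, ⟨e₀⟩⟩ := h 0
    obtain ⟨e₁⟩ := dir_single N i
    exact ⟨Pi.single i 1 + a, ⟨(Fin.consLinearEquiv Λ fun j => E j).symm ≪≫ₗ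
      (e₀ ≪≫ₗ e₁.symm).prodCongr e ≪≫ₗ (dirAddEquiv N _ a).symm⟩⟩

lemma inAdd_dir {t : ℕ} (N : Fin t → ModuleCat.{u} Λ) (a : Fin t → ℕ) :
    InAdd Λ (ModuleCat.of Λ (∀ i, N i)) (Dir N a) := by
  classical
  refine inAdd_pi (X := fun i => ModuleCat.of Λ (Fin (a i) → N i)) fun i =>
    inAdd_pi (X := fun _ : Fin (a i) => N i) fun _ => ?_
  exact inAdd_of_retract (inAdd_self _) (LinearMap.single Λ (fun i => N i) i) (LinearMap.proj i)
    (by ext; simp)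

/-- A module with local endomorphism ring which is a retract of a finite direct sum of modules
with local endomorphism rings is isomorphic to one of them. -/
lemma exists_equiv_of_local_retract {ι : Type*} [Finite ι] (N : ι → ModuleCat.{u} Λ)
    (hN : ∀ i, IsLocalRing (Module.End Λ (N i))) (X : ModuleCat.{u} Λ)
    (hX : IsLocalRing (Module.End Λ X)) (i : X →ₗ[Λ] (∀ a, N a)) (p : (∀ a, N a) →ₗ[Λ] X)
    (hpi : p ∘ₗ i = LinearMap.id) : ∃ a, Nonempty (X ≃ₗ[Λ] N a) := by
  classical
  have := Fintype.ofFinite ι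
  let u : ι → Module.End Λ X := fun a =>
    (p ∘ₗ LinearMap.single Λ (fun a => N a) a) ∘ₗ (LinearMap.proj a ∘ₗ i)
  have hsum : IsUnit (∑ a, u a) := by
    have : ∑ a, u a = 1 := by
      refine LinearMap.ext fun x => ?_
      rw [LinearMap.sum_apply]
      change ∑ a, p (Pi.single a (i x a)) = x
      rw [← map_sum, Finset.univ_sum_single]
      exact LinearMap.congr_fun hpi x
    rw [this]
    exact isUnit_one
  obtain ⟨a, -, ha⟩ := IsLocalRing.exists_of_isUnit_sum hsum
  refine ⟨a, ?_⟩
  let j : X →ₗ[Λ] N a := LinearMap.proj a ∘ₗ i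
  let q₀ : N a →ₗ[Λ] X := p ∘ₗ LinearMap.single Λ (fun a => N a) a
  obtain ⟨v, hv⟩ := ha
  let q : N a →ₗ[Λ] X := (↑v⁻¹ : Module.End Λ X) ∘ₗ q₀
  have hqj : q ∘ₗ j = LinearMap.id := by
    have : (↑v⁻¹ : Module.End Λ X) * u a = 1 := by rw [← hv, Units.inv_mul]
    exact this
  have hqj' : ∀ x, q (j x) = x := fun x => LinearMap.congr_fun hqj x
  have hidem : (j ∘ₗ q : Module.End Λ (N a)) * (j ∘ₗ q) = j ∘ₗ q := by
    refine LinearMap.ext fun x => ?_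
    change j (q (j (q x))) = j (q x)
    rw [hqj']
  have hne : (j ∘ₗ q : Module.End Λ (N a)) ≠ 0 := by
    intro h0
    obtain ⟨x, hx⟩ := exists_ne (1 : Module.End Λ X)
    apply hx
    have hz : ∀ y : X, y = 0 := fun y => by
      have := congrArg q (LinearMap.congr_fun h0 (j y))
      change q (j (q (j y))) = q 0 at this
      rwa [hqj', hqj', map_zero] at this
    exact LinearMap.ext fun y => (hz _).trans (hz _).symm
  have hone : j ∘ₗ q = LinearMap.id := by
    rcases (hN a).isUnit_or_isUnit_of_add_one
      (add_sub_cancel (j ∘ₗ q : Module.End Λ (N a)) 1) with h | h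
    · exact h.mul_left_cancel (hidem.trans (mul_one _).symm)
    · exfalso
      apply hne
      have : (1 - (j ∘ₗ q : Module.End Λ (N a))) * (j ∘ₗ q) = 0 := by
        rw [sub_mul, one_mul, hidem, sub_self]
      exact h.mul_left_cancel (this.trans (mul_zero _).symm)
  exact ⟨LinearEquiv.ofLinearMap j q hone hqj⟩

variable [IsArtinianRing Λ]

/-- Fitting's lemma: a finitely generated module over an Artinian ring is a finite direct sum of
modules with local endomorphism rings. -/
lemma exists_local_decomposition (M : ModuleCat.{u} Λ) [Module.Finite Λ M] :
    ∃ (t : ℕ) (N : Fin t → ModuleCat.{u} Λ),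
      (∀ i, IsLocalRing (Module.End Λ (N i))) ∧ Nonempty (M ≃ₗ[Λ] (∀ i, N i)) := by
  induction hn : Module.length Λ M using WellFoundedLT.induction generalizing M with
  | ind n ih =>
  subst hn
  rcases subsingleton_or_nontrivial M with hM | hM
  · exact ⟨0, fun i => i.elim0, fun i => i.elim0, ⟨LinearEquiv.ofSubsingleton _ _⟩⟩
  by_cases hloc : IsLocalRing (Module.End Λ M)
  · exact ⟨1, fun _ => M, fun _ => hloc, ⟨(LinearEquiv.funUnique (Fin 1) Λ M).symm⟩⟩
  obtain ⟨f, hf, hf'⟩ : ∃ f : Module.End Λ M, ¬ IsUnit f ∧ ¬ IsUnit (1 - f) := by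
    by_contra! hcon
    exact hloc (IsLocalRing.of_isUnit_or_isUnit_one_sub_self fun f => by
      by_cases h : IsUnit f
      · exact .inl h
      · exact .inr (hcon f h))
  obtain ⟨k, hk⟩ := Filter.eventually_atTop.1 (LinearMap.eventually_isCompl_ker_pow_range_pow f)
  have hc := hk (k + 1) (by omega)
  have h1 : LinearMap.ker (f ^ (k + 1)) ≠ ⊤ := by
    intro h
    have : f ^ (k + 1) = 0 := LinearMap.ker_eq_top.1 h
    exact hf' (IsNilpotent.isUnit_one_sub ⟨k + 1, this⟩)
  have h2 : LinearMap.range (f ^ (k + 1)) ≠ ⊤ := by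
    intro h
    have hb : LinearMap.ker (f ^ (k + 1)) = ⊥ := by
      have := hc.inf_eq_bot
      rwa [h, inf_top_eq] at this
    have hu : IsUnit (f ^ (k + 1)) :=
      (Module.End.isUnit_iff _).2 ⟨LinearMap.ker_eq_bot.1 hb, LinearMap.range_eq_top.1 h⟩
    exact hf ((isUnit_pow_iff (by omega)).1 hu)
  obtain ⟨t, N, hN, ⟨e⟩⟩ := ih _ (Submodule.length_lt h1)
    (ModuleCat.of Λ (LinearMap.ker (f ^ (k + 1)))) rfl
  obtain ⟨t', N', hN', ⟨e'⟩⟩ := ih _ (Submodule.length_lt h2)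
    (ModuleCat.of Λ (LinearMap.range (f ^ (k + 1)))) rfl
  let W : Fin t ⊕ Fin t' → ModuleCat.{u} Λ := Sum.elim N N'
  let E := (Submodule.prodEquivOfIsCompl _ _ hc).symm ≪≫ₗ e.prodCongr e' ≪≫ₗ
    (LinearEquiv.sumPiEquivProdPi Λ (Fin t) (Fin t') (fun s => (W s : Type u))).symm ≪≫ₗ
    (LinearEquiv.piCongrLeft' Λ (fun s => (W s : Type u)) finSumFinEquiv)
  refine ⟨t + t', fun i => W (finSumFinEquiv.symm i), fun i => ?_, ⟨E⟩⟩
  have hW : ∀ s, IsLocalRing (Module.End Λ (W s)) := by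
    rintro (j | j)
    · exact hN j
    · exact hN' j
  exact hW _

/-- All objects of `add M` are direct sums of copies of finitely many modules. -/
lemma exists_dir_decomposition (M : ModuleCat.{u} Λ) [Module.Finite Λ M] :
    ∃ (t : ℕ) (N : Fin t → ModuleCat.{u} Λ), (∀ i, Module.Finite Λ (N i)) ∧
      ∀ X, InAdd Λ M X → ∃ a, Nonempty (X ≃ₗ[Λ] Dir N a) := by
  obtain ⟨t, N, hN, ⟨e⟩⟩ := exists_local_decomposition M
  refine ⟨t, N, fun i => Module.Finite.of_surjective
      (LinearMap.proj (R := Λ) (φ := fun i => N i) i ∘ₗ e.toLinearMap)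
    ((LinearMap.proj_surjective (R := Λ) (φ := fun i => N i) i).comp e.surjective), fun X hX => ?_⟩
  have := finite_of_inAdd hX
  obtain ⟨l, E, hE, ⟨eX⟩⟩ := exists_local_decomposition X
  obtain ⟨k, i, p, hpi⟩ := hX
  have key : ∀ j, ∃ a, Nonempty (E j ≃ₗ[Λ] N a) := by
    intro j
    classical
    let F : (Fin k → M) ≃ₗ[Λ] (∀ s : (Σ _ : Fin k, Fin t), N s.2) :=
      LinearEquiv.piCongrRight (fun _ : Fin k => e) ≪≫ₗ
        (LinearEquiv.piCurry Λ (fun (_ : Fin k) (b : Fin t) => (N b : Type u))).symm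
    obtain ⟨s, hs⟩ := exists_equiv_of_local_retract (fun s : (Σ _ : Fin k, Fin t) => N s.2)
      (fun s => hN s.2) (E j) (hE j)
      (F.toLinearMap ∘ₗ i ∘ₗ eX.symm.toLinearMap ∘ₗ LinearMap.single Λ (fun j => E j) j)
      (LinearMap.proj j ∘ₗ eX.toLinearMap ∘ₗ p ∘ₗ F.symm.toLinearMap) (by
        refine LinearMap.ext fun x => ?_
        have h1 : ∀ y, p (i y) = y := fun y => LinearMap.congr_fun hpi y
        simp [h1])
    exact ⟨s.2, hs⟩
  obtain ⟨a, ⟨e'⟩⟩ := exists_dir_of_pi N E key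
  exact ⟨a, ⟨eX ≪≫ₗ e'⟩⟩

end KrullSchmidt

section Syzygies

variable {Λ : Type u} [Ring Λ]

open Classical in
/-- A (not necessarily minimal) first syzygy of a finitely generated module. -/
noncomputable def syz (M : ModuleCat.{u} Λ) : ModuleCat.{u} Λ :=
  if h : Module.Finite Λ M then
    ModuleCat.of Λ (LinearMap.ker (@Module.Finite.exists_fin' Λ M _ _ _ h).choose_spec.choose)
  else M

/-- Iterated (not necessarily minimal) syzygies. -/
noncomputable def nsyz : ℕ → ModuleCat.{u} Λ → ModuleCat.{u} Λ
  | 0, M => M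
  | n + 1, M => syz (nsyz n M)

/-- If `X ∈ add N`, then the `n`-th syzygies of `X` lie in `add (addSyz n N)`. -/
noncomputable def addSyz : ℕ → ModuleCat.{u} Λ → ModuleCat.{u} Λ
  | 0, N => N
  | n + 1, N => ModuleCat.of Λ (syz (addSyz n N) × Λ)

lemma exists_ses_syz (M : ModuleCat.{u} Λ) [h : Module.Finite Λ M] :
    ∃ n : ℕ, SES Λ (syz M) (Fin n → Λ) M := by
  rw [syz, dif_pos h]
  exact ⟨_, SES.of_ker _ (@Module.Finite.exists_fin' Λ M _ _ _ h).choose_spec.choose_spec⟩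

lemma SES.finite_left [IsNoetherianRing Λ] {X Y Z : Type u} [AddCommGroup X] [Module Λ X]
    [AddCommGroup Y] [Module Λ Y] [AddCommGroup Z] [Module Λ Z] [Module.Finite Λ Y]
    (h : SES Λ X Y Z) : Module.Finite Λ X := by
  obtain ⟨f, _, hf, -, -⟩ := h
  exact Module.Finite.of_injective f hf

lemma SES.finite_right {X Y Z : Type u} [AddCommGroup X] [Module Λ X]
    [AddCommGroup Y] [Module Λ Y] [AddCommGroup Z] [Module Λ Z] [Module.Finite Λ Y]
    (h : SES Λ X Y Z) : Module.Finite Λ Z := by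
  obtain ⟨_, g, -, -, hg⟩ := h
  exact Module.Finite.of_surjective g hg

lemma SES.pi {X Y Z : Type u} [AddCommGroup X] [Module Λ X]
    [AddCommGroup Y] [Module Λ Y] [AddCommGroup Z] [Module Λ Z] (h : SES Λ X Y Z) (k : ℕ) :
    SES Λ (Fin k → X) (Fin k → Y) (Fin k → Z) := by
  obtain ⟨f, g, hf, hfg, hg⟩ := h
  refine ⟨f.compLeft (Fin k), g.compLeft (Fin k), hf.comp_left, fun y => ⟨fun hy => ?_, ?_⟩,
    hg.comp_left⟩
  · choose x hx using fun a => (hfg (y a)).1 (congrFun hy a)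
    exact ⟨x, funext hx⟩
  · rintro ⟨x, rfl⟩
    exact funext fun a => hfg.apply_apply_eq_zero (x a)

lemma SES.stabIso_syz {K P : Type u} [AddCommGroup K] [Module Λ K] [AddCommGroup P] [Module Λ P]
    [Module.Finite Λ P] [Module.Projective Λ P] {X Y : ModuleCat.{u} Λ} [Module.Finite Λ Y]
    (h : SES Λ K P X) (hXY : StabIso Λ X Y) : StabIso Λ K (syz Y) := by
  obtain ⟨n, hn⟩ := exists_ses_syz Y
  exact hXY.syzygy h hn

lemma StabIso.syz {X Y : ModuleCat.{u} Λ} [Module.Finite Λ X] [Module.Finite Λ Y]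
    (h : StabIso Λ X Y) : StabIso Λ (syz X) (syz Y) := by
  obtain ⟨n, hn⟩ := exists_ses_syz X
  exact hn.stabIso_syz h

lemma stabIso_syz_prod (X Y : ModuleCat.{u} Λ) [Module.Finite Λ X] [Module.Finite Λ Y] :
    StabIso Λ (syz X × syz Y) (syz (ModuleCat.of Λ (X × Y))) := by
  obtain ⟨n, hn⟩ := exists_ses_syz X
  obtain ⟨m, hm⟩ := exists_ses_syz Y
  exact (hn.prod hm).stabIso_syz (X := ModuleCat.of Λ (X × Y)) .refl

variable [IsNoetherianRing Λ]

instance finite_syz (M : ModuleCat.{u} Λ) [Module.Finite Λ M] : Module.Finite Λ (syz M) := by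
  obtain ⟨n, h⟩ := exists_ses_syz M
  exact h.finite_left

instance finite_nsyz (n : ℕ) (M : ModuleCat.{u} Λ) [Module.Finite Λ M] :
    Module.Finite Λ (nsyz n M) := by
  induction n with
  | zero => assumption
  | succ n ih => exact finite_syz _

instance finite_addSyz (n : ℕ) (M : ModuleCat.{u} Λ) [Module.Finite Λ M] :
    Module.Finite Λ (addSyz n M) := by
  induction n with
  | zero => assumption
  | succ n ih => exact inferInstanceAs (Module.Finite Λ (syz (addSyz n M) × Λ))

lemma StabIso.nsyz {X Y : ModuleCat.{u} Λ} [Module.Finite Λ X] [Module.Finite Λ Y]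
    (h : StabIso Λ X Y) (n : ℕ) : StabIso Λ (nsyz n X) (nsyz n Y) := by
  induction n with
  | zero => exact h
  | succ n ih => exact ih.syz

lemma stabIso_nsyz_prod (X Y : ModuleCat.{u} Λ) [Module.Finite Λ X] [Module.Finite Λ Y] (n : ℕ) :
    StabIso Λ (nsyz n X × nsyz n Y) (nsyz n (ModuleCat.of Λ (X × Y))) := by
  induction n with
  | zero => exact .refl
  | succ n ih =>
    exact (stabIso_syz_prod _ _).trans
      (StabIso.syz (X := ModuleCat.of Λ (nsyz n X × nsyz n Y)) ih)

lemma pdLE_nsyz_iff (n : ℕ) {k : ℕ} {X : ModuleCat.{u} Λ} [Module.Finite Λ X] :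
    PdLE Λ (nsyz n X) k ↔ PdLE Λ X (k + n) := by
  induction n generalizing k with
  | zero => rfl
  | succ n ih =>
    obtain ⟨m, hm⟩ := exists_ses_syz (nsyz n X)
    rw [show k + (n + 1) = k + 1 + n by omega, ← ih]
    exact hm.pdLE_succ_iff.symm

lemma inAdd_syz {N X : ModuleCat.{u} Λ} [Module.Finite Λ N] (h : InAdd Λ N X) :
    InAdd Λ (ModuleCat.of Λ (syz N × Λ)) (syz X) := by
  have := finite_of_inAdd h
  obtain ⟨k, i, p, hpi⟩ := h
  obtain ⟨n, hn⟩ := exists_ses_syz N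
  have hp : Function.Surjective p := fun x => ⟨i x, LinearMap.congr_fun hpi x⟩
  let e := ((LinearMap.exact_subtype_ker_map p).splitSurjectiveEquiv Subtype.val_injective
    ⟨i, hpi⟩).1
  have h1 := (hn.pi k).stabIso_syz (X := ModuleCat.of Λ (Fin k → N))
    (Y := ModuleCat.of Λ (LinearMap.ker p × X)) (.of_equiv e)
  have h2 := h1.trans (stabIso_syz_prod (ModuleCat.of Λ (LinearMap.ker p)) X).symm
  have h3 : InAdd Λ (ModuleCat.of Λ (syz N × Λ))
      (ModuleCat.of Λ (syz (ModuleCat.of Λ (LinearMap.ker p)) × syz X)) :=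
    StabIso.inAdd (X := ModuleCat.of Λ (Fin k → syz N)) h2
      (inAdd_pi fun _ => inAdd_left (N' := ModuleCat.of Λ Λ) (inAdd_self _))
        (inAdd_right (N := syz N) (inAdd_self (ModuleCat.of Λ Λ)))
  exact inAdd_of_retract h3 (LinearMap.inr Λ _ _) (LinearMap.snd Λ _ _) (by ext; simp)

lemma inAdd_nsyz {N X : ModuleCat.{u} Λ} [Module.Finite Λ N] (h : InAdd Λ N X) (n : ℕ) :
    InAdd Λ (addSyz n N) (nsyz n X) := by
  induction n with
  | zero => exact h
  | succ n ih => exact inAdd_syz ih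

/-- Passing to `n`-th syzygies in a short exact sequence, without modifying the left term. -/
lemma SES.nsyz {X Y Z : ModuleCat.{u} Λ} [Module.Finite Λ X] [Module.Finite Λ Y]
    (h : SES Λ X Y Z) (n : ℕ) : ∃ Y' Z' : ModuleCat.{u} Λ, Module.Finite Λ Y' ∧
      SES Λ (nsyz n X) Y' Z' ∧ StabIso Λ Y' (ArtinAlgebra.nsyz n Y) ∧
      StabIso Λ Z' (ArtinAlgebra.nsyz n Z) := by
  have := h.finite_right
  induction n with
  | zero => exact ⟨Y, Z, ‹_›, h, .refl, .refl⟩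
  | succ n ih =>
    obtain ⟨Y', Z', _, h', hY, hZ⟩ := ih
    have := h'.finite_right
    obtain ⟨k, hk⟩ := exists_ses_syz (ArtinAlgebra.nsyz n X)
    obtain ⟨l, hl⟩ := exists_ses_syz Z'
    obtain ⟨L, hL, hL'⟩ := h'.horseshoe hk hl
    exact ⟨L, syz Z', hL'.finite_left, hL, hL'.stabIso_syz hY, hZ.syz⟩

lemma SES.stabIso_nsyz {X Y Z : ModuleCat.{u} Λ} [Module.Finite Λ X] [Module.Finite Λ Y]
    (h : SES Λ X Y Z) {r : ℕ} (hZ : PdLE Λ Z r) :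
    StabIso Λ (ArtinAlgebra.nsyz r X) (ArtinAlgebra.nsyz r Y) := by
  have := h.finite_right
  obtain ⟨Y', Z', _, h', hY', hZ'⟩ := h.nsyz r
  have := h'.finite_right
  have : Module.Projective Λ Z' :=
    pdLE_zero_iff.1 (hZ'.symm.pdLE ((pdLE_nsyz_iff r).2 (by rwa [zero_add])))
  obtain ⟨e⟩ := h'.equiv_prod
  exact StabIso.prod_projective.symm.trans ((StabIso.of_equiv e.symm).trans hY')

end Syzygies

section IgusaTodorov

variable {Λ : Type u} [Ring Λ]

/-- The subgroup of the split Grothendieck group of `add (⨁ N i)` of differences which vanish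
stably after taking `n`-th syzygies. -/
def stableKer [IsNoetherianRing Λ] {t : ℕ} (N : Fin t → ModuleCat.{u} Λ)
    [∀ i, Module.Finite Λ (N i)] (n : ℕ) : AddSubgroup (Fin t → ℤ) where
  carrier := {v | ∃ a b : Fin t → ℕ, (v = fun i => (a i : ℤ) - b i) ∧
    StabIso Λ (nsyz n (Dir N a)) (nsyz n (Dir N b))}
  zero_mem' := ⟨0, 0, by ext; simp, .refl⟩
  add_mem' := by
    rintro _ _ ⟨a, b, rfl, h⟩ ⟨a', b', rfl, h'⟩
    refine ⟨a + a', b + b', by ext; simp; ring, ?_⟩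
    have key : ∀ c c' : Fin t → ℕ, StabIso Λ (nsyz n (Dir N (c + c')))
        (nsyz n (Dir N c) × nsyz n (Dir N c')) := fun c c' =>
      (StabIso.nsyz (Y := ModuleCat.of Λ (Dir N c × Dir N c'))
        (.of_equiv (dirAddEquiv N c c')) n).trans (stabIso_nsyz_prod _ _ n).symm
    exact (key a a').trans ((h.prod h').trans (key b b').symm)
  neg_mem' := by
    rintro _ ⟨a, b, rfl, h⟩
    exact ⟨b, a, by ext; simp, h.symm⟩

lemma exists_stable_bound [IsNoetherianRing Λ] {t : ℕ} (N : Fin t → ModuleCat.{u} Λ)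
    [∀ i, Module.Finite Λ (N i)] :
    ∃ n : ℕ, ∀ (r : ℕ) (a b : Fin t → ℕ), StabIso Λ (nsyz r (Dir N a)) (nsyz r (Dir N b)) →
      ∃ c, StabIso Λ (nsyz n (Dir N (a + c))) (nsyz n (Dir N (b + c))) := by
  have hmono : Monotone fun n => AddSubgroup.toIntSubmodule (stableKer N n) := by
    refine monotone_nat_of_le_succ fun n => ?_
    rintro _ ⟨a, b, rfl, h⟩
    exact ⟨a, b, rfl, h.syz⟩
  obtain ⟨n, hn⟩ := monotone_stabilizes_iff_noetherian.2 inferInstance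
    (⟨_, hmono⟩ : ℕ →o Submodule ℤ (Fin t → ℤ))
  refine ⟨n, fun r a b h => ?_⟩
  have h1 : (fun i => (a i : ℤ) - b i) ∈ AddSubgroup.toIntSubmodule (stableKer N r) :=
    ⟨a, b, rfl, h⟩
  have h2 := hmono (le_max_left r n) h1
  have h3 : (fun i => (a i : ℤ) - b i) ∈ AddSubgroup.toIntSubmodule (stableKer N n) := by
    have := hn (max r n) (le_max_right r n)
    change AddSubgroup.toIntSubmodule (stableKer N n) = _ at this
    rw [this]
    exact h2
  obtain ⟨a', b', hab, h'⟩ := h3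
  refine ⟨b', ?_⟩
  have hab' : a + b' = a' + b := by
    funext i
    have := congrFun hab i
    simp only [Pi.add_apply] at this ⊢
    omega
  rw [hab', add_comm b b']
  have key : ∀ c : Fin t → ℕ, StabIso Λ (nsyz n (Dir N (c + b)))
      (nsyz n (Dir N c) × nsyz n (Dir N b)) := fun c =>
    (StabIso.nsyz (Y := ModuleCat.of Λ (Dir N c × Dir N b))
      (.of_equiv (dirAddEquiv N c b)) n).trans (stabIso_nsyz_prod _ _ n).symm
  exact (key a').trans ((h'.prod .refl).trans (key b').symm)

variable [IsArtinianRing Λ]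

/-- If `0 → U → U × P → W → 0` is exact with `P` projective and `W` of finite projective
dimension, then `U` has a summand of finite projective dimension which controls the projective
dimension of `W`. -/
lemma SES.exists_retract {U P W : ModuleCat.{u} Λ} [Module.Finite Λ U] [Module.Projective Λ P]
    (h : SES Λ U (U × P) W) {r : ℕ} (hW : PdLE Λ W r) :
    ∃ (U₀ : ModuleCat.{u} Λ) (i : U₀ →ₗ[Λ] U) (p : U →ₗ[Λ] U₀), p ∘ₗ i = LinearMap.id ∧
      PdLE Λ U₀ r ∧ ∀ d, PdLE Λ U₀ d → PdLE Λ W (d + 1) := by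
  obtain ⟨h, g, hh, hhg, hg⟩ := h
  let f : Module.End Λ U := LinearMap.fst Λ U P ∘ₗ h
  obtain ⟨k, hk⟩ := Filter.eventually_atTop.1 (LinearMap.eventually_isCompl_ker_pow_range_pow f)
  have hc := hk (k + 1) (by omega)
  let V := LinearMap.ker (f ^ (k + 1))
  have hfV : ∀ u, f u ∈ V ↔ u ∈ V := by
    intro u
    have hcomm : (f ^ (k + 1)) (f u) = f ((f ^ (k + 1)) u) := by
      rw [← Module.End.mul_apply, ← Module.End.mul_apply, ← pow_succ, pow_succ' f (k + 1)]
    rw [LinearMap.mem_ker, LinearMap.mem_ker, hcomm]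
    refine ⟨fun hu => ?_, fun hu => by rw [hu, map_zero]⟩
    refine (Submodule.disjoint_def.1 hc.disjoint) _ ?_ ⟨u, rfl⟩
    have hk' : f ^ (k + 1) * f ^ (k + 1) = f ^ k * (f * f ^ (k + 1)) := by
      rw [← mul_assoc, ← pow_succ]
    rw [LinearMap.mem_ker, ← Module.End.mul_apply, hk', Module.End.mul_apply,
      Module.End.mul_apply, hu, map_zero]
  refine ⟨ModuleCat.of Λ V, V.subtype, V.projectionOnto _ hc, V.projectionOnto_comp_subtype hc,
    PdLE.of_nilpotent (k := k + 1) h g hh hhg hg hW V.subtype (V.projectionOnto _ hc)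
      (V.projectionOnto_comp_subtype hc) (LinearMap.ext fun u => u.2), fun d hd => ?_⟩
  let h₀ : V →ₗ[Λ] V × P :=
    (LinearMap.codRestrict V (f ∘ₗ V.subtype) fun u => (hfV u).2 u.2).prod
      (LinearMap.snd Λ U P ∘ₗ h ∘ₗ V.subtype)
  let g₀ : (V × P) →ₗ[Λ] W := g ∘ₗ V.subtype.prodMap LinearMap.id
  have hses : SES Λ V (V × P) W := by
    refine ⟨h₀, g₀, fun u v huv => ?_, fun x => ⟨fun hx => ?_, ?_⟩, fun w => ?_⟩
    · refine Subtype.ext (hh (Prod.ext ?_ ?_))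
      · exact congrArg (fun z => (z.1 : U)) huv
      · exact (congrArg Prod.snd huv :)
    · obtain ⟨u, hu⟩ := (hhg _).1 hx
      have hu1 : f u = x.1 := congrArg Prod.fst hu
      refine ⟨⟨u, (hfV u).1 (hu1 ▸ x.1.2)⟩, Prod.ext (Subtype.ext hu1) ?_⟩
      exact (congrArg Prod.snd hu :)
    · rintro ⟨u, rfl⟩
      exact hhg.apply_apply_eq_zero (u : U)
    · obtain ⟨⟨u, p⟩, rfl⟩ := hg w
      obtain ⟨v, hv, -⟩ := Submodule.existsUnique_add_of_isCompl_prod hc u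
      obtain ⟨y, hy⟩ := v.2.2
      let z := h ((f ^ k) y)
      have hz : z.1 = v.2 := by
        rw [← hy, pow_succ', Module.End.mul_apply]
        rfl
      refine ⟨(v.1, p - z.2), ?_⟩
      have hsub : ((v.1 : U), p - z.2) = (u, p) - z :=
        Prod.ext (by rw [← hv, Prod.fst_sub, hz, add_sub_cancel_right]) rfl
      change g ((v.1 : U), p - z.2) = _
      rw [hsub, map_sub, hhg.apply_apply_eq_zero, sub_zero]
  exact hses.pdLE_right hd ((hd.prod (.of_projective d)).mono (by omega))

/-- **Igusa–Todorov**: the projective dimensions of cokernels of finite projective dimension of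
monomorphisms between objects of `add M` are bounded. -/
theorem exists_bound_of_ses (M : ModuleCat.{u} Λ) [Module.Finite Λ M] :
    ∃ d : ℕ, ∀ X Y Z : ModuleCat.{u} Λ, InAdd Λ M X → InAdd Λ M Y → SES Λ X Y Z →
      (∃ r, PdLE Λ Z r) → PdLE Λ Z d := by
  obtain ⟨t, N, hN, hdec⟩ := exists_dir_decomposition M
  obtain ⟨n, hn⟩ := exists_stable_bound N
  obtain ⟨t', N', hN', hdec'⟩ :=
    exists_dir_decomposition (addSyz n (ModuleCat.of Λ (∀ i, N i)))
  have hd : ∃ d, ∀ i, (∃ r, PdLE Λ (N' i) r) → PdLE Λ (N' i) d := by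
    have : ∀ i, ∃ d, (∃ r, PdLE Λ (N' i) r) → PdLE Λ (N' i) d := fun i => by
      by_cases h : ∃ r, PdLE Λ (N' i) r
      · obtain ⟨r, hr⟩ := h
        exact ⟨r, fun _ => hr⟩
      · exact ⟨0, fun h' => absurd h' h⟩
    choose d hd using this
    exact ⟨Finset.univ.sup d, fun i hi => (hd i hi).mono (Finset.le_sup (Finset.mem_univ i))⟩
  obtain ⟨d, hd⟩ := hd
  refine ⟨d + 1 + n, fun X Y Z hX hY h hZ => ?_⟩
  obtain ⟨r, hr⟩ := hZ
  obtain ⟨a, ⟨ea⟩⟩ := hdec X hX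
  obtain ⟨b, ⟨eb⟩⟩ := hdec Y hY
  have hab := h.congr ea eb (.refl Λ Z)
  have hZfin := hab.finite_right
  obtain ⟨c, hc⟩ := hn r a b (hab.stabIso_nsyz hr)
  have hac := (hab.add_left (Dir N c)).congr (dirAddEquiv N a c).symm (dirAddEquiv N b c).symm
    (.refl Λ Z)
  obtain ⟨Y', Z', _, h', hY', hZ'⟩ := hac.nsyz n
  obtain ⟨Q, P, ⟨_, _⟩, ⟨_, _⟩, ⟨e⟩⟩ := hY'.trans hc.symm
  have h'' := (h'.add_right Q).congr (.refl Λ _) e (.refl Λ _)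
  have hpd : PdLE Λ (Z' × Q) r :=
    (hZ'.symm.pdLE ((pdLE_nsyz_iff n).2 (hr.mono (by omega)))).prod (.of_projective r)
  obtain ⟨U, i, p, hpi, hU, hUd⟩ := SES.exists_retract (W := ModuleCat.of Λ (Z' × Q)) h'' hpd
  obtain ⟨m, ⟨eU⟩⟩ := hdec' U (inAdd_of_retract (inAdd_nsyz (inAdd_dir N _) n) i p hpi)
  have hUd' : PdLE Λ U d := by
    refine PdLE.of_equiv (PdLE.pi fun j => PdLE.pi fun s => hd j ⟨r, ?_⟩) eU.symm
    refine (hU.of_equiv eU).of_retract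
      (LinearMap.single Λ (fun j => Fin (m j) → N' j) j ∘ₗ LinearMap.single Λ (fun _ => N' j) s)
      (LinearMap.proj s ∘ₗ LinearMap.proj j) (by ext; simp)
  have hW := hUd d hUd'
  rw [← pdLE_nsyz_iff n]
  exact hZ'.pdLE (hW.of_retract (LinearMap.inl Λ Z' Q) (LinearMap.fst Λ Z' Q) (by ext; simp))

end IgusaTodorov

section ProjectiveCovers

variable {Λ : Type u} [Ring Λ]

lemma ses_of_isSyzygyOf {K M : ModuleCat.{u} Λ} (h : IsSyzygyOf Λ K M) :
    ∃ P : ModuleCat.{u} Λ, Module.Projective Λ P ∧ Module.Finite Λ P ∧ SES Λ K P M := by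
  obtain ⟨P, g, hP, hP', hg, -, ⟨e⟩⟩ := h
  exact ⟨P, hP, hP', (SES.of_ker g hg).congr e.symm (.refl Λ _) (.refl Λ _)⟩

variable [IsArtinianRing Λ]

/-- Finitely generated modules over an Artinian ring have projective covers. -/
lemma exists_isSyzygyOf (M : ModuleCat.{u} Λ) [Module.Finite Λ M] : ∃ K, IsSyzygyOf Λ K M := by
  have key : ∀ (P : ModuleCat.{u} Λ) (g : P →ₗ[Λ] M), Module.Projective Λ P →
      Module.Finite Λ P → Function.Surjective g → ∃ K, IsSyzygyOf Λ K M := by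
    intro P
    induction hn : Module.length Λ P using WellFoundedLT.induction generalizing P with
    | ind n ih =>
    subst hn
    intro g _ _ hg
    by_cases hs : IsSuperfluous Λ (LinearMap.ker g)
    · exact ⟨ModuleCat.of Λ (LinearMap.ker g), P, g, ‹_›, ‹_›, hg, hs, ⟨.refl Λ _⟩⟩
    · obtain ⟨L, hL, hL'⟩ : ∃ L : Submodule Λ P, L ⊔ LinearMap.ker g = ⊤ ∧ L ≠ ⊤ := by
        simpa [IsSuperfluous] using hs
      have hgL : Function.Surjective (g ∘ₗ L.subtype) := by
        intro x
        obtain ⟨y, rfl⟩ := hg x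
        obtain ⟨l, hl, z, hz, rfl⟩ := Submodule.mem_sup.1 (hL ▸ Submodule.mem_top (x := y))
        exact ⟨⟨l, hl⟩, by simp [LinearMap.mem_ker.1 hz]⟩
      obtain ⟨π, hπ⟩ := Module.projective_lifting_property _ g hgL
      let f : Module.End Λ P := L.subtype ∘ₗ π
      have hgf : ∀ (m : ℕ) (x : P), g ((f ^ m) x) = g x := by
        intro m
        induction m with
        | zero => exact fun x => rfl
        | succ m ihm =>
          intro x
          rw [pow_succ, Module.End.mul_apply, ihm]
          exact LinearMap.congr_fun hπ x
      obtain ⟨k, hk⟩ :=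
        Filter.eventually_atTop.1 (LinearMap.eventually_isCompl_ker_pow_range_pow f)
      have hc := hk (k + 1) (by omega)
      have hV : LinearMap.range (f ^ (k + 1)) ≠ ⊤ := by
        intro h
        refine hL' (top_le_iff.1 (h ▸ ?_))
        rintro _ ⟨x, rfl⟩
        rw [pow_succ', Module.End.mul_apply]
        exact (π _).2
      refine ih _ (Submodule.length_lt hV) (ModuleCat.of Λ (LinearMap.range (f ^ (k + 1)))) rfl
        (g ∘ₗ (LinearMap.range (f ^ (k + 1))).subtype)
        (Module.Projective.of_split _ _ (Submodule.projectionOnto_comp_subtype hc.symm))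
        inferInstance fun x => ?_
      obtain ⟨y, rfl⟩ := hg x
      exact ⟨⟨_, y, rfl⟩, hgf (k + 1) y⟩
  obtain ⟨n, g, hg⟩ := Module.Finite.exists_fin' Λ M
  exact key (ModuleCat.of Λ (Fin n → Λ)) g inferInstance inferInstance hg

lemma exists_isNthSyzygy (M : ModuleCat.{u} Λ) [Module.Finite Λ M] (n : ℕ) :
    ∃ K, IsNthSyzygy Λ n K M ∧ Module.Finite Λ K ∧ StabIso Λ K (nsyz n M) := by
  induction n with
  | zero => exact ⟨M, ⟨.refl Λ M⟩, ‹_›, .refl⟩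
  | succ n ih =>
    obtain ⟨K', hK', _, h⟩ := ih
    obtain ⟨K, hK⟩ := exists_isSyzygyOf K'
    obtain ⟨P, _, _, hP⟩ := ses_of_isSyzygyOf hK
    exact ⟨K, ⟨K', hK', hK⟩, hP.finite_left, hP.stabIso_syz h⟩

end ProjectiveCovers

section Subalgebras

variable {R : Type u} [CommRing R] {A : Type u} [Ring A] [Algebra R A]

/-- The `B`-module structure on `X` extends to an `A₁`-module structure on which `S` acts
trivially. -/
def HasAction (B A₁ : Subalgebra R A) (S : Set A) (X : ModuleCat.{u} B) : Prop :=
  ∃ sm : A₁ → X → X,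
    (∀ v : X, sm 1 v = v) ∧
    (∀ (a b : A₁) (v : X), sm (a * b) v = sm a (sm b v)) ∧
    (∀ (a : A₁) (v w : X), sm a (v + w) = sm a v + sm a w) ∧
    (∀ (a b : A₁) (v : X), sm (a + b) v = sm a v + sm b v) ∧
    (∀ (a : A₁) (hb : (a : A) ∈ B) (v : X), sm a v = (⟨(a : A), hb⟩ : B) • v) ∧
    ∀ y : A₁, (y : A) ∈ S → ∀ v : X, sm y v = 0

lemma hasAction_quotient {B A₁ : Subalgebra R A} {S : Set A} {E : Type u} [AddCommGroup E]
    [Module A E] (L : Submodule B E) (T : Submodule B L)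
    (hL : ∀ a ∈ A₁, ∀ v ∈ L, a • v ∈ L)
    (hT : ∀ (a : A) (ha : a ∈ A₁) (v : L), v ∈ T → (⟨a • (v : E), hL a ha v v.2⟩ : L) ∈ T)
    (hS : ∀ (a : A) (ha : a ∈ A₁), a ∈ S → ∀ v : L, (⟨a • (v : E), hL a ha v v.2⟩ : L) ∈ T) :
    HasAction B A₁ S (ModuleCat.of B (L ⧸ T)) := by
  let act : A₁ → L → L := fun a v => ⟨(a : A) • (v : E), hL a a.2 v v.2⟩
  let sm : A₁ → L ⧸ T → L ⧸ T := fun a q => T.mkQ (act a (Function.surjInv T.mkQ_surjective q))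
  have hsm : ∀ a v, sm a (T.mkQ v) = T.mkQ (act a v) := by
    intro a v
    refine (Submodule.Quotient.eq T).2 ?_
    have h1 : Function.surjInv T.mkQ_surjective (T.mkQ v) - v ∈ T :=
      (Submodule.Quotient.eq T).1 (Function.surjInv_eq T.mkQ_surjective (T.mkQ v))
    convert hT a a.2 _ h1 using 1
    exact Subtype.ext (smul_sub (a : A) _ _).symm
  refine ⟨sm, fun q => ?_, fun a b q => ?_, fun a q q' => ?_, fun a b q => ?_, fun a hb q => ?_,
    fun y hy q => ?_⟩ <;> obtain ⟨v, rfl⟩ := T.mkQ_surjective q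
  · rw [hsm]
    exact congrArg T.mkQ (Subtype.ext (one_smul A (v : E)))
  · rw [hsm b v, hsm, hsm]
    exact congrArg T.mkQ (Subtype.ext (mul_smul (a : A) (b : A) (v : E)))
  · obtain ⟨w, rfl⟩ := T.mkQ_surjective q'
    rw [← map_add, hsm, hsm, hsm, ← map_add]
    exact congrArg T.mkQ (Subtype.ext (smul_add (a : A) (v : E) (w : E)))
  · rw [hsm, hsm, hsm, ← map_add]
    exact congrArg T.mkQ (Subtype.ext (add_smul (a : A) (b : A) (v : E)))
  · rw [hsm]
    rfl
  · rw [hsm]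
    exact (Submodule.Quotient.mk_eq_zero T).2 (hS y y.2 hy v)

lemma inAdd_restrictScalars (B : Subalgebra R A) {N X : ModuleCat.{u} A} (h : InAdd A N X) :
    InAdd B (ModuleCat.of B N) (ModuleCat.of B X) := by
  obtain ⟨k, i, p, hpi⟩ := h
  exact ⟨k, i.restrictScalars B, p.restrictScalars B,
    LinearMap.ext fun x => LinearMap.congr_fun hpi x⟩

/-- If `A` is 1-syzygy-finite, then submodules of free modules lie in `add` of one module. -/
lemma exists_inAdd_of_oneSyzygyFinite {A : Type u} [Ring A] [IsArtinianRing A]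
    (h : OneSyzygyFinite A) :
    ∃ N : ModuleCat.{u} A, Module.Finite A N ∧
      ∀ (n : ℕ) (T : Submodule A (Fin n → A)), InAdd A N (ModuleCat.of A T) := by
  obtain ⟨N, _, hN⟩ := h
  refine ⟨ModuleCat.of A (N × A), inferInstance, fun n T => ?_⟩
  obtain ⟨K, hK⟩ := exists_isSyzygyOf (ModuleCat.of A ((Fin n → A) ⧸ T))
  obtain ⟨P, _, _, hP⟩ := ses_of_isSyzygyOf hK
  have h1 : InAdd A N K := hN (ModuleCat.of A ((Fin n → A) ⧸ T)) inferInstance K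
    ⟨_, ⟨.refl A _⟩, hK⟩
  have h2 : StabIso A K T := StabIso.refl.syzygy hP (SES.of_submodule T)
  exact StabIso.inAdd (Y := ModuleCat.of A T) h2 (inAdd_left (N' := ModuleCat.of A A) h1)
    (inAdd_right (N := N) (inAdd_self (ModuleCat.of A A)))

lemma finite_restrictScalars (B : Subalgebra R A) (X : Type u) [AddCommGroup X] [Module A X]
    [Module.Finite R A] [Module.Finite A X] : Module.Finite B X :=
  have : Module.Finite B A := Module.Finite.of_restrictScalars_finite R B A
  Module.Finite.trans A X

variable [IsArtinianRing R] [Module.Finite R A]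

lemma finite_subalgebra (B : Subalgebra R A) : Module.Finite R B :=
  inferInstanceAs (Module.Finite R (Subalgebra.toSubmodule B))

lemma isArtinianRing_subalgebra (B : Subalgebra R A) : IsArtinianRing B :=
  have := finite_subalgebra B
  IsArtinianRing.of_finite R B

/-- Projective dimensions of `A₁`-stable `B`-submodules of free `A`-modules are bounded. -/
lemma exists_bound_of_stable (B A₁ : Subalgebra R A) (S : Set A)
    (hS : ∀ a : A, ∀ y ∈ S, a * y ∈ A₁) (h1 : OneSyzygyFinite A)
    (hq : SyzygyFiniteClass B fun X => Module.Finite B X ∧ HasAction B A₁ S X) :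
    ∃ d : ℕ, ∀ (n : ℕ) (L : Submodule B (Fin n → A)), (∀ a ∈ A₁, ∀ v ∈ L, a • v ∈ L) →
      (∃ r, PdLE B L r) → PdLE B L d := by
  have := IsArtinianRing.of_finite R A
  have := isArtinianRing_subalgebra B
  obtain ⟨N, _, hN⟩ := exists_inAdd_of_oneSyzygyFinite h1
  obtain ⟨m, N', _, hN'⟩ := hq
  have hNfin : Module.Finite B N := finite_restrictScalars B N
  let M₁ := addSyz 1 (ModuleCat.of B (N' × B))
  let M₂ := addSyz m (ModuleCat.of B N)
  have hM₁ : InAdd B M₁ (ModuleCat.of B B) :=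
    inAdd_right (N := syz (ModuleCat.of B (N' × B))) (inAdd_self (ModuleCat.of B B))
  have hM₁fin : Module.Finite B M₁ := finite_addSyz 1 _
  have hM₂fin : Module.Finite B M₂ := finite_addSyz m _
  obtain ⟨d, hd⟩ := exists_bound_of_ses (ModuleCat.of B (M₁ × M₂))
  refine ⟨d + m, fun n L hL hpd => ?_⟩
  have hE : Module.Finite B (Fin n → A) := finite_restrictScalars B (Fin n → A)
  let T : Submodule A (Fin n → A) := Submodule.span A {z | ∃ y ∈ S, ∃ v ∈ L, z = y • v}
  let T' : Submodule B (Fin n → A) := T.restrictScalars B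
  have hTL : T' ≤ L := by
    intro z hz
    change z ∈ T at hz
    induction hz using Submodule.closure_induction with
    | zero => exact L.zero_mem
    | add x y _ _ hx hy => exact L.add_mem hx hy
    | smul_mem a x hx =>
      obtain ⟨y, hy, v, hv, rfl⟩ := hx
      rw [smul_smul]
      exact hL _ (hS a y hy) v hv
  let TL : Submodule B L := T'.comap L.subtype
  have hses : SES B T' L (L ⧸ TL) := (SES.of_submodule TL).congr
    (Submodule.comapSubtypeEquivOfLe hTL) (.refl B _) (.refl B _)
  have hT : InAdd B (ModuleCat.of B N) (ModuleCat.of B T') :=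
    inAdd_restrictScalars B (hN n T)
  have hact : HasAction B A₁ S (ModuleCat.of B (L ⧸ TL)) :=
    hasAction_quotient L TL hL (fun a _ v hv => T.smul_mem a hv)
      fun a _ ha v => Submodule.subset_span ⟨a, ha, v, v.2, rfl⟩
  obtain ⟨K, hK, _, hKs⟩ := exists_isNthSyzygy (ModuleCat.of B (L ⧸ TL)) m
  have hQ : InAdd B (ModuleCat.of B (N' × B)) (nsyz m (ModuleCat.of B (L ⧸ TL))) :=
    hKs.inAdd (inAdd_left (N' := ModuleCat.of B B) (hN' _ ⟨inferInstance, hact⟩ K hK))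
      (inAdd_right (N := N') (inAdd_self (ModuleCat.of B B)))
  have hTfin : Module.Finite B T' := hses.finite_left
  obtain ⟨L', Q', _, h', hL', hQ'⟩ := SES.nsyz (X := ModuleCat.of B T') (Y := ModuleCat.of B L)
    (Z := ModuleCat.of B (L ⧸ TL)) hses m
  have := h'.finite_right
  obtain ⟨k, hk⟩ := exists_ses_syz Q'
  have hQ'' : InAdd B M₁ (syz Q') := inAdd_syz (hQ'.symm.inAdd hQ
    (inAdd_right (N := N') (inAdd_self (ModuleCat.of B B))))
  have hmid : InAdd B (ModuleCat.of B (M₁ × M₂))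
      (ModuleCat.of B (nsyz m (ModuleCat.of B T') × (Fin k → B))) :=
    inAdd_prod (Y := ModuleCat.of B (Fin k → B)) (inAdd_right (inAdd_nsyz hT m))
      (inAdd_left (inAdd_pi (X := fun _ : Fin k => ModuleCat.of B B) fun _ => hM₁))
  obtain ⟨r, hr⟩ := hpd
  have hr' : PdLE B (nsyz m (ModuleCat.of B L)) r :=
    (pdLE_nsyz_iff (X := ModuleCat.of B L) m).2 (PdLE.mono hr (by omega))
  have hd' := hd _ _ L' (inAdd_left hQ'') hmid (h'.rotate hk) ⟨r, hL'.symm.pdLE hr'⟩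
  exact (pdLE_nsyz_iff (X := ModuleCat.of B L) m).1 (hL'.pdLE hd')

end Subalgebras

section Radical

variable {R : Type u} [CommRing R] {A : Type u} [Ring A] [Algebra R A]

/-- Superfluous submodules of projective modules have coordinates in the radical. -/
lemma apply_mem_jacobsonRad {Λ : Type u} [Ring Λ] {P : ModuleCat.{u} Λ} {K : Submodule Λ P}
    (hK : IsSuperfluous Λ K) (φ : P →ₗ[Λ] Λ) {w : P} (hw : w ∈ K) : φ w ∈ jacobsonRad Λ := by
  refine Submodule.mem_sInf.2 fun (I : Ideal Λ) hI => ?_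
  by_contra hwI
  have hI' : I.IsMaximal := hI
  have htop : Submodule.comap φ I ⊔ K = ⊤ := by
    refine top_le_iff.1 fun p _ => ?_
    have h1 : φ p ∈ I ⊔ Ideal.span {φ w} := by
      have : I < I ⊔ Ideal.span {φ w} := lt_of_le_of_ne le_sup_left fun h =>
        hwI (h ▸ Ideal.mem_sup_right (Ideal.mem_span_singleton_self _))
      rw [hI'.1.2 _ this]
      exact Submodule.mem_top
    obtain ⟨c, hc, z, hz, hcz⟩ := Submodule.mem_sup.1 h1
    obtain ⟨b, rfl⟩ := Ideal.mem_span_singleton'.1 hz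
    refine Submodule.mem_sup.2 ⟨p - b • w, ?_, b • w, K.smul_mem b hw, sub_add_cancel _ _⟩
    rw [Submodule.mem_comap, map_sub, map_smul, ← hcz, smul_eq_mul, add_sub_cancel_right]
    exact hc
  have hmem : w ∈ Submodule.comap φ I := by
    rw [hK _ htop]
    exact Submodule.mem_top
  exact hwI hmem

/-- The coordinatewise inclusion `Bⁿ → Aⁿ`. -/
def inclPi (B : Subalgebra R A) (n : ℕ) : (Fin n → B) →ₗ[B] (Fin n → A) where
  toFun v i := v i
  map_add' _ _ := rfl
  map_smul' _ _ := rfl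

lemma inclPi_injective (B : Subalgebra R A) (n : ℕ) : Function.Injective (inclPi B n) :=
  fun _ _ h => funext fun i => Subtype.ext (congrFun h i)

lemma smul_mem_map_inclPi {B A₁ : Subalgebra R A}
    (hrad : ∀ x ∈ radSet B, ∀ a ∈ A₁, a * x ∈ radSet B) {n : ℕ} (K : Submodule B (Fin n → B))
    (hK : ∀ v ∈ K, ∀ i, v i ∈ jacobsonRad B)
    (hK' : ∀ v, (∀ φ : (Fin n → B) →ₗ[B] B, (∀ w ∈ K, φ w = 0) → φ v = 0) → v ∈ K) :
    ∀ a ∈ A₁, ∀ v ∈ K.map (inclPi B n), a • v ∈ K.map (inclPi B n) := by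
  rintro a ha _ ⟨w, hw, rfl⟩
  choose w' _ hw' using fun i => hrad _ ⟨w i, hK w hw i, rfl⟩ a ha
  refine ⟨w', hK' w' fun φ hφ => ?_, funext hw'⟩
  have h : ∀ v : Fin n → B,
      ((φ v : B) : A) = ∑ i, (v i : A) * (φ fun j => if i = j then 1 else 0 : B) := by
    intro v
    rw [LinearMap.pi_apply_eq_sum_univ φ v]
    simp
  refine Subtype.ext ?_
  rw [h w']
  simp_rw [hw', mul_assoc]
  rw [← Finset.mul_sum, ← h w, hφ w hw]
  simp

/-- A left multiple of a product of elements of the radicals descends along the chain. -/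
lemma mul_prod_mem {m : ℕ} (C : Fin (m + 1) → Subalgebra R A) (x : Fin m → A)
    (h : ∀ j : Fin m, ∀ a ∈ C j.succ, a * x j ∈ C j.castSucc) {a : A} (ha : a ∈ C (Fin.last m)) :
    a * (List.ofFn fun j : Fin m => x j.rev).prod ∈ C 0 := by
  induction m generalizing a with
  | zero => simpa using ha
  | succ m ih =>
    rw [List.ofFn_succ, List.prod_cons, ← mul_assoc, Fin.rev_zero]
    simp_rw [Fin.rev_succ]
    exact ih (fun j => C j.castSucc) (fun j => x j.castSucc) (fun j => h j.castSucc)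
      (h (Fin.last m) a ha)

variable [IsArtinianRing R] [Module.Finite R A]

lemma finFinDim_of_bound {B A₁ : Subalgebra R A}
    (hrad : ∀ x ∈ radSet B, ∀ a ∈ A₁, a * x ∈ radSet B)
    (hd : ∃ d : ℕ, ∀ (n : ℕ) (L : Submodule B (Fin n → A)), (∀ a ∈ A₁, ∀ v ∈ L, a • v ∈ L) →
      (∃ r, PdLE B L r) → PdLE B L d) : FinFinDim B := by
  have := isArtinianRing_subalgebra B
  obtain ⟨d, hd⟩ := hd
  refine ⟨d + 1 + 1, fun X _ ⟨r, hr⟩ => ?_⟩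
  rw [projDimLE_iff] at hr ⊢
  obtain ⟨m, π, hπ⟩ := Module.Finite.exists_fin' B X
  obtain ⟨_, P, g, _, _, hg, hs, -⟩ := exists_isSyzygyOf (ModuleCat.of B (LinearMap.ker π))
  obtain ⟨n, i, p, hpi⟩ := inAdd_of_projective P
  have hpi' : ∀ x, p (i x) = x := fun x => LinearMap.congr_fun hpi x
  have hi : Function.Injective i := Function.LeftInverse.injective hpi'
  let K : Submodule B (Fin n → B) := (LinearMap.ker g).map i
  have hX := SES.of_ker π hπ
  have hY := SES.of_ker g hg
  have e : LinearMap.ker g ≃ₗ[B] K.map (inclPi B n) :=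
    Submodule.equivMapOfInjective i hi _ ≪≫ₗ
      Submodule.equivMapOfInjective (inclPi B n) (inclPi_injective B n) K
  have hstab : ∀ a ∈ A₁, ∀ v ∈ K.map (inclPi B n), a • v ∈ K.map (inclPi B n) := by
    refine smul_mem_map_inclPi hrad K ?_ fun v hv => ?_
    · rintro _ ⟨w, hw, rfl⟩ j
      exact apply_mem_jacobsonRad hs (LinearMap.proj j ∘ₗ i) hw
    · have h1 : i (p v) = v := by
        funext j
        refine (sub_eq_zero.1 ?_).symm
        refine hv (LinearMap.proj j ∘ₗ (LinearMap.id - i ∘ₗ p)) ?_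
        rintro _ ⟨w, -, rfl⟩
        simp [hpi']
      refine ⟨p v, Subtype.ext (funext fun j => ?_), h1⟩
      refine hv (LinearMap.proj j ∘ₗ (LinearMap.ker π).subtype ∘ₗ g ∘ₗ p) ?_
      rintro _ ⟨w, hw, rfl⟩
      have hw' : g w = 0 := hw
      simp [hpi', hw']
  have hL : PdLE B (LinearMap.ker g) r :=
    hY.pdLE_succ_iff.1 (hX.pdLE_succ_iff.1 (PdLE.mono hr (by omega)))
  exact hX.pdLE_succ_iff.2 (hY.pdLE_succ_iff.2
    ((hd n _ hstab ⟨r, hL.of_equiv e⟩).of_equiv e.symm))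

end Radical

end ArtinAlgebra

variable {R : Type u} [CommRing R] [IsArtinianRing R]
  {A : Type u} [Ring A] [Algebra R A] [Module.Finite R A]

/-- Chain of subalgebras `B = A₀ ⊆ ⋯ ⊆ A_s = A` with `rad (A_{i-1})` a left
ideal of `A_i`.  If `A` is 1-syzygy-finite and `A₁/(rad (A_{s-1}) ⋯ rad (A₁))` is
`B`-syzygy-finite (its modules, restricted to `B`-modules along `B ⊆ A₁`), then
`fin.dim B < ∞`. -/
theorem statement4 (s : ℕ) (hs : 0 < s)
    (A' : Fin (s + 1) → Subalgebra R A)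
    (hchain : ∀ j : Fin s, A' j.castSucc ≤ A' j.succ)
    (htop : A' (Fin.last s) = ⊤)
    (hrad : ∀ j : Fin s, ∀ x ∈ radSet (A' j.castSucc), ∀ a ∈ A' j.succ,
      a * x ∈ radSet (A' j.castSucc))
    (h1 : OneSyzygyFinite A)
    (hq : SyzygyFiniteClass ↥(A' 0) (fun X => Module.Finite ↥(A' 0) X ∧
      ∃ sm : ↥(A' 1) → X → X,
        (∀ v : X, sm 1 v = v) ∧
        (∀ (a b : ↥(A' 1)) (v : X), sm (a * b) v = sm a (sm b v)) ∧
        (∀ (a : ↥(A' 1)) (v w : X), sm a (v + w) = sm a v + sm a w) ∧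
        (∀ (a b : ↥(A' 1)) (v : X), sm (a + b) v = sm a v + sm b v) ∧
        (∀ (a : ↥(A' 1)) (hb : (a : A) ∈ A' 0) (v : X),
          sm a v = (⟨(a : A), hb⟩ : ↥(A' 0)) • v) ∧
        (∀ x : Fin (s - 1) → A,
          (∀ j : Fin (s - 1), x j ∈ radSet (A' ⟨j.1 + 1, by omega⟩)) →
          ∀ (hm : (List.ofFn fun j : Fin (s - 1) => x j.rev).prod ∈ A' 1) (v : X),
            sm (⟨(List.ofFn fun j : Fin (s - 1) => x j.rev).prod, hm⟩ : ↥(A' 1)) v = 0))) :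
    FinFinDim ↥(A' 0) := by
  obtain ⟨m, rfl⟩ := Nat.exists_eq_succ_of_ne_zero hs.ne'
  let S : Set A := {y | ∃ x : Fin m → A, (∀ j : Fin m, x j ∈ radSet (A' ⟨j.1 + 1, by omega⟩)) ∧
    y = (List.ofFn fun j : Fin m => x j.rev).prod}
  have hsub : ∀ (C : Subalgebra R A), ∀ x ∈ radSet C, x ∈ C := by
    rintro C _ ⟨x, -, rfl⟩
    exact x.2
  have hS : ∀ a : A, ∀ y ∈ S, a * y ∈ A' 1 := by
    rintro a _ ⟨x, hx, rfl⟩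
    refine ArtinAlgebra.mul_prod_mem (fun j => A' j.succ) x
      (fun j b hb => hsub _ _ (hrad j.succ (x j) (hx j) b hb)) ?_
    change a ∈ A' (Fin.last (m + 1))
    rw [htop]
    exact Algebra.mem_top
  have hq' : SyzygyFiniteClass ↥(A' 0) fun X =>
      Module.Finite ↥(A' 0) X ∧ ArtinAlgebra.HasAction (A' 0) (A' 1) S X := by
    obtain ⟨k, N, hN, h⟩ := hq
    refine ⟨k, N, hN, fun X hX => h X ⟨hX.1, ?_⟩⟩
    obtain ⟨sm, h1, h2, h3, h4, h5, h6⟩ := hX.2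
    exact ⟨sm, h1, h2, h3, h4, h5, fun x hx hm v => h6 _ ⟨x, hx, rfl⟩ v⟩
  exact ArtinAlgebra.finFinDim_of_bound (hrad 0)
    (ArtinAlgebra.exists_bound_of_stable (A' 0) (A' 1) S hS h1 hq')
end

section
/- Let φ : B → A be a homomorphism of Artin algebras preserving identities. If B is representation-finite, then there are only finitely many isomorphism classes of indecomposable (A,B)-projective finitely generated A-modules. -/
universe u

open TensorProduct

section Indecomposable

variable {Λ : Type u} [Ring Λ]

/-- Fitting's lemma: the endomorphism ring of an indecomposable module of finite length is local. -/
theorem ModIndec.isLocalRing_end {M : ModuleCat.{u} Λ} [IsArtinian Λ M] [IsNoetherian Λ M]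
    (hM : ModIndec Λ M) : IsLocalRing (Module.End Λ M) := by
  have := hM.1
  refine IsLocalRing.of_isUnit_or_isUnit_one_sub_self fun f => ?_
  obtain ⟨n, hn, hc⟩ := ((Filter.eventually_ge_atTop 1).and
    f.eventually_isCompl_ker_pow_range_pow).exists
  rcases hM.2 _ _ hc with h | h
  · left
    rw [Module.End.isUnit_iff]
    refine IsArtinian.bijective_of_injective_endomorphism f ?_
    have hinj : Function.Injective (f ^ n) := LinearMap.ker_eq_bot.mp h
    obtain ⟨m, rfl⟩ : ∃ m, n = m + 1 := ⟨n - 1, by omega⟩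
    rw [pow_succ, Module.End.mul_eq_comp, LinearMap.coe_comp] at hinj
    exact hinj.of_comp
  · right
    exact IsNilpotent.isUnit_one_sub ⟨n, LinearMap.range_eq_bot.mp h⟩

/-- A nontrivial module that is a retract (up to an automorphism) of an indecomposable module
is isomorphic to it. -/
theorem ModIndec.nonempty_linearEquiv {X Z : ModuleCat.{u} Λ} [Nontrivial X] (hZ : ModIndec Λ Z)
    (f : X →ₗ[Λ] Z) (g : Z →ₗ[Λ] X) (h : IsUnit (M := Module.End Λ X) (g ∘ₗ f)) :
    Nonempty (X ≃ₗ[Λ] Z) := by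
  rw [Module.End.isUnit_iff] at h
  have hf : Function.Injective f := Function.Injective.of_comp (f := g) h.1
  have hg : Function.Surjective g := Function.Surjective.of_comp (g := f) h.2
  have hc : IsCompl (LinearMap.range f) (LinearMap.ker g) := by
    constructor
    · rw [Submodule.disjoint_def]
      rintro _ ⟨x, rfl⟩ hx
      have : x = 0 := h.1 (by simpa using hx)
      simp [this]
    · rw [codisjoint_iff, eq_top_iff]
      intro z _
      obtain ⟨x, hx⟩ := h.2 (g z)
      refine Submodule.mem_sup.mpr ⟨f x, ⟨x, rfl⟩, z - f x, ?_, by abel⟩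
      simpa [sub_eq_zero] using hx.symm
  rcases hZ.2 _ _ hc with h0 | h0
  · rw [LinearMap.range_eq_bot] at h0
    obtain ⟨x, hx⟩ := exists_ne (0 : X)
    exact absurd (hf (by simp [h0])) hx
  · exact ⟨(LinearEquiv.ofBijective g ⟨LinearMap.ker_eq_bot.mp h0, hg⟩).symm⟩

/-- The additive closure of the maps that factor through a finitely generated indecomposable
module. -/
def indecFactors (Λ : Type u) [Ring Λ] (M M' : Type u) [AddCommGroup M] [Module Λ M]
    [AddCommGroup M'] [Module Λ M'] : AddSubmonoid (M →ₗ[Λ] M') :=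
  AddSubmonoid.closure {e | ∃ (Z : ModuleCat.{u} Λ) (a : M →ₗ[Λ] Z) (b : Z →ₗ[Λ] M'),
    Module.Finite Λ Z ∧ ModIndec Λ Z ∧ e = b ∘ₗ a}

theorem comp_mem_indecFactors {M₁ M₂ M₃ : Type u} [AddCommGroup M₁] [Module Λ M₁]
    [AddCommGroup M₂] [Module Λ M₂] [AddCommGroup M₃] [Module Λ M₃]
    {e : M₂ →ₗ[Λ] M₃} (he : e ∈ indecFactors Λ M₂ M₃) (f : M₁ →ₗ[Λ] M₂) :
    e ∘ₗ f ∈ indecFactors Λ M₁ M₃ := by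
  induction he using AddSubmonoid.closure_induction with
  | mem e he =>
    obtain ⟨Z, a, b, hf, hi, rfl⟩ := he
    exact AddSubmonoid.subset_closure ⟨Z, a ∘ₗ f, b, hf, hi, rfl⟩
  | zero => simp [zero_mem]
  | add e₁ e₂ _ _ h₁ h₂ => rw [LinearMap.add_comp]; exact add_mem h₁ h₂

/-- The identity of a module of finite length is a sum of maps factoring through finitely
generated indecomposable modules. -/
theorem one_mem_indecFactors (M : Type u) [AddCommGroup M] [Module Λ M]
    [IsArtinian Λ M] [IsNoetherian Λ M] : (1 : Module.End Λ M) ∈ indecFactors Λ M M := by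
  have key : ∀ N : Submodule Λ M, N.subtype ∈ indecFactors Λ N M := by
    intro N
    induction N using WellFoundedLT.induction with
    | ind N ih =>
    by_cases hN : ModIndec Λ (ModuleCat.of Λ N)
    · exact AddSubmonoid.subset_closure
        ⟨ModuleCat.of Λ N, LinearMap.id, N.subtype, inferInstanceAs (Module.Finite Λ N), hN, rfl⟩
    rcases subsingleton_or_nontrivial N with hs | hs
    · rw [show N.subtype = 0 from LinearMap.ext fun x => by simp [Subsingleton.elim x 0]]
      exact zero_mem _
    have hN' : ∃ N₁ N₂ : Submodule Λ N, IsCompl N₁ N₂ ∧ N₁ ≠ ⊥ ∧ N₂ ≠ ⊥ := by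
      by_contra! hcon
      exact hN ⟨hs, fun N₁ N₂ hc => or_iff_not_imp_left.mpr (hcon N₁ N₂ hc)⟩
    obtain ⟨N₁, N₂, hc, h₁, h₂⟩ := hN'
    have step : ∀ P Q : Submodule Λ N, ∀ hPQ : IsCompl P Q, Q ≠ ⊥ →
        N.subtype ∘ₗ P.projection Q hPQ ∈ indecFactors Λ N M := by
      intro P Q hPQ hQ
      have hlt : P.map N.subtype < N := by
        refine lt_of_le_of_ne (Submodule.map_subtype_le N P) fun heq => hQ ?_
        have hP : P = ⊤ := by
          apply Submodule.map_injective_of_injective N.injective_subtype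
          rw [heq, Submodule.map_subtype_top]
        simpa [hP] using hPQ.inf_eq_bot
      exact comp_mem_indecFactors (ih _ hlt)
        ((N.subtype.submoduleMap P) ∘ₗ P.projectionOnto Q hPQ)
    have hsum : N.subtype =
        N.subtype ∘ₗ N₁.projection N₂ hc + N.subtype ∘ₗ N₂.projection N₁ hc.symm := by
      rw [← LinearMap.comp_add, Submodule.projection_add_projection_eq_id, LinearMap.comp_id]
    rw [hsum]
    exact add_mem (step _ _ hc h₂) (step _ _ hc.symm h₁)
  exact comp_mem_indecFactors (key ⊤) (Submodule.topEquiv (R := Λ) (M := M)).symm.toLinearMap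

/-- If an additive map to a local ring sends a member of an additive closure to a unit, then it
sends some generator to a unit. -/
theorem exists_isUnit_of_mem_closure {G E : Type*} [AddMonoid G] [Ring E] [IsLocalRing E]
    {S : Set G} {x : G} (hx : x ∈ AddSubmonoid.closure S) (h : G →+ E) (hu : IsUnit (h x)) :
    ∃ s ∈ S, IsUnit (h s) := by
  by_contra! hcon
  have hle : AddSubmonoid.closure S ≤ (IsLocalRing.nonunitsAddSubmonoid E).comap h :=
    AddSubmonoid.closure_le.mpr hcon
  exact hle hx hu

/-- The additive map `e ↦ r ∘ e ∘ s` from endomorphisms of `Y` to endomorphisms of `X`. -/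
def compressEnd {X Y : Type*} [AddCommGroup X] [Module Λ X] [AddCommGroup Y] [Module Λ Y]
    (s : X →ₗ[Λ] Y) (r : Y →ₗ[Λ] X) : Module.End Λ Y →+ Module.End Λ X where
  toFun e := r ∘ₗ e ∘ₗ s
  map_zero' := by simp
  map_add' _ _ := by simp [LinearMap.add_comp, LinearMap.comp_add]

/-- A module of finite length has, up to isomorphism, only finitely many indecomposable direct
summands of finite length. -/
theorem finite_indecomposable_summands (Y : Type u) [AddCommGroup Y] [Module Λ Y]
    [IsArtinian Λ Y] [IsNoetherian Λ Y] :
    ∃ (n : ℕ) (Z : Fin n → ModuleCat.{u} Λ), ∀ (X : ModuleCat.{u} Λ) [IsArtinian Λ X]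
      [IsNoetherian Λ X], ModIndec Λ X → ∀ (s : X →ₗ[Λ] Y) (r : Y →ₗ[Λ] X),
      IsUnit (M := Module.End Λ X) (r ∘ₗ s) → ∃ j, Nonempty (X ≃ₗ[Λ] Z j) := by
  obtain ⟨l, hl, hsum⟩ := AddSubmonoid.exists_list_of_mem_closure (one_mem_indecFactors (Λ := Λ) Y)
  choose Z a b _ hZ hab using fun j : Fin l.length => hl (l.get j) (l.get_mem j)
  refine ⟨l.length, Z, fun X _ _ hX s r hu => ?_⟩
  have := hX.isLocalRing_end
  have := hX.1
  have hmem : (1 : Module.End Λ Y) ∈ AddSubmonoid.closure {e | e ∈ l} := by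
    rw [← hsum]
    exact AddSubmonoid.list_sum_mem _ fun e he => AddSubmonoid.subset_closure he
  obtain ⟨e, he, heu⟩ := exists_isUnit_of_mem_closure hmem (compressEnd s r) hu
  obtain ⟨j, rfl⟩ := List.get_of_mem he
  refine ⟨j, (hZ j).nonempty_linearEquiv (a j ∘ₗ s) (r ∘ₗ b j) ?_⟩
  rw [hab j] at heu
  exact heu

end Indecomposable

section Induced

variable {R : Type u} [CommRing R] {B A : Type u} [Ring B] [Ring A]
  [Algebra R B] [Algebra R A] (φ : B →ₐ[R] A)

/-- The relations defining `A ⊗_B N` as a quotient of `A ⊗_R N`. -/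
def inducedRel (N : Type u) [AddCommGroup N] [Module R N] [Module B N] :
    Submodule A (A ⊗[R] N) :=
  Submodule.span A {z : A ⊗[R] N | ∃ (a : A) (b : B) (x : N),
    z = (a * φ b) ⊗ₜ[R] x - a ⊗ₜ[R] (b • x)}

/-- The `A`-module `A ⊗_B N` induced from a `B`-module `N`. -/
abbrev InducedMod (N : Type u) [AddCommGroup N] [Module R N] [Module B N] : Type u :=
  (A ⊗[R] N) ⧸ inducedRel φ N

theorem inducedMod_hom_ext {N P : Type u} [AddCommGroup N] [Module R N] [Module B N]
    [AddCommGroup P] [Module A P] {f g : InducedMod φ N →ₗ[A] P}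
    (h : ∀ (a : A) (x : N),
      f (Submodule.Quotient.mk (a ⊗ₜ x)) = g (Submodule.Quotient.mk (a ⊗ₜ x))) :
    f = g := by
  refine Submodule.linearMap_qext _ (LinearMap.ext fun z => ?_)
  induction z using TensorProduct.induction_on with
  | zero => simp
  | tmul a x => exact h a x
  | add z₁ z₂ h₁ h₂ => rw [map_add, map_add, h₁, h₂]

variable {N₁ N₂ N₃ : Type u} [AddCommGroup N₁] [Module R N₁] [Module B N₁] [IsScalarTower R B N₁]
  [AddCommGroup N₂] [Module R N₂] [Module B N₂] [IsScalarTower R B N₂]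
  [AddCommGroup N₃] [Module R N₃] [Module B N₃] [IsScalarTower R B N₃]

/-- Functoriality of the induced module. -/
noncomputable def inducedMap (f : N₁ →ₗ[B] N₂) : InducedMod φ N₁ →ₗ[A] InducedMod φ N₂ :=
  Submodule.mapQ _ _
    (TensorProduct.AlgebraTensorModule.map (LinearMap.id : A →ₗ[A] A) (f.restrictScalars R)) <| by
    rw [inducedRel, Submodule.span_le]
    rintro _ ⟨a, b, x, rfl⟩
    exact Submodule.subset_span ⟨a, b, f x, by simp⟩

theorem inducedMap_mk_tmul (f : N₁ →ₗ[B] N₂) (a : A) (x : N₁) :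
    inducedMap φ f (Submodule.Quotient.mk (a ⊗ₜ x)) = Submodule.Quotient.mk (a ⊗ₜ f x) :=
  rfl

theorem inducedMap_id : inducedMap φ (LinearMap.id : N₁ →ₗ[B] N₁) = LinearMap.id :=
  inducedMod_hom_ext φ fun _ _ => rfl

theorem inducedMap_comp (g : N₂ →ₗ[B] N₃) (f : N₁ →ₗ[B] N₂) :
    inducedMap φ (g ∘ₗ f) = inducedMap φ g ∘ₗ inducedMap φ f :=
  inducedMod_hom_ext φ fun _ _ => rfl

/-- Inducing endomorphisms is additive. -/
noncomputable def inducedEnd : Module.End B N₁ →+ Module.End A (InducedMod φ N₁) :=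
  AddMonoidHom.mk' (fun f => inducedMap φ f) fun f g => inducedMod_hom_ext φ fun a x => by
    simp only [LinearMap.add_apply, inducedMap_mk_tmul, TensorProduct.tmul_add,
      Submodule.Quotient.mk_add]

end Induced

variable {R : Type u} [CommRing R] [IsArtinianRing R]
  {B A : Type u} [Ring B] [Ring A] [Algebra R B] [Algebra R A]
  [Module.Finite R B] [Module.Finite R A]

/-- If `B` is representation-finite, there are only finitely many isomorphism
classes of indecomposable `(A,B)`-projective finitely generated `A`-modules. -/
theorem statement5 (φ : B →ₐ[R] A) (hB : RepFinite B) :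
    ClassRepFinite A (fun X => Module.Finite A X ∧ RelProjective φ X) := by
  have : IsArtinianRing A := IsArtinianRing.of_finite R A
  have : IsArtinianRing B := IsArtinianRing.of_finite R B
  obtain ⟨k, N, hN⟩ := hB
  have hlist : ∀ i : Fin k, letI : Module R (N i) := Module.compHom _ (algebraMap R B)
      ∃ (n : ℕ) (Z : Fin n → ModuleCat.{u} A), Module.Finite B (N i) →
        ∀ X : ModuleCat.{u} A, Module.Finite A X → ModIndec A X →
        ∀ (s : X →ₗ[A] InducedMod φ (N i)) (r : InducedMod φ (N i) →ₗ[A] X),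
        IsUnit (M := Module.End A X) (r ∘ₗ s) → ∃ j, Nonempty (X ≃ₗ[A] Z j) := by
    intro i
    let : Module R (N i) := Module.compHom _ (algebraMap R B)
    by_cases hfin : Module.Finite B (N i)
    · have : IsScalarTower R B (N i) := IsScalarTower.of_algebraMap_smul fun _ _ => rfl
      have : Module.Finite R (N i) := Module.Finite.trans B _
      obtain ⟨n, Z, hZ⟩ := finite_indecomposable_summands (Λ := A) (InducedMod φ (N i))
      exact ⟨n, Z, fun _ X _ => hZ X⟩
    · exact ⟨0, Fin.elim0, fun h => absurd h hfin⟩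
  choose n Z hZ using hlist
  let e : Fin (Fintype.card (Σ i, Fin (n i))) ≃ (Σ i, Fin (n i)) := (Fintype.equivFin _).symm
  refine ⟨_, fun t => Z (e t).1 (e t).2, ?_⟩
  rintro X ⟨hXfin, hXrel⟩ hX
  suffices h : ∃ i j, Nonempty (X ≃ₗ[A] Z i j) by
    obtain ⟨i, j, h⟩ := h
    exact ⟨e.symm ⟨i, j⟩, by beta_reduce; rwa [e.apply_symm_apply]⟩
  let : Module R X := Module.compHom X (algebraMap R A)
  let : Module B X := Module.compHom X φ.toRingHom
  have : IsScalarTower R A X := IsScalarTower.of_algebraMap_smul fun _ _ => rfl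
  have : IsScalarTower R B X := IsScalarTower.of_algebraMap_smul fun r x => by
    change φ (algebraMap R B r) • x = algebraMap R A r • x
    rw [φ.commutes]
  have : Module.Finite R X := Module.Finite.trans A _
  have : Module.Finite B X := Module.Finite.of_restrictScalars_finite R B X
  have := hX.isLocalRing_end
  obtain ⟨s, r, hrs⟩ : ∃ (s : X →ₗ[A] InducedMod φ X) (r : InducedMod φ X →ₗ[A] X),
    r ∘ₗ s = LinearMap.id := hXrel
  have hunit : IsUnit ((compressEnd s r).comp (inducedEnd φ) (1 : Module.End B X)) := by
    have : (compressEnd s r).comp (inducedEnd φ) (1 : Module.End B X) = 1 := by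
      change r ∘ₗ inducedMap φ LinearMap.id ∘ₗ s = LinearMap.id
      rw [inducedMap_id, LinearMap.id_comp, hrs]
    rw [this]
    exact isUnit_one
  obtain ⟨_, ⟨W, a, b, hWfin, hW, rfl⟩, hu⟩ :=
    exists_isUnit_of_mem_closure (one_mem_indecFactors (Λ := B) X) _ hunit
  obtain ⟨i, ⟨f⟩⟩ := hN W hWfin hW
  let : Module R (N i) := Module.compHom _ (algebraMap R B)
  have : IsScalarTower R B (N i) := IsScalarTower.of_algebraMap_smul fun _ _ => rfl
  refine ⟨i, hZ i (Module.Finite.equiv f) X hXfin hX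
    (inducedMap φ (f.toLinearMap ∘ₗ a) ∘ₗ s) (r ∘ₗ inducedMap φ (b ∘ₗ f.symm.toLinearMap)) ?_⟩
  have hcomp : b ∘ₗ a = (b ∘ₗ f.symm.toLinearMap) ∘ₗ (f.toLinearMap ∘ₗ a) :=
    LinearMap.ext fun x => by simp
  have hu' : IsUnit (M := Module.End A X) (r ∘ₗ inducedMap φ (b ∘ₗ a) ∘ₗ s) := hu
  rw [hcomp, inducedMap_comp] at hu'
  exact hu'
end

section
/- Let B be a subalgebra of an Artin algebra A with the same identity such that rad(B) is a left ideal of A and rad(B)·A = rad(A). If B is representation-finite, then the finitistic dimension of A is finite. -/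
universe u

open TensorProduct

variable {R : Type u} [CommRing R] [IsArtinianRing R]
  {A : Type u} [Ring A] [Algebra R A] [Module.Finite R A]

section KrullSchmidt

variable {Λ : Type u} [Ring Λ]

/-- `Y` is a direct summand of `M`. -/
def IsRetractOf (Λ : Type u) [Ring Λ] (Y M : Type u) [AddCommGroup Y] [Module Λ Y]
    [AddCommGroup M] [Module Λ M] : Prop :=
  ∃ (i : Y →ₗ[Λ] M) (p : M →ₗ[Λ] Y), ∀ y, p (i y) = y

/-- The endomorphism ring of `Y` is local. -/
def HasLocalEnd (Λ : Type u) [Ring Λ] (Y : Type u) [AddCommGroup Y] [Module Λ Y] : Prop :=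
  Nontrivial Y ∧ ∀ a b : Module.End Λ Y, a + b = 1 → IsUnit a ∨ IsUnit b

section

variable {M M' M'' C Y P : Type u} [AddCommGroup M] [Module Λ M] [AddCommGroup M'] [Module Λ M']
  [AddCommGroup M''] [Module Λ M''] [AddCommGroup C] [Module Λ C] [AddCommGroup Y] [Module Λ Y]
  [AddCommGroup P] [Module Λ P]

lemma IsRetractOf.trans (h : IsRetractOf Λ Y M) (h' : IsRetractOf Λ M C) :
    IsRetractOf Λ Y C := by
  obtain ⟨i, p, h⟩ := h
  obtain ⟨j, q, h'⟩ := h'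
  exact ⟨j ∘ₗ i, p ∘ₗ q, fun y => by simp [h, h']⟩

lemma IsRetractOf.of_equiv (e : Y ≃ₗ[Λ] M) : IsRetractOf Λ Y M :=
  ⟨e, e.symm, by simp⟩

lemma IsRetractOf.inl : IsRetractOf Λ M (M × C) :=
  ⟨LinearMap.inl Λ M C, LinearMap.fst Λ M C, by simp⟩

lemma IsRetractOf.inr : IsRetractOf Λ C (M × C) :=
  ⟨LinearMap.inr Λ M C, LinearMap.snd Λ M C, by simp⟩

lemma IsRetractOf.projective (h : IsRetractOf Λ Y M) [Module.Projective Λ M] :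
    Module.Projective Λ Y := by
  obtain ⟨i, p, h⟩ := h
  exact Module.Projective.of_split i p (LinearMap.ext h)

/-- A splitting of a surjection. -/
lemma exists_equiv_ker_prod (p : M →ₗ[Λ] Y) (i : Y →ₗ[Λ] M) (h : ∀ y, p (i y) = y) :
    Nonempty (M ≃ₗ[Λ] (LinearMap.ker p × Y)) := by
  refine ⟨(LinearEquiv.ofBijective
    ((LinearMap.ker p).subtype.coprod i) ⟨?_, fun m => ?_⟩).symm⟩
  · rw [injective_iff_map_eq_zero]
    rintro ⟨⟨k, hk⟩, y⟩ hy
    rw [LinearMap.mem_ker] at hk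
    simp only [LinearMap.coprod_apply, Submodule.subtype_apply] at hy
    have hy0 : y = 0 := by
      have := congrArg p hy
      simpa [hk, h] using this
    subst hy0
    simpa using hy
  · exact ⟨(⟨m - i (p m), by simp [h]⟩, p m), by simp⟩

lemma HasLocalEnd.of_equiv (h : HasLocalEnd Λ M) (e : M ≃ₗ[Λ] Y) : HasLocalEnd Λ Y := by
  obtain ⟨h0, h⟩ := h
  refine ⟨e.symm.toEquiv.nontrivial, fun a b hab => ?_⟩
  have key := h (e.symm.conjRingEquiv a) (e.symm.conjRingEquiv b) (by rw [← map_add, hab, map_one])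
  simpa using key

/-- An indecomposable module of finite length has a local endomorphism ring. -/
lemma hasLocalEnd_of_indecomposable [IsNoetherian Λ Y] [IsArtinian Λ Y] [Nontrivial Y]
    (h : ∀ N₁ N₂ : Submodule Λ Y, IsCompl N₁ N₂ → N₁ = ⊥ ∨ N₂ = ⊥) : HasLocalEnd Λ Y := by
  refine ⟨inferInstance, fun a b hab => ?_⟩
  obtain ⟨n, hn, hn1⟩ := ((LinearMap.eventually_isCompl_ker_pow_range_pow a).and
    (Filter.eventually_ge_atTop 1)).exists
  rcases h _ _ hn with h1 | h1
  · left
    rw [Module.End.isUnit_iff]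
    apply IsArtinian.bijective_of_injective_endomorphism
    rw [← LinearMap.ker_eq_bot, eq_bot_iff, ← h1]
    intro x hx
    obtain ⟨k, rfl⟩ := Nat.exists_eq_succ_of_ne_zero (by omega : n ≠ 0)
    rw [LinearMap.mem_ker] at hx ⊢
    rw [Nat.succ_eq_add_one, pow_succ, Module.End.mul_apply, hx, map_zero]
  · right
    have hnil : IsNilpotent a := ⟨n, LinearMap.range_eq_bot.1 h1⟩
    rw [eq_sub_of_add_eq' hab]
    exact hnil.isUnit_one_sub

lemma HasLocalEnd.retract_prod [IsArtinian Λ Y] (hY : HasLocalEnd Λ Y)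
    (h : IsRetractOf Λ Y (M × C)) : IsRetractOf Λ Y M ∨ IsRetractOf Λ Y C := by
  obtain ⟨i, p, h⟩ := h
  have key := hY.2 (p ∘ₗ LinearMap.inl Λ M C ∘ₗ LinearMap.fst Λ M C ∘ₗ i)
    (p ∘ₗ LinearMap.inr Λ M C ∘ₗ LinearMap.snd Λ M C ∘ₗ i) (by
      ext y
      simp only [LinearMap.add_apply, LinearMap.comp_apply, ← map_add]
      simp [h])
  rcases key with hu | hu
  · obtain ⟨v, hv⟩ := hu.exists_left_inv
    exact Or.inl ⟨LinearMap.fst Λ M C ∘ₗ i, v ∘ₗ p ∘ₗ LinearMap.inl Λ M C,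
      fun y => by simpa using LinearMap.congr_fun hv y⟩
  · obtain ⟨v, hv⟩ := hu.exists_left_inv
    exact Or.inr ⟨LinearMap.snd Λ M C ∘ₗ i, v ∘ₗ p ∘ₗ LinearMap.inr Λ M C,
      fun y => by simpa using LinearMap.congr_fun hv y⟩

lemma HasLocalEnd.equiv_of_retract (hM : HasLocalEnd Λ M) [Nontrivial Y]
    (h : IsRetractOf Λ Y M) : Nonempty (Y ≃ₗ[Λ] M) := by
  obtain ⟨i, p, h⟩ := h
  rcases hM.2 (i ∘ₗ p) (1 - i ∘ₗ p) (by simp) with hu | hu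
  · rw [Module.End.isUnit_iff] at hu
    refine ⟨LinearEquiv.ofBijective i ⟨Function.LeftInverse.injective h, fun m => ?_⟩⟩
    obtain ⟨m', rfl⟩ := hu.2 m
    exact ⟨p m', rfl⟩
  · exfalso
    rw [Module.End.isUnit_iff] at hu
    obtain ⟨y, hy⟩ := exists_ne (0 : Y)
    have : i y = 0 := hu.1 (by simp [h])
    exact hy (by rw [← h y, this, map_zero])

lemma equiv_of_prod_equiv_of_bijective (e : (M × C) ≃ₗ[Λ] (M' × C))
    (h : Function.Bijective fun c => (e (0, c)).2) : Nonempty (M ≃ₗ[Λ] M') := by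
  refine ⟨(LinearEquiv.ofBijective (LinearMap.fst Λ M C ∘ₗ e.symm.toLinearMap ∘ₗ
    LinearMap.inl Λ M' C) ⟨?_, fun m => ?_⟩).symm⟩
  · rw [injective_iff_map_eq_zero]
    intro m' hm'
    have h1 : e.symm (m', 0) = (0, (e.symm (m', 0)).2) := Prod.ext (by simpa using hm') rfl
    have h2 := congrArg e h1
    rw [LinearEquiv.apply_symm_apply] at h2
    have h3 : (e.symm (m', 0)).2 = 0 := h.1 (by
      change (e (0, (e.symm (m', 0)).2)).2 = (e (0, 0)).2
      rw [← h2]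
      simp [show ((0 : M), (0 : C)) = 0 from rfl])
    rw [h3, show ((0 : M), (0 : C)) = 0 from rfl, map_zero] at h2
    exact congrArg Prod.fst h2
  · obtain ⟨c, hc⟩ := h.2 (-(e (m, 0)).2)
    have h1 : e (m, c) = ((e (m, c)).1, 0) := by
      refine Prod.ext rfl ?_
      have : (m, c) = (m, 0) + (0, c) := by simp
      rw [this, map_add, Prod.snd_add]
      simp only at hc
      simp [hc]
    refine ⟨(e (m, c)).1, ?_⟩
    simp [← h1]

/-- Cancellation of a module with local endomorphism ring. -/
lemma HasLocalEnd.cancel [IsArtinian Λ C] (hC : HasLocalEnd Λ C)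
    (e : (M × C) ≃ₗ[Λ] (M' × C)) : Nonempty (M ≃ₗ[Λ] M') := by
  let δ : Module.End Λ C := LinearMap.snd Λ M' C ∘ₗ e.toLinearMap ∘ₗ LinearMap.inr Λ M C
  let β : C →ₗ[Λ] M' := LinearMap.fst Λ M' C ∘ₗ e.toLinearMap ∘ₗ LinearMap.inr Λ M C
  let γ' : M' →ₗ[Λ] C := LinearMap.snd Λ M C ∘ₗ e.symm.toLinearMap ∘ₗ LinearMap.inl Λ M' C
  let δ' : Module.End Λ C := LinearMap.snd Λ M C ∘ₗ e.symm.toLinearMap ∘ₗ LinearMap.inr Λ M' C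
  by_cases hδ : IsUnit δ
  · exact equiv_of_prod_equiv_of_bijective e ((Module.End.isUnit_iff _).1 hδ)
  have hsum : δ' * δ + γ' ∘ₗ β = 1 := by
    ext c
    simp only [LinearMap.add_apply, Module.End.mul_apply, LinearMap.comp_apply, δ, β, γ', δ',
      ← map_add]
    simp
  have hnot : ∀ v : Module.End Λ C, ¬ IsUnit (v * δ) := fun v hv => hδ <| by
    rw [Module.End.isUnit_iff] at hv ⊢
    exact IsArtinian.bijective_of_injective_endomorphism _
      (Function.Injective.of_comp (f := v) hv.1)
  have hu : IsUnit (γ' ∘ₗ β : Module.End Λ C) := (hC.2 _ _ hsum).resolve_left (hnot _)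
  obtain ⟨u, hu⟩ := hu
  have hunit : IsUnit (δ + γ' ∘ₗ β) := by
    rcases hC.2 ((-(↑u⁻¹ : Module.End Λ C)) * δ) (↑u⁻¹ * (δ + γ' ∘ₗ β))
      (by rw [← hu, mul_add, Units.inv_mul]; simp) with h | h
    · exact absurd h (hnot _)
    · simpa using h
  rw [Module.End.isUnit_iff] at hunit
  exact equiv_of_prod_equiv_of_bijective
    (e.trans (LinearEquiv.skewProd (LinearEquiv.refl Λ M') (LinearEquiv.refl Λ C) γ')) hunit

lemma exists_prod_equiv_sup (N₁ N₂ : Submodule Λ M) (h : Disjoint N₁ N₂) :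
    Nonempty ((N₁ × N₂) ≃ₗ[Λ] ↥(N₁ ⊔ N₂)) := by
  have hinj : Function.Injective (N₁.subtype.coprod N₂.subtype) := by
    rw [← LinearMap.ker_eq_bot, LinearMap.ker_coprod_of_disjoint_range]
    · simp
    · simpa using h
  refine ⟨(LinearEquiv.ofInjective _ hinj).trans (LinearEquiv.ofEq _ _ ?_)⟩
  simp [LinearMap.range_coprod]

/-- Induction on submodules along decompositions into direct sums. -/
lemma submodule_decomposition_induction [IsArtinian Λ M] {p : Submodule Λ M → Prop}
    (bot : p ⊥)
    (indec : ∀ N : Submodule Λ M, Nontrivial N →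
      (∀ N₁ N₂ : Submodule Λ N, IsCompl N₁ N₂ → N₁ = ⊥ ∨ N₂ = ⊥) → p N)
    (sup : ∀ N₁ N₂ : Submodule Λ M, Disjoint N₁ N₂ → p N₁ → p N₂ → p (N₁ ⊔ N₂))
    (N : Submodule Λ M) : p N := by
  induction N using WellFoundedLT.induction with
  | ind N ih =>
    by_cases h0 : N = ⊥
    · rwa [h0]
    by_cases h1 : ∀ N₁ N₂ : Submodule Λ N, IsCompl N₁ N₂ → N₁ = ⊥ ∨ N₂ = ⊥
    · exact indec N (Submodule.nontrivial_iff_ne_bot.2 h0) h1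
    push Not at h1
    obtain ⟨N₁, N₂, hc, hN₁, hN₂⟩ := h1
    have hlt : ∀ K L : Submodule Λ N, IsCompl K L → L ≠ ⊥ → K.map N.subtype < N := by
      intro K L hKL hL
      refine lt_of_le_of_ne (Submodule.map_subtype_le _ _) fun hK => hL ?_
      have hKt : K = ⊤ := by
        apply Submodule.map_injective_of_injective N.injective_subtype
        rw [hK]
        simp
      subst hKt
      simpa using hKL.inf_eq_bot
    have hsup : N₁.map N.subtype ⊔ N₂.map N.subtype = N := by
      rw [← Submodule.map_sup, hc.sup_eq_top]
      simp
    rw [← hsup]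
    refine sup _ _ ?_ (ih _ (hlt _ _ hc hN₂)) (ih _ (hlt _ _ hc.symm hN₁))
    rw [disjoint_iff, ← Submodule.map_inf _ N.injective_subtype, hc.inf_eq_bot, Submodule.map_bot]

end

section FiniteLength

variable [IsArtinianRing Λ] [IsNoetherianRing Λ]

/-- Induction on finitely generated modules along direct sum decompositions. -/
lemma module_decomposition_induction
    {p : ∀ (M : Type u) [AddCommGroup M] [Module Λ M] [Module.Finite Λ M], Prop}
    (equiv : ∀ (M N : Type u) [AddCommGroup M] [Module Λ M] [Module.Finite Λ M]
      [AddCommGroup N] [Module Λ N] [Module.Finite Λ N], (M ≃ₗ[Λ] N) → p M → p N)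
    (zero : ∀ (M : Type u) [AddCommGroup M] [Module Λ M] [Module.Finite Λ M] [Subsingleton M], p M)
    (loc : ∀ (M : Type u) [AddCommGroup M] [Module Λ M] [Module.Finite Λ M],
      HasLocalEnd Λ M → p M)
    (prod : ∀ (M N : Type u) [AddCommGroup M] [Module Λ M] [Module.Finite Λ M]
      [AddCommGroup N] [Module Λ N] [Module.Finite Λ N], p M → p N → p (M × N))
    (M : Type u) [AddCommGroup M] [Module Λ M] [Module.Finite Λ M] : p M := by
  have key : ∀ N : Submodule Λ M, p N := fun N => by
    induction N using submodule_decomposition_induction with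
    | bot => exact zero _
    | indec N h0 h => exact loc _ (hasLocalEnd_of_indecomposable h)
    | sup N₁ N₂ hd h₁ h₂ =>
      obtain ⟨e⟩ := exists_prod_equiv_sup N₁ N₂ hd
      exact equiv _ _ e (prod _ _ h₁ h₂)
  exact equiv _ _ Submodule.topEquiv (key ⊤)

lemma cancel_prod (C : Type u) [AddCommGroup C] [Module Λ C] [Module.Finite Λ C] :
    ∀ (M M' : Type u) [AddCommGroup M] [Module Λ M] [AddCommGroup M'] [Module Λ M'],
      ((M × C) ≃ₗ[Λ] (M' × C)) → Nonempty (M ≃ₗ[Λ] M') := by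
  apply module_decomposition_induction (Λ := Λ) (p := fun C _ _ _ =>
    ∀ (M M' : Type u) [AddCommGroup M] [Module Λ M] [AddCommGroup M'] [Module Λ M'],
      ((M × C) ≃ₗ[Λ] (M' × C)) → Nonempty (M ≃ₗ[Λ] M'))
  case equiv =>
    intro C D _ _ _ _ _ _ e h M M' _ _ _ _ f
    exact h M M' ((((LinearEquiv.refl Λ M).prodCongr e).trans f).trans
      ((LinearEquiv.refl Λ M').prodCongr e.symm))
  case zero =>
    intro C _ _ _ _ M M' _ _ _ _ f
    have : Unique C := ⟨⟨0⟩, fun _ => Subsingleton.elim _ _⟩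
    exact ⟨(LinearEquiv.prodUnique.symm.trans f).trans LinearEquiv.prodUnique⟩
  case loc =>
    intro C _ _ _ h M M' _ _ _ _ f
    exact h.cancel f
  case prod =>
    intro C D _ _ _ _ _ _ hC hD M M' _ _ _ _ f
    obtain ⟨g⟩ := hD (M × C) (M' × C)
      (((LinearEquiv.prodAssoc Λ M C D).trans f).trans (LinearEquiv.prodAssoc Λ M' C D).symm)
    exact hC M M' g

end FiniteLength

end KrullSchmidt

section StableClasses

/-- A finitely generated module. -/
structure FGMod (A : Type u) [Ring A] where
  /-- The underlying type. -/
  carrier : Type u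
  [addCommGroup : AddCommGroup carrier]
  [module : Module A carrier]
  [finite : Module.Finite A carrier]

instance (A : Type u) [Ring A] : CoeSort (FGMod A) (Type u) := ⟨FGMod.carrier⟩

attribute [instance] FGMod.addCommGroup FGMod.module FGMod.finite

variable {A : Type u} [Ring A]

/-- Two modules become isomorphic after adding finitely generated projective modules. -/
def StablyIso (A : Type u) [Ring A] (M N : Type u) [AddCommGroup M] [Module A M]
    [AddCommGroup N] [Module A N] : Prop :=
  ∃ P Q : FGMod A, Module.Projective A P ∧ Module.Projective A Q ∧
    Nonempty ((M × P) ≃ₗ[A] (N × Q))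

section

variable {M N K L : Type u} [AddCommGroup M] [Module A M] [AddCommGroup N] [Module A N]
  [AddCommGroup K] [Module A K] [AddCommGroup L] [Module A L]

lemma StablyIso.of_equiv (e : M ≃ₗ[A] N) : StablyIso A M N :=
  ⟨⟨PUnit⟩, ⟨PUnit⟩, inferInstanceAs (Module.Projective A PUnit.{u + 1}),
    inferInstanceAs (Module.Projective A PUnit.{u + 1}),
    ⟨e.prodCongr (LinearEquiv.refl A PUnit.{u + 1})⟩⟩

lemma StablyIso.symm (h : StablyIso A M N) : StablyIso A N M := by
  obtain ⟨P, Q, hP, hQ, ⟨e⟩⟩ := h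
  exact ⟨Q, P, hQ, hP, ⟨e.symm⟩⟩

/-- Interchange of the last two factors of a triple product. -/
def prodRightComm (A : Type u) [Ring A] (M N K : Type u) [AddCommGroup M] [Module A M]
    [AddCommGroup N] [Module A N] [AddCommGroup K] [Module A K] :
    ((M × N) × K) ≃ₗ[A] ((M × K) × N) :=
  ((LinearEquiv.prodAssoc A M N K).trans
    ((LinearEquiv.refl A M).prodCongr (LinearEquiv.prodComm A N K))).trans
      (LinearEquiv.prodAssoc A M K N).symm

lemma StablyIso.trans (h : StablyIso A M N) (h' : StablyIso A N K) : StablyIso A M K := by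
  obtain ⟨P, Q, hP, hQ, ⟨e⟩⟩ := h
  obtain ⟨P', Q', hP', hQ', ⟨e'⟩⟩ := h'
  refine ⟨⟨P × P'⟩, ⟨Q' × Q⟩, inferInstanceAs (Module.Projective A (P × P')),
    inferInstanceAs (Module.Projective A (Q' × Q)), ⟨?_⟩⟩
  exact ((((LinearEquiv.prodAssoc A M P P').symm.trans
    (e.prodCongr (LinearEquiv.refl A P'))).trans (prodRightComm A N Q P')).trans
      (e'.prodCongr (LinearEquiv.refl A Q))).trans (LinearEquiv.prodAssoc A K Q' Q)

lemma StablyIso.prod (h : StablyIso A M N) (h' : StablyIso A K L) :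
    StablyIso A (M × K) (N × L) := by
  obtain ⟨P, Q, hP, hQ, ⟨e⟩⟩ := h
  obtain ⟨P', Q', hP', hQ', ⟨e'⟩⟩ := h'
  refine ⟨⟨P × P'⟩, ⟨Q × Q'⟩, inferInstanceAs (Module.Projective A (P × P')),
    inferInstanceAs (Module.Projective A (Q × Q')), ⟨?_⟩⟩
  exact ((LinearEquiv.prodProdProdComm A M K P P').trans (e.prodCongr e')).trans
    (LinearEquiv.prodProdProdComm A N Q L Q')

end

instance stableSetoid (A : Type u) [Ring A] : Setoid (FGMod A) where
  r M N := StablyIso A M N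
  iseqv := ⟨fun M => .of_equiv (LinearEquiv.refl A M), .symm, .trans⟩

/-- Stable isomorphism classes of finitely generated modules. -/
def StableClass (A : Type u) [Ring A] : Type (u + 1) := Quotient (stableSetoid A)

/-- The stable isomorphism class of a finitely generated module. -/
def stableClass (A : Type u) [Ring A] (M : Type u) [AddCommGroup M] [Module A M]
    [Module.Finite A M] : StableClass A :=
  Quotient.mk (stableSetoid A) ⟨M⟩

lemma StableClass.exists_rep (s : StableClass A) : ∃ M : FGMod A, stableClass A M = s :=
  Quotient.exists_rep s

section

variable {M N : Type u} [AddCommGroup M] [Module A M] [Module.Finite A M]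
  [AddCommGroup N] [Module A N] [Module.Finite A N]

lemma stableClass_eq_iff : stableClass A M = stableClass A N ↔ StablyIso A M N :=
  Quotient.eq (r := stableSetoid A)

lemma stableClass_congr (e : M ≃ₗ[A] N) : stableClass A M = stableClass A N :=
  stableClass_eq_iff.2 (.of_equiv e)

end

instance : Zero (StableClass A) := ⟨stableClass A PUnit⟩

instance : Add (StableClass A) :=
  ⟨Quotient.map₂ (fun M N => ⟨M × N⟩) fun _ _ h _ _ h' => StablyIso.prod h h'⟩

instance : AddCommMonoid (StableClass A) where
  nsmul := nsmulRec
  zero_add := by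
    rintro ⟨M⟩
    exact stableClass_congr (LinearEquiv.uniqueProd (M₂ := PUnit.{u + 1}))
  add_zero := by
    rintro ⟨M⟩
    exact stableClass_congr (LinearEquiv.prodUnique (M₂ := PUnit.{u + 1}))
  add_assoc := by
    rintro ⟨M⟩ ⟨N⟩ ⟨K⟩
    exact stableClass_congr (LinearEquiv.prodAssoc A M N K)
  add_comm := by
    rintro ⟨M⟩ ⟨N⟩
    exact stableClass_congr (LinearEquiv.prodComm A M N)

section

variable (M N : Type u) [AddCommGroup M] [Module A M] [Module.Finite A M]
  [AddCommGroup N] [Module A N] [Module.Finite A N]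

lemma stableClass_prod : stableClass A (M × N) = stableClass A M + stableClass A N := rfl

lemma stableClass_eq_zero_of_projective [Module.Projective A M] : stableClass A M = 0 :=
  stableClass_eq_iff.2 ⟨⟨PUnit⟩, ⟨M⟩, inferInstanceAs (Module.Projective A PUnit.{u + 1}), ‹_›,
    ⟨LinearEquiv.prodComm A M PUnit.{u + 1}⟩⟩

end

instance [IsArtinianRing A] [IsNoetherianRing A] : IsCancelAdd (StableClass A) := by
  suffices IsRightCancelAdd (StableClass A) from
    AddCommMagma.IsRightCancelAdd.toIsCancelAdd (StableClass A)
  refine ⟨fun c a b h => ?_⟩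
  obtain ⟨C, rfl⟩ := c.exists_rep
  obtain ⟨M, rfl⟩ := a.exists_rep
  obtain ⟨N, rfl⟩ := b.exists_rep
  simp only [← stableClass_prod] at h
  obtain ⟨P, Q, hP, hQ, ⟨e⟩⟩ := stableClass_eq_iff.1 h
  obtain ⟨f⟩ := cancel_prod C (M × P) (N × Q)
    (((prodRightComm A M P C).trans e).trans (prodRightComm A N C Q))
  exact stableClass_eq_iff.2 ⟨P, Q, hP, hQ, ⟨f⟩⟩

/-- `K` is the kernel of a surjection from a finitely generated projective module onto `M`. -/
def IsSyz (A : Type u) [Ring A] (K M : Type u) [AddCommGroup K] [Module A K]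
    [AddCommGroup M] [Module A M] : Prop :=
  ∃ (P : FGMod A) (j : K →ₗ[A] P) (g : P →ₗ[A] M), Module.Projective A P ∧
    Function.Injective j ∧ Function.Exact j g ∧ Function.Surjective g

section

variable {M N K L P Q : Type u} [AddCommGroup M] [Module A M] [AddCommGroup N] [Module A N]
  [AddCommGroup K] [Module A K] [AddCommGroup L] [Module A L]
  [AddCommGroup P] [Module A P] [AddCommGroup Q] [Module A Q]

lemma ker_prod_equiv_ker_coprod [Module.Projective A Q] (g : P →ₗ[A] M) (h : Q →ₗ[A] M)
    (hg : Function.Surjective g) :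
    Nonempty (LinearMap.ker (g.coprod h) ≃ₗ[A] (LinearMap.ker g × Q)) := by
  obtain ⟨s, hs⟩ := Module.projective_lifting_property g h hg
  have hs' : ∀ q, g (s q) = h q := LinearMap.congr_fun hs
  refine ⟨LinearEquiv.ofBijective
    (((LinearMap.fst A P Q + s ∘ₗ LinearMap.snd A P Q).restrict
      (p := LinearMap.ker (g.coprod h)) (q := LinearMap.ker g) (fun x hx => by
        simpa [hs'] using hx)).prod
      (LinearMap.snd A P Q ∘ₗ (LinearMap.ker (g.coprod h)).subtype)) ⟨?_, ?_⟩⟩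
  · rw [injective_iff_map_eq_zero]
    rintro ⟨⟨p, q⟩, hx⟩ h0
    have h1 : p + s q = 0 := congrArg (fun z => (z.1 : P)) h0
    have h2 : q = 0 := congrArg Prod.snd h0
    subst h2
    simpa using h1
  · rintro ⟨⟨p, hp⟩, q⟩
    rw [LinearMap.mem_ker] at hp
    refine ⟨⟨(p - s q, q), by simp [hp, hs']⟩, ?_⟩
    ext <;> simp

/-- Schanuel's lemma. -/
lemma schanuel [Module.Projective A P] [Module.Projective A Q] (g : P →ₗ[A] M) (h : Q →ₗ[A] M)
    (hg : Function.Surjective g) (hh : Function.Surjective h) :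
    Nonempty ((LinearMap.ker g × Q) ≃ₗ[A] (LinearMap.ker h × P)) := by
  obtain ⟨e⟩ := ker_prod_equiv_ker_coprod g h hg
  obtain ⟨f⟩ := ker_prod_equiv_ker_coprod h g hh
  have hmap : (LinearMap.ker (g.coprod h)).map (LinearEquiv.prodComm A P Q).toLinearMap =
      LinearMap.ker (h.coprod g) := by
    ext ⟨q, p⟩
    simp [add_comm]
  exact ⟨(e.symm.trans ((LinearEquiv.prodComm A P Q).ofSubmodules _ _ hmap)).trans f⟩

/-- The injection in a left exact sequence identifies its source with the kernel. -/
lemma equiv_ker_of_exact {j : K →ₗ[A] P} {g : P →ₗ[A] M} (hj : Function.Injective j)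
    (h : Function.Exact j g) : Nonempty (K ≃ₗ[A] LinearMap.ker g) :=
  ⟨(LinearEquiv.ofInjective j hj).trans (LinearEquiv.ofEq _ _ h.linearMap_ker_eq.symm)⟩

lemma IsSyz.stablyIso (h : IsSyz A K M) (h' : IsSyz A L M) : StablyIso A K L := by
  obtain ⟨P, j, g, hP, hj, hjg, hg⟩ := h
  obtain ⟨Q, j', g', hQ, hj', hjg', hg'⟩ := h'
  obtain ⟨e⟩ := equiv_ker_of_exact hj hjg
  obtain ⟨f⟩ := equiv_ker_of_exact hj' hjg'
  obtain ⟨s⟩ := schanuel g g' hg hg'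
  exact ⟨Q, P, hQ, hP, ⟨((e.prodCongr (LinearEquiv.refl A Q)).trans s).trans
    (f.symm.prodCongr (LinearEquiv.refl A P))⟩⟩

lemma IsSyz.prod (h : IsSyz A K M) (h' : IsSyz A L N) : IsSyz A (K × L) (M × N) := by
  obtain ⟨P, j, g, hP, hj, hjg, hg⟩ := h
  obtain ⟨Q, j', g', hQ, hj', hjg', hg'⟩ := h'
  refine ⟨⟨P × Q⟩, j.prodMap j', g.prodMap g', inferInstanceAs (Module.Projective A (P × Q)),
    hj.prodMap hj', ?_, hg.prodMap hg'⟩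
  rintro ⟨p, q⟩
  have := hjg p
  have := hjg' q
  simp_all

lemma IsSyz.of_equiv (h : IsSyz A K M) (e : M ≃ₗ[A] N) : IsSyz A K N := by
  obtain ⟨P, j, g, hP, hj, hjg, hg⟩ := h
  exact ⟨P, j, e.toLinearMap ∘ₗ g, hP, hj, fun p => by simpa using hjg p,
    e.surjective.comp hg⟩

lemma isSyz_punit [Module.Finite A P] [Module.Projective A P] :
    IsSyz A (PUnit.{u + 1}) P :=
  ⟨⟨P⟩, 0, LinearMap.id, ‹_›, Function.injective_of_subsingleton _,
    fun p => by simp [eq_comm], Function.surjective_id⟩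

lemma IsSyz.stablyIso_of_stablyIso (h : IsSyz A K M) (h' : IsSyz A L N) (hMN : StablyIso A M N) :
    StablyIso A K L := by
  obtain ⟨P, Q, hP, hQ, ⟨e⟩⟩ := hMN
  have h1 : IsSyz A (K × PUnit.{u + 1}) (N × Q) := (h.prod isSyz_punit).of_equiv e
  have h2 : IsSyz A (L × PUnit.{u + 1}) (N × Q) := h'.prod isSyz_punit
  exact (StablyIso.of_equiv LinearEquiv.prodUnique.symm).trans
    ((h1.stablyIso h2).trans (.of_equiv LinearEquiv.prodUnique))

end

variable [IsNoetherianRing A]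

lemma exists_isSyz (M : Type u) [AddCommGroup M] [Module A M] [Module.Finite A M] :
    ∃ K : FGMod A, IsSyz A K M := by
  obtain ⟨n, f, hf⟩ := Module.Finite.exists_fin' A M
  exact ⟨⟨LinearMap.ker f⟩, ⟨Fin n → A⟩, (LinearMap.ker f).subtype, f,
    inferInstanceAs (Module.Projective A (Fin n → A)), Subtype.val_injective,
    f.exact_subtype_ker_map, hf⟩

/-- The syzygy operator on stable isomorphism classes. -/
noncomputable def syzygy (A : Type u) [Ring A] [IsNoetherianRing A] :
    StableClass A →+ StableClass A where
  toFun := Quotient.map (fun M => (exists_isSyz M).choose) fun M N h =>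
    (exists_isSyz M).choose_spec.stablyIso_of_stablyIso (exists_isSyz N).choose_spec h
  map_zero' := stableClass_eq_iff.2
    ((exists_isSyz (A := A) PUnit).choose_spec.stablyIso isSyz_punit)
  map_add' := by
    rintro ⟨M⟩ ⟨N⟩
    exact stableClass_eq_iff.2 ((exists_isSyz (M × N)).choose_spec.stablyIso
      ((exists_isSyz M).choose_spec.prod (exists_isSyz N).choose_spec))

lemma syzygy_stableClass {K M : Type u} [AddCommGroup M] [Module A M] [Module.Finite A M]
    [AddCommGroup K] [Module A K] [Module.Finite A K] (h : IsSyz A K M) :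
    syzygy A (stableClass A M) = stableClass A K :=
  stableClass_eq_iff.2 ((exists_isSyz M).choose_spec.stablyIso h)

end StableClasses
section ProjectiveDimension

open CategoryTheory

variable {A : Type u} [Ring A]

/-- The projective dimension of `M` is less than `d`. -/
def PdLT (A : Type u) [Ring A] (M : Type u) [AddCommGroup M] [Module A M] (d : ℕ) : Prop :=
  HasProjectiveDimensionLT (ModuleCat.of A M) d

/-- There is a short exact sequence `0 → X → Y → Z → 0`. -/
def IsShortExact (A : Type u) [Ring A] (X Y Z : Type u) [AddCommGroup X] [Module A X]
    [AddCommGroup Y] [Module A Y] [AddCommGroup Z] [Module A Z] : Prop :=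
  ∃ (i : X →ₗ[A] Y) (q : Y →ₗ[A] Z), Function.Injective i ∧ Function.Exact i q ∧
    Function.Surjective q

variable {X Y Z M N K P : Type u} [AddCommGroup X] [Module A X] [AddCommGroup Y] [Module A Y]
  [AddCommGroup Z] [Module A Z] [AddCommGroup M] [Module A M] [AddCommGroup N] [Module A N]
  [AddCommGroup K] [Module A K] [AddCommGroup P] [Module A P] {d : ℕ}

lemma PdLT.retract (h : PdLT A M d) (hN : IsRetractOf A N M) : PdLT A N d := by
  obtain ⟨i, p, hip⟩ := hN
  have : HasProjectiveDimensionLT (ModuleCat.of A M) d := h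
  exact Retract.hasProjectiveDimensionLT
    (⟨ModuleCat.ofHom i, ModuleCat.ofHom p, by ext x; simp [hip]⟩ :
      Retract (ModuleCat.of A N) (ModuleCat.of A M)) d

lemma PdLT.mono (h : PdLT A M d) {e : ℕ} (hde : d ≤ e) : PdLT A M e :=
  have : HasProjectiveDimensionLT (ModuleCat.of A M) d := h
  hasProjectiveDimensionLT_of_ge _ d e hde

lemma pdLT_one_iff : PdLT A M 1 ↔ Module.Projective A M :=
  projective_iff_hasProjectiveDimensionLT_one.symm.trans (IsProjective.iff_projective M).symm

lemma pdLT_succ_of_projective [Module.Projective A M] : PdLT A M (d + 1) :=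
  (pdLT_one_iff.2 ‹_›).mono (by omega)

lemma shortExact_ofHom {i : X →ₗ[A] Y} {q : Y →ₗ[A] Z} (hi : Function.Injective i)
    (h : Function.Exact i q) (hq : Function.Surjective q) :
    (ShortComplex.mk (ModuleCat.ofHom i) (ModuleCat.ofHom q)
      (by ext x; exact h.apply_apply_eq_zero x)).ShortExact where
  exact := (ShortComplex.ShortExact.moduleCat_exact_iff_function_exact _).2 h
  mono_f := (ModuleCat.mono_iff_injective _).2 hi
  epi_g := (ModuleCat.epi_iff_surjective _).2 hq

lemma IsShortExact.pdLT_left (h : IsShortExact A X Y Z) (hY : PdLT A Y d)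
    (hZ : PdLT A Z (d + 1)) : PdLT A X d := by
  obtain ⟨i, q, hi, hiq, hq⟩ := h
  exact (shortExact_ofHom hi hiq hq).hasProjectiveDimensionLT_X₁ d hY hZ

lemma IsShortExact.pdLT_mid (h : IsShortExact A X Y Z) (hX : PdLT A X d) (hZ : PdLT A Z d) :
    PdLT A Y d := by
  obtain ⟨i, q, hi, hiq, hq⟩ := h
  exact (shortExact_ofHom hi hiq hq).hasProjectiveDimensionLT_X₂ d hX hZ

lemma IsShortExact.pdLT_right (h : IsShortExact A X Y Z) (hX : PdLT A X d)
    (hY : PdLT A Y (d + 1)) : PdLT A Z (d + 1) := by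
  obtain ⟨i, q, hi, hiq, hq⟩ := h
  exact (shortExact_ofHom hi hiq hq).hasProjectiveDimensionLT_X₃ d hX hY

lemma PdLT.prod (hM : PdLT A M d) (hN : PdLT A N d) : PdLT A (M × N) d :=
  IsShortExact.pdLT_mid ⟨LinearMap.inl A M N, LinearMap.snd A M N, LinearMap.inl_injective,
    Function.Exact.inl_snd, LinearMap.snd_surjective⟩ hM hN

lemma PdLT.of_equiv (hM : PdLT A M d) (e : M ≃ₗ[A] N) : PdLT A N d :=
  hM.retract (.of_equiv e.symm)

lemma PdLT.of_stablyIso (hM : PdLT A M (d + 1)) (h : StablyIso A M N) : PdLT A N (d + 1) := by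
  obtain ⟨P, Q, hP, hQ, ⟨e⟩⟩ := h
  exact ((hM.prod pdLT_succ_of_projective).of_equiv e).retract .inl

lemma IsSyz.pdLT_iff (h : IsSyz A K M) : PdLT A M (d + 2) ↔ PdLT A K (d + 1) := by
  obtain ⟨P, j, g, hP, hj, hjg, hg⟩ := h
  have hs : IsShortExact A K P M := ⟨j, g, hj, hjg, hg⟩
  exact ⟨fun h => hs.pdLT_left pdLT_succ_of_projective h,
    fun h => hs.pdLT_right h pdLT_succ_of_projective⟩

open Abelian in
/-- If `0 → X → X × P → Z → 0` is exact with `P` projective, `Z` of finite projective dimension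
and nilpotent component `X → X`, then `X` has finite projective dimension. -/
lemma pdLT_of_nilpotent [Module.Projective A P] {φ : X →ₗ[A] X × P} {q : X × P →ₗ[A] Z}
    (hφ : Function.Injective φ) (hφq : Function.Exact φ q) (hq : Function.Surjective q)
    (hnil : IsNilpotent (LinearMap.fst A X P ∘ₗ φ : Module.End A X)) (hZ : PdLT A Z (d + 2)) :
    PdLT A X (d + 1) := by
  have hS := shortExact_ofHom hφ hφq hq
  have : HasProjectiveDimensionLT (ModuleCat.of A Z) (d + 2) := hZ
  have : HasProjectiveDimensionLT (ModuleCat.of A P) 1 := pdLT_one_iff.2 ‹_›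
  obtain ⟨n, hn⟩ := hnil
  set f : Module.End A X := LinearMap.fst A X P ∘ₗ φ with hf
  refine HasProjectiveDimensionLT.mk fun i hi W e => ?_
  have step : ∀ e : Ext (ModuleCat.of A X) W i, ∃ e' : Ext (ModuleCat.of A X) W i,
      e = (Ext.mk₀ (ModuleCat.ofHom f)).comp e' (zero_add i) := by
    intro e
    obtain ⟨x, hx⟩ := Ext.contravariant_sequence_exact₁ hS _ e (n₁ := 1 + i) rfl
      (Ext.eq_zero_of_hasProjectiveDimensionLT _ (d + 2) (by omega))
    refine ⟨(Ext.mk₀ (ModuleCat.ofHom (LinearMap.inl A X P))).comp x (zero_add i), ?_⟩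
    have hid : (𝟙 (ModuleCat.of A (X × P))) =
        ModuleCat.ofHom (LinearMap.fst A X P) ≫ ModuleCat.ofHom (LinearMap.inl A X P) +
        ModuleCat.ofHom (LinearMap.snd A X P) ≫ ModuleCat.ofHom (LinearMap.inr A X P) := by
      ext x <;> simp
    have hx2 : x = (Ext.mk₀ (ModuleCat.ofHom (LinearMap.fst A X P))).comp
        ((Ext.mk₀ (ModuleCat.ofHom (LinearMap.inl A X P))).comp x (zero_add i))
        (zero_add i) := by
      have h0 : (Ext.mk₀ (ModuleCat.ofHom (LinearMap.inr A X P))).comp x (zero_add i) = 0 :=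
        Ext.eq_zero_of_hasProjectiveDimensionLT _ 1 (by omega)
      conv_lhs => rw [← Ext.mk₀_id_comp x, hid, Ext.mk₀_add, Ext.add_comp,
        ← Ext.mk₀_comp_mk₀_assoc, ← Ext.mk₀_comp_mk₀_assoc, h0, Ext.comp_zero, add_zero]
    rw [← hx]
    conv_lhs => rw [hx2]
    dsimp only
    rw [Ext.mk₀_comp_mk₀_assoc]
    rfl
  have iter : ∀ m : ℕ, ∀ e : Ext (ModuleCat.of A X) W i, ∃ e' : Ext (ModuleCat.of A X) W i,
      e = (Ext.mk₀ (ModuleCat.ofHom (f ^ m))).comp e' (zero_add i) := by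
    intro m
    induction m with
    | zero => exact fun e => ⟨e, (Ext.mk₀_id_comp e).symm⟩
    | succ m ih =>
      intro e
      obtain ⟨e₁, rfl⟩ := ih e
      obtain ⟨e₂, rfl⟩ := step e₁
      refine ⟨e₂, ?_⟩
      rw [Ext.mk₀_comp_mk₀_assoc, pow_succ']
      rfl
  obtain ⟨e', rfl⟩ := iter n e
  have h0 : Ext.mk₀ (ModuleCat.ofHom (f ^ n)) = 0 := by
    rw [hn]
    exact Ext.mk₀_zero ..
  rw [h0, Ext.zero_comp]

/-- Splitting off the part of `X` on which the component `X → X` is bijective. -/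
lemma exists_nilpotent_part [IsNoetherian A X] [IsArtinian A X] (φ : X →ₗ[A] X × P)
    (q : X × P →ₗ[A] Z) (hφ : Function.Injective φ) (hφq : Function.Exact φ q)
    (hq : Function.Surjective q) :
    ∃ (X' : Submodule A X) (ψ : X' →ₗ[A] X' × P) (r : X' × P →ₗ[A] Z), IsRetractOf A X' X ∧
      Function.Injective ψ ∧ Function.Exact ψ r ∧ Function.Surjective r ∧
      IsNilpotent (LinearMap.fst A X' P ∘ₗ ψ : Module.End A X') := by
  let f : Module.End A X := LinearMap.fst A X P ∘ₗ φ
  obtain ⟨n, hn, hn1⟩ := ((LinearMap.eventually_isCompl_ker_pow_range_pow f).and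
    (Filter.eventually_ge_atTop 1)).exists
  have hker : ∀ x, f x ∈ LinearMap.ker (f ^ n) → x ∈ LinearMap.ker (f ^ n) := by
    intro x hx
    have h1 : (f ^ n) x ∈ LinearMap.ker (f ^ n) := by
      obtain ⟨k, rfl⟩ := Nat.exists_eq_add_of_le hn1
      rw [LinearMap.mem_ker] at hx ⊢
      rw [← Module.End.mul_apply, ← pow_add,
        show 1 + k + (1 + k) = k + ((1 + k) + 1) by ring, pow_add _ k, Module.End.mul_apply,
        pow_succ, Module.End.mul_apply, hx, map_zero]
    have h2 : (f ^ n) x ∈ LinearMap.ker (f ^ n) ⊓ LinearMap.range (f ^ n) :=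
      ⟨h1, LinearMap.mem_range_self _ _⟩
    rw [hn.inf_eq_bot] at h2
    exact h2
  have hf : ∀ x ∈ LinearMap.ker (f ^ n), f x ∈ LinearMap.ker (f ^ n) := by
    intro x hx
    rw [LinearMap.mem_ker] at hx ⊢
    rw [← Module.End.mul_apply, ← pow_succ, pow_succ', Module.End.mul_apply, hx, map_zero]
  have hφf : ∀ x, φ x = (f x, (φ x).2) := fun x => rfl
  refine ⟨LinearMap.ker (f ^ n), (f.restrict hf).prod
    (LinearMap.snd A X P ∘ₗ φ ∘ₗ (LinearMap.ker (f ^ n)).subtype),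
    q ∘ₗ (LinearMap.ker (f ^ n)).subtype.prodMap LinearMap.id, ?_, ?_, ?_, ?_, n, ?_⟩
  · exact ⟨(LinearMap.ker (f ^ n)).subtype, Submodule.projectionOnto _ _ hn,
      fun y => Submodule.projectionOnto_apply_left hn y⟩
  · intro x y hxy
    have h1 : f x = f y := congrArg (fun z => (z.1 : X)) hxy
    have h2 : (φ x).2 = (φ y).2 := congrArg (fun z => (z.2 : P)) hxy
    exact Subtype.ext (hφ (Prod.ext h1 h2))
  · rintro ⟨⟨k, hk⟩, p⟩
    constructor
    · intro h
      obtain ⟨x, hx⟩ := (hφq (k, p)).1 h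
      have h1 : f x = k := congrArg Prod.fst hx
      refine ⟨⟨x, hker x (by rwa [h1])⟩, ?_⟩
      exact Prod.ext (Subtype.ext h1) (congrArg (fun z => (z.2 : P)) hx :)
    · rintro ⟨x, hx⟩
      refine (hφq (k, p)).2 ⟨x, ?_⟩
      exact Prod.ext (congrArg (fun z => (z.1 : X)) hx) (congrArg (fun z => z.2) hx)
  · intro z
    obtain ⟨⟨x, p⟩, rfl⟩ := hq z
    have hx : x ∈ LinearMap.ker (f ^ n) ⊔ LinearMap.range (f ^ n) := by
      rw [hn.sup_eq_top]
      trivial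
    obtain ⟨k, hk, r, ⟨y, rfl⟩, rfl⟩ := Submodule.mem_sup.1 hx
    obtain ⟨m, rfl⟩ := Nat.exists_eq_add_of_le hn1
    refine ⟨(⟨k, hk⟩, p - (φ ((f ^ m) y)).2), ?_⟩
    have h1 : (f ^ (1 + m)) y = f ((f ^ m) y) := by
      rw [pow_add, pow_one, Module.End.mul_apply]
    have h2 : ((k + (f ^ (1 + m)) y, p) : X × P) =
        (k, p - (φ ((f ^ m) y)).2) + φ ((f ^ m) y) := by
      rw [hφf ((f ^ m) y), h1]
      simp
    rw [h2, map_add, hφq.apply_apply_eq_zero, add_zero]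
    rfl
  · have hrestr : (LinearMap.fst A (LinearMap.ker (f ^ n)) P ∘ₗ (f.restrict hf).prod
        (LinearMap.snd A X P ∘ₗ φ ∘ₗ (LinearMap.ker (f ^ n)).subtype)) = f.restrict hf := rfl
    rw [hrestr, Module.End.pow_restrict]
    ext ⟨x, hx⟩
    simpa using hx

/-- Horseshoe lemma. -/
lemma IsShortExact.exists_syz [IsNoetherianRing A] [Module.Finite A X] [Module.Finite A Y]
    (h : IsShortExact A X Y Z) : ∃ X' Y' Z' : FGMod A, IsShortExact A X' Y' Z' ∧
      IsSyz A X' X ∧ IsSyz A Y' Y ∧ IsSyz A Z' Z := by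
  obtain ⟨i, q, hi, hiq, hq⟩ := h
  obtain ⟨n, a, ha⟩ := Module.Finite.exists_fin' A X
  obtain ⟨m, b, hb⟩ := Module.Finite.exists_fin' A Y
  have hc : Function.Surjective ((i ∘ₗ a).coprod b) := fun y => by
    obtain ⟨z, rfl⟩ := hb y
    exact ⟨(0, z), by simp⟩
  have hqi : ∀ x, q (i x) = 0 := hiq.apply_apply_eq_zero
  refine ⟨⟨LinearMap.ker a⟩, ⟨LinearMap.ker ((i ∘ₗ a).coprod b)⟩, ⟨LinearMap.ker (q ∘ₗ b)⟩,
    ⟨(LinearMap.inl A (Fin n → A) (Fin m → A)).restrict fun x hx => ?_,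
      (LinearMap.snd A (Fin n → A) (Fin m → A)).restrict fun x hx => ?_, ?_, ?_, ?_⟩,
    ⟨⟨Fin n → A⟩, (LinearMap.ker a).subtype, a,
      inferInstanceAs (Module.Projective A (Fin n → A)), Subtype.val_injective,
      a.exact_subtype_ker_map, ha⟩,
    ⟨⟨(Fin n → A) × (Fin m → A)⟩, (LinearMap.ker ((i ∘ₗ a).coprod b)).subtype,
      (i ∘ₗ a).coprod b,
      inferInstanceAs (Module.Projective A ((Fin n → A) × (Fin m → A))), Subtype.val_injective,
      LinearMap.exact_subtype_ker_map _, hc⟩,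
    ⟨⟨Fin m → A⟩, (LinearMap.ker (q ∘ₗ b)).subtype, q ∘ₗ b,
      inferInstanceAs (Module.Projective A (Fin m → A)), Subtype.val_injective,
      LinearMap.exact_subtype_ker_map _, hq.comp hb⟩⟩
  · simp only [LinearMap.mem_ker] at hx
    simp [hx]
  · simp only [LinearMap.mem_ker, LinearMap.coprod_apply, LinearMap.comp_apply] at hx ⊢
    rw [LinearMap.snd_apply, eq_neg_of_add_eq_zero_right hx, map_neg, hqi, neg_zero]
  · intro x y hxy
    exact Subtype.ext (congrArg (fun z => z.1.1) hxy)
  · rintro ⟨⟨x, y⟩, hxy⟩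
    constructor
    · intro h
      have hy : y = 0 := congrArg Subtype.val h
      subst hy
      refine ⟨⟨x, ?_⟩, rfl⟩
      rw [LinearMap.mem_ker]
      apply hi
      simpa using hxy
    · rintro ⟨x', hx'⟩
      exact Subtype.ext (congrArg (fun z => z.1.2) hx').symm
  · rintro ⟨y, hy⟩
    obtain ⟨x, hx⟩ := (hiq (b y)).1 hy
    obtain ⟨x', hx'⟩ := ha (-x)
    exact ⟨⟨(x', y), by simp [hx', hx]⟩, rfl⟩

end ProjectiveDimension

section IterateStable

/-- Under iteration of an endomorphism, equality of elements of a finitely generated submonoid is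
detected after a bounded number of steps. -/
lemma exists_iterate_stable {S : Type*} [AddCommMonoid S] [IsCancelAdd S] (σ : S →+ S)
    {U : Set S} (hU : U.Finite) : ∃ n : ℕ, ∀ x ∈ AddSubmonoid.closure U,
      ∀ y ∈ AddSubmonoid.closure U, ∀ N : ℕ, σ^[N] x = σ^[N] y → σ^[n] x = σ^[n] y := by
  let G := Algebra.GrothendieckAddGroup S
  let ι : S →+ G := Algebra.GrothendieckAddGroup.of
  have hι : Function.Injective ι := Algebra.GrothendieckAddGroup.of_injective
  let L : G →+ G := Algebra.GrothendieckAddGroup.lift (ι.comp σ)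
  have hL : ∀ s, L (ι s) = ι (σ s) := fun s =>
    DFunLike.congr_fun (Algebra.GrothendieckAddGroup.lift.symm_apply_apply (ι.comp σ)) s
  have hLn : ∀ (n : ℕ) (s : S), (L.toIntLinearMap ^ n) (ι s) = ι (σ^[n] s) := by
    intro n
    induction n with
    | zero => exact fun s => rfl
    | succ n ih =>
      intro s
      rw [pow_succ, Module.End.mul_apply, Function.iterate_succ_apply, ← ih]
      exact congrArg _ (hL s)
  let V : Submodule ℤ G := Submodule.span ℤ (ι '' U)
  have hV : ∀ x ∈ AddSubmonoid.closure U, ι x ∈ V := by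
    intro x hx
    have h : AddSubmonoid.closure U ≤ V.toAddSubmonoid.comap ι :=
      AddSubmonoid.closure_le.2 fun u hu => Submodule.subset_span ⟨u, hu, rfl⟩
    exact h hx
  have : Module.Finite ℤ V := Module.Finite.span_of_finite ℤ (hU.image ι)
  have : IsNoetherian ℤ V := isNoetherian_of_isNoetherianRing_of_finite ℤ V
  let c : ℕ →o Submodule ℤ V :=
    ⟨fun n => (LinearMap.ker (L.toIntLinearMap ^ n)).comap V.subtype, fun m n hmn =>
      Submodule.comap_mono (by
        obtain ⟨k, rfl⟩ := Nat.exists_eq_add_of_le hmn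
        intro z hz
        rw [LinearMap.mem_ker] at hz ⊢
        rw [add_comm, pow_add, Module.End.mul_apply, hz, map_zero])⟩
  obtain ⟨n, hn⟩ := monotone_stabilizes_iff_noetherian.2 this c
  refine ⟨n, fun x hx y hy N h => ?_⟩
  have key : ∀ k, σ^[k] x = σ^[k] y ↔ (⟨ι x - ι y, V.sub_mem (hV x hx) (hV y hy)⟩ : V) ∈ c k := by
    intro k
    change _ ↔ (L.toIntLinearMap ^ k) (ι x - ι y) = 0
    rw [map_sub, hLn, hLn, sub_eq_zero, hι.eq_iff]
  rw [key] at h ⊢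
  rcases le_total n N with hnN | hnN
  · rw [hn N hnN]
    exact h
  · exact c.monotone hnN h

lemma iterate_mem_closure {S : Type*} [AddCommMonoid S] (σ : S →+ S) {U : Set S} (n : ℕ) {x : S}
    (hx : x ∈ AddSubmonoid.closure U) : σ^[n] x ∈ AddSubmonoid.closure (σ^[n] '' U) := by
  induction n with
  | zero => simpa using hx
  | succ n ih =>
    rw [Function.iterate_succ', Set.image_comp, Function.comp_apply, ← AddMonoidHom.map_mclosure]
    exact ⟨_, ih, rfl⟩

end IterateStable

section IgusaTodorov

variable {A : Type u} [Ring A]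

/-- The stable class of every indecomposable direct summand of `M` belongs to `T`. -/
def SummandsIn (T : Set (StableClass A)) (M : Type u) [AddCommGroup M] [Module A M] : Prop :=
  ∀ (Y : Type u) [AddCommGroup Y] [Module A Y] [Module.Finite A Y],
    HasLocalEnd A Y → IsRetractOf A Y M → stableClass A Y ∈ T

section

variable {T T' : Set (StableClass A)} {M N : Type u} [AddCommGroup M] [Module A M]
  [AddCommGroup N] [Module A N]

lemma SummandsIn.retract (h : SummandsIn T M) (hN : IsRetractOf A N M) : SummandsIn T N :=
  fun Y _ _ _ hY hr => h Y hY (hr.trans hN)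

lemma SummandsIn.mono (h : SummandsIn T M) (hT : T ⊆ T') : SummandsIn T' M :=
  fun Y _ _ _ hY hr => hT (h Y hY hr)

lemma summandsIn_of_projective [Module.Projective A M] (h0 : 0 ∈ T) : SummandsIn T M := by
  intro Y _ _ _ _ hr
  have : Module.Projective A Y := hr.projective
  rwa [stableClass_eq_zero_of_projective]

variable [IsArtinianRing A]

lemma SummandsIn.prod (h : SummandsIn T M) (h' : SummandsIn T N) : SummandsIn T (M × N) :=
  fun Y _ _ _ hY hr => (hY.retract_prod hr).elim (h Y hY) (h' Y hY)

lemma SummandsIn.of_stablyIso (h : SummandsIn T M) (h0 : 0 ∈ T) (hMN : StablyIso A M N) :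
    SummandsIn T N := by
  obtain ⟨P, Q, hP, hQ, ⟨e⟩⟩ := hMN
  exact (h.prod (summandsIn_of_projective (M := P) h0)).retract
    (IsRetractOf.inl.trans (.of_equiv e.symm))

variable [IsNoetherianRing A]

lemma exists_finite_summandsIn (M : Type u) [AddCommGroup M] [Module A M] [Module.Finite A M] :
    ∃ T : Set (StableClass A), T.Finite ∧ SummandsIn T M := by
  revert M
  apply module_decomposition_induction (Λ := A)
    (p := fun M _ _ _ => ∃ T : Set (StableClass A), T.Finite ∧ SummandsIn T M)
  case equiv =>
    intro M N _ _ _ _ _ _ e ⟨T, hT, h⟩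
    exact ⟨T, hT, h.retract (.of_equiv e.symm)⟩
  case zero =>
    intro M _ _ _ _
    refine ⟨∅, Set.finite_empty, fun Y _ _ _ hY ⟨i, p, h⟩ => ?_⟩
    have : Subsingleton Y := (Function.LeftInverse.injective h).subsingleton
    exact absurd hY.1 (not_nontrivial Y)
  case loc =>
    intro M _ _ _ hM
    refine ⟨{stableClass A M}, Set.finite_singleton _, fun Y _ _ _ hY hr => ?_⟩
    have := hY.1
    obtain ⟨e⟩ := hM.equiv_of_retract hr
    exact stableClass_congr e
  case prod =>
    intro M N _ _ _ _ _ _ ⟨T, hT, h⟩ ⟨T', hT', h'⟩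
    exact ⟨T ∪ T', hT.union hT',
      (h.mono Set.subset_union_left).prod (h'.mono Set.subset_union_right)⟩

lemma SummandsIn.mem_closure (M : Type u) [AddCommGroup M] [Module A M] [Module.Finite A M]
    (h : SummandsIn T M) : stableClass A M ∈ AddSubmonoid.closure T := by
  revert M
  apply module_decomposition_induction (Λ := A)
    (p := fun M _ _ _ => SummandsIn T M → stableClass A M ∈ AddSubmonoid.closure T)
  case equiv =>
    intro M N _ _ _ _ _ _ e hM hN
    rw [← stableClass_congr e]
    exact hM (hN.retract (.of_equiv e))
  case zero =>
    intro M _ _ _ _ _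
    rw [stableClass_eq_zero_of_projective]
    exact zero_mem _
  case loc =>
    intro M _ _ _ hM h
    exact AddSubmonoid.subset_closure (h M hM (.of_equiv (LinearEquiv.refl A M)))
  case prod =>
    intro M N _ _ _ _ _ _ hM hN h
    exact add_mem (hM (h.retract .inl)) (hN (h.retract .inr))

lemma exists_finite_summandsIn_of_mem_closure {U : Set (StableClass A)} (hU : U.Finite) :
    ∃ T : Set (StableClass A), T.Finite ∧ ∀ (M : Type u) [AddCommGroup M] [Module A M]
      [Module.Finite A M], stableClass A M ∈ AddSubmonoid.closure U → SummandsIn T M := by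
  choose rep hrep using fun s : StableClass A => s.exists_rep
  choose T hT hTM using fun s : StableClass A => exists_finite_summandsIn (A := A) (rep s)
  let T₀ : Set (StableClass A) := insert 0 (⋃ s ∈ U, T s)
  refine ⟨T₀, (hU.biUnion fun s _ => hT s).insert 0, ?_⟩
  have h0 : (0 : StableClass A) ∈ T₀ := Set.mem_insert _ _
  suffices ∀ s ∈ AddSubmonoid.closure U, ∀ (M : Type u) [AddCommGroup M] [Module A M]
      [Module.Finite A M], stableClass A M = s → SummandsIn T₀ M from
    fun M _ _ _ hM => this _ hM M rfl
  intro s hs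
  induction hs using AddSubmonoid.closure_induction with
  | mem s hs =>
    intro M _ _ _ hM
    rw [← hrep s, stableClass_eq_iff] at hM
    exact ((hTM s).mono (Set.Subset.trans (Set.subset_biUnion_of_mem (u := T) hs)
      (Set.subset_insert _ _))).of_stablyIso h0 hM.symm
  | zero =>
    intro M _ _ _ hM
    rw [← stableClass_eq_zero_of_projective (A := A) PUnit, stableClass_eq_iff] at hM
    exact (summandsIn_of_projective (M := PUnit.{u + 1}) h0).of_stablyIso h0 hM.symm
  | add x y _ _ hx hy =>
    intro M _ _ _ hM
    rw [← hrep x, ← hrep y, ← stableClass_prod, stableClass_eq_iff] at hM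
    exact ((hx _ (hrep x)).prod (hy _ (hrep y))).of_stablyIso h0 hM.symm

lemma exists_pdLT_of_summandsIn (hT : T.Finite) : ∃ D : ℕ, ∀ (M : Type u) [AddCommGroup M]
    [Module A M] [Module.Finite A M], SummandsIn T M → (∃ d, PdLT A M d) → PdLT A M (D + 1) := by
  have key : ∀ s : StableClass A, ∃ D : ℕ, ∀ (M : Type u) [AddCommGroup M]
      [Module A M] [Module.Finite A M], stableClass A M = s → (∃ d, PdLT A M d) →
      PdLT A M (D + 1) := by
    intro s
    by_cases h : ∃ (M : FGMod A) (d : ℕ), stableClass A M = s ∧ PdLT A M d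
    · obtain ⟨M, d, rfl, hd⟩ := h
      exact ⟨d, fun N _ _ _ hN _ =>
        (hd.mono d.le_succ).of_stablyIso (stableClass_eq_iff.1 hN.symm)⟩
    · exact ⟨0, fun N _ _ _ hN ⟨d, hd⟩ => (h ⟨⟨N⟩, d, hN, hd⟩).elim⟩
  choose f hf using key
  obtain ⟨D, hD⟩ := (hT.image f).bddAbove
  refine ⟨D, ?_⟩
  apply module_decomposition_induction (Λ := A)
    (p := fun M _ _ _ => SummandsIn T M → (∃ d, PdLT A M d) → PdLT A M (D + 1))
  case equiv =>
    intro M N _ _ _ _ _ _ e hM hN ⟨d, hd⟩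
    exact (hM (hN.retract (.of_equiv e)) ⟨d, hd.of_equiv e.symm⟩).of_equiv e
  case zero =>
    intro M _ _ _ _ _ _
    exact pdLT_succ_of_projective
  case loc =>
    intro M _ _ _ hM h hd
    have hs := h M hM (.of_equiv (LinearEquiv.refl A M))
    exact (hf _ M rfl hd).mono (Nat.succ_le_succ (hD ⟨_, hs, rfl⟩))
  case prod =>
    intro M N _ _ _ _ _ _ hM hN h ⟨d, hd⟩
    exact (hM (h.retract .inl) ⟨d, hd.retract .inl⟩).prod
      (hN (h.retract .inr) ⟨d, hd.retract .inr⟩)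

end

lemma IsShortExact.stableClass_eq {X Y Z : Type u} [AddCommGroup X] [Module A X]
    [AddCommGroup Y] [Module A Y] [AddCommGroup Z] [Module A Z] [Module.Finite A X]
    [Module.Finite A Y] (h : IsShortExact A X Y Z) [Module.Projective A Z] :
    stableClass A Y = stableClass A X := by
  obtain ⟨i, q, hi, hiq, hq⟩ := h
  have : Module.Finite A Z := Module.Finite.of_surjective q hq
  obtain ⟨s, hs⟩ := Module.projective_lifting_property q LinearMap.id hq
  obtain ⟨e⟩ := exists_equiv_ker_prod q s (LinearMap.congr_fun hs)
  obtain ⟨f⟩ := equiv_ker_of_exact hi hiq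
  rw [stableClass_congr (e.trans (f.symm.prodCongr (LinearEquiv.refl A Z))), stableClass_prod,
    stableClass_eq_zero_of_projective Z, add_zero]

variable [IsNoetherianRing A]

/-- Iterated horseshoe lemma. -/
lemma IsShortExact.exists_iterate_syz {X Y Z : Type u} [AddCommGroup X] [Module A X]
    [AddCommGroup Y] [Module A Y] [AddCommGroup Z] [Module A Z] [Module.Finite A X]
    [Module.Finite A Y] (h : IsShortExact A X Y Z) (n : ℕ) : ∃ X' Y' Z' : FGMod A,
      IsShortExact A X' Y' Z' ∧ stableClass A X' = (syzygy A)^[n] (stableClass A X) ∧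
      stableClass A Y' = (syzygy A)^[n] (stableClass A Y) ∧
      ∀ d, PdLT A Z (d + n + 1) ↔ PdLT A Z' (d + 1) := by
  induction n with
  | zero =>
    have : Module.Finite A Z := by
      obtain ⟨i, q, hi, hiq, hq⟩ := h
      exact Module.Finite.of_surjective q hq
    exact ⟨⟨X⟩, ⟨Y⟩, ⟨Z⟩, h, rfl, rfl, fun d => Iff.rfl⟩
  | succ n ih =>
    obtain ⟨X₁, Y₁, Z₁, h₁, hX, hY, hZ⟩ := ih
    obtain ⟨X₂, Y₂, Z₂, h₂, hX₂, hY₂, hZ₂⟩ := h₁.exists_syz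
    refine ⟨X₂, Y₂, Z₂, h₂, ?_, ?_, fun d => ?_⟩
    · rw [Function.iterate_succ_apply', ← hX, syzygy_stableClass hX₂]
    · rw [Function.iterate_succ_apply', ← hY, syzygy_stableClass hY₂]
    · rw [← hZ₂.pdLT_iff, ← hZ (d + 1), show d + 1 + n + 1 = d + (n + 1) + 1 by ring]

/-- Igusa–Todorov bound: short exact sequences whose first two terms have stable class in a
finitely generated submonoid have third term of uniformly bounded projective dimension, whenever
that dimension is finite. -/
theorem exists_pdLT_of_mem_closure [IsArtinianRing A] {U : Set (StableClass A)} (hU : U.Finite) :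
    ∃ n : ℕ, ∀ (X Y Z : Type u) [AddCommGroup X] [Module A X] [AddCommGroup Y] [Module A Y]
      [AddCommGroup Z] [Module A Z] [Module.Finite A X] [Module.Finite A Y],
      IsShortExact A X Y Z → stableClass A X ∈ AddSubmonoid.closure U →
      stableClass A Y ∈ AddSubmonoid.closure U → (∃ d, PdLT A Z d) → PdLT A Z n := by
  obtain ⟨n₀, hn₀⟩ := exists_iterate_stable (syzygy A) hU
  obtain ⟨T, hT, hTU⟩ := exists_finite_summandsIn_of_mem_closure (hU.image (syzygy A)^[n₀])
  obtain ⟨D, hD⟩ := exists_pdLT_of_summandsIn hT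
  refine ⟨D + 1 + n₀ + 1, fun X Y Z _ _ _ _ _ _ _ _ h hX hY ⟨d, hd⟩ => ?_⟩
  have heq : (syzygy A)^[n₀] (stableClass A X) = (syzygy A)^[n₀] (stableClass A Y) := by
    obtain ⟨X', Y', Z', h', hX', hY', hZ'⟩ := h.exists_iterate_syz d
    have : Module.Projective A Z' := pdLT_one_iff.1 ((hZ' 0).1 (hd.mono (by omega)))
    exact hn₀ _ hX _ hY d (by rw [← hX', ← hY', h'.stableClass_eq])
  obtain ⟨X', Y', Z', ⟨i, q, hi, hiq, hq⟩, hX', hY', hZ'⟩ := h.exists_iterate_syz n₀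
  rw [hZ']
  rw [← hX', ← hY', stableClass_eq_iff] at heq
  obtain ⟨P, Q, hP, hQ, ⟨e⟩⟩ := heq
  obtain ⟨X₁, ψ, r, hX₁, hψ, hψr, hr, hnil⟩ := exists_nilpotent_part
    (e.symm.toLinearMap ∘ₗ LinearMap.inl A Y' Q ∘ₗ i)
    (q.prodMap (LinearMap.id (M := Q)) ∘ₗ e.toLinearMap)
    (e.symm.injective.comp (LinearMap.inl_injective.comp hi)) (by
      intro z
      obtain ⟨⟨y, p⟩, rfl⟩ := e.symm.surjective z
      rw [LinearMap.comp_apply, LinearEquiv.coe_coe, LinearEquiv.apply_symm_apply]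
      constructor
      · intro h
        obtain ⟨x, rfl⟩ := (hiq y).1 (congrArg Prod.fst h)
        exact ⟨x, congrArg e.symm (Prod.ext rfl (congrArg Prod.snd h).symm)⟩
      · rintro ⟨x, hx⟩
        obtain ⟨rfl, rfl⟩ := Prod.ext_iff.1 (e.symm.injective hx)
        exact Prod.ext (hiq.apply_apply_eq_zero x) rfl)
    ((hq.prodMap Function.surjective_id).comp e.surjective)
  have hZQ : PdLT A (Z' × Q) (d + 2) :=
    (((hZ' (d + 1)).1 (hd.mono (by omega))).prod pdLT_succ_of_projective)
  have hpd : PdLT A X₁ (D + 1) := by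
    refine hD _ ((hTU X' ?_).retract hX₁) ⟨_, pdLT_of_nilpotent hψ hψr hr hnil hZQ⟩
    rw [hX']
    exact iterate_mem_closure _ _ hX
  have hbound : PdLT A (Z' × Q) (D + 2) :=
    IsShortExact.pdLT_right ⟨ψ, r, hψ, hψr, hr⟩ hpd
      ((hpd.mono (by omega)).prod pdLT_succ_of_projective)
  exact hbound.retract .inl

end IgusaTodorov

section ProjDimLE

variable {A : Type u} [Ring A]

lemma pdLT_of_projDimLE {n : ℕ} {M : ModuleCat.{u} A} (h : ProjDimLE A n M) :
    PdLT A M (n + 1) := by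
  induction n generalizing M with
  | zero => exact pdLT_one_iff.2 h
  | succ n ih =>
    obtain ⟨P, g, hP, hPf, hg, h⟩ := h
    exact (IsSyz.pdLT_iff ⟨⟨P⟩, (LinearMap.ker g).subtype, g, hP, Subtype.val_injective,
      g.exact_subtype_ker_map, hg⟩).2 (ih h)

lemma projDimLE_of_pdLT [IsNoetherianRing A] {n : ℕ} {M : ModuleCat.{u} A} [Module.Finite A M]
    (h : PdLT A M (n + 1)) : ProjDimLE A n M := by
  induction n generalizing M with
  | zero => exact pdLT_one_iff.1 h
  | succ n ih =>
    obtain ⟨m, g, hg⟩ := Module.Finite.exists_fin' A M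
    have hF : Module.Projective A (Fin m → A) := inferInstance
    have hK : Module.Finite A (ModuleCat.of A (LinearMap.ker g)) :=
      inferInstanceAs (Module.Finite A (LinearMap.ker g))
    exact ⟨ModuleCat.of A (Fin m → A), g, hF, inferInstanceAs (Module.Finite A (Fin m → A)), hg,
      ih ((IsSyz.pdLT_iff ⟨⟨Fin m → A⟩, (LinearMap.ker g).subtype, g, hF, Subtype.val_injective,
        g.exact_subtype_ker_map, hg⟩).1 h)⟩

end ProjDimLE

section Semisimple

variable {A : Type u} [Ring A] [IsArtinianRing A]

lemma summandsIn_pi {T : Set (StableClass A)} {M : Type u} [AddCommGroup M] [Module A M]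
    (h : SummandsIn T M) (n : ℕ) : SummandsIn T (Fin n → M) := by
  induction n with
  | zero =>
    intro Y _ _ _ hY ⟨i, p, h⟩
    have : Subsingleton Y := (Function.LeftInverse.injective h).subsingleton
    exact absurd hY.1 (not_nontrivial Y)
  | succ n ih =>
    exact (h.prod ih).retract (.of_equiv (Fin.consLinearEquiv A fun _ : Fin (n + 1) => M).symm)

/-- A finitely generated module annihilated by the radical is a direct summand of a finite power
of `A ⧸ rad A`. -/
lemma exists_retract_of_jacobson_smul {Z : Type u} [AddCommGroup Z] [Module A Z]
    [Module.Finite A Z] (hZ : ∀ a ∈ Ring.jacobson A, ∀ z : Z, a • z = 0) :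
    ∃ n : ℕ, IsRetractOf A Z (Fin n → A ⧸ Ring.jacobson A) := by
  have : IsSemisimpleModule A (A ⧸ Ring.jacobson A) :=
    (IsArtinian.isSemisimpleModule_iff_jacobson ..).2 (Module.jacobson_quotient_jacobson A A)
  obtain ⟨n, s, hs⟩ := Module.Finite.exists_fin (R := A) (M := Z)
  let f : (Fin n → A ⧸ Ring.jacobson A) →ₗ[A] Z := LinearMap.lsum A _ ℕ fun i =>
    Submodule.liftQ (Ring.jacobson A) (LinearMap.toSpanSingleton A Z (s i)) fun a ha => hZ a ha _
  have hf : Function.Surjective f := by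
    rw [← LinearMap.range_eq_top, ← top_le_iff, ← hs, Submodule.span_le]
    rintro _ ⟨i, rfl⟩
    exact ⟨Pi.single i (Submodule.Quotient.mk 1), 
      (LinearMap.lsum_piSingle _ _ _ _ _ _).trans (one_smul A (s i))⟩
  have : IsSemisimpleModule A Z := IsSemisimpleModule.of_surjective f hf
  obtain ⟨g, hg⟩ := IsSemisimpleModule.lifting_property f hf LinearMap.id
  exact ⟨n, g, f, LinearMap.congr_fun hg⟩

end Semisimple

section RadicalAction

variable {R : Type u} [CommRing R] {A : Type u} [Ring A] [Algebra R A] {B : Subalgebra R A}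
  {J : Set A} {M N : Type u} [AddCommGroup M] [Module A M] [AddCommGroup N] [Module A N]

/-- The `A`-submodule spanned by the products of elements of `J` and `Y`. -/
def setMul (J : Set A) (Y : Submodule B M) : Submodule A M :=
  Submodule.span A {z | ∃ x ∈ J, ∃ y ∈ Y, z = x • y}

lemma setMul_bot : setMul J (⊥ : Submodule B M) = ⊥ := by
  rw [eq_bot_iff, setMul, Submodule.span_le]
  rintro _ ⟨x, -, y, hy, rfl⟩
  rw [(Submodule.mem_bot _).1 hy, smul_zero]
  exact zero_mem _

lemma setMul_mono {Y Y' : Submodule B M} (h : Y ≤ Y') : setMul J Y ≤ setMul J Y' :=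
  Submodule.span_mono fun _ ⟨x, hx, y, hy, hz⟩ => ⟨x, hx, y, h hy, hz⟩

lemma setMul_sup (Y Y' : Submodule B M) : setMul J (Y ⊔ Y') = setMul J Y ⊔ setMul J Y' := by
  refine le_antisymm ?_ (sup_le (setMul_mono le_sup_left) (setMul_mono le_sup_right))
  rw [setMul, Submodule.span_le]
  rintro _ ⟨x, hx, y, hy, rfl⟩
  obtain ⟨y₁, h₁, y₂, h₂, rfl⟩ := Submodule.mem_sup.1 hy
  rw [smul_add]
  exact Submodule.add_mem_sup (Submodule.subset_span ⟨x, hx, y₁, h₁, rfl⟩)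
    (Submodule.subset_span ⟨x, hx, y₂, h₂, rfl⟩)

lemma map_setMul (g : M →ₗ[A] N) (Y : Submodule B M) (Y' : Submodule B N)
    (h : ∀ y', y' ∈ Y' ↔ ∃ y ∈ Y, g y = y') : (setMul J Y).map g = setMul J Y' := by
  rw [setMul, setMul, Submodule.map_span]
  congr 1
  ext z
  constructor
  · rintro ⟨_, ⟨x, hx, y, hy, rfl⟩, rfl⟩
    exact ⟨x, hx, g y, (h _).2 ⟨y, hy, rfl⟩, map_smul g x y⟩
  · rintro ⟨x, hx, y', hy', rfl⟩
    obtain ⟨y, hy, rfl⟩ := (h y').1 hy'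
    exact ⟨x • y, ⟨x, hx, y, hy, rfl⟩, map_smul g x y⟩

variable (hJ : ∀ x ∈ J, x ∈ B) (hleft : ∀ a : A, ∀ x ∈ J, a * x ∈ J)

include hJ hleft in
lemma mem_of_mem_setMul {Y : Submodule B M} {z : M} (hz : z ∈ setMul J Y) : z ∈ Y := by
  suffices ∀ a : A, a • z ∈ Y by simpa using this 1
  induction hz using Submodule.span_induction with
  | mem z hz =>
    obtain ⟨x, hx, y, hy, rfl⟩ := hz
    intro a
    rw [smul_smul]
    exact Y.smul_mem (⟨a * x, hJ _ (hleft a x hx)⟩ : B) hy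
  | zero => simp
  | add z w _ _ hz hw =>
    intro a
    rw [smul_add]
    exact add_mem (hz a) (hw a)
  | smul b z _ hz =>
    intro a
    rw [smul_smul]
    exact hz _

include hJ hleft in
/-- A `B`-linear isomorphism `Y ≃ Y'` induces an `A`-linear isomorphism `J Y ≃ J Y'`. -/
lemma exists_setMul_equiv {Y : Submodule B M} {Y' : Submodule B N} (e : Y ≃ₗ[B] Y') :
    Nonempty (setMul J Y ≃ₗ[A] setMul J Y') := by
  let G : Submodule B (M × N) :=
    LinearMap.range (Y.subtype.prod (Y'.subtype ∘ₗ e.toLinearMap))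
  have hG : ∀ z ∈ setMul J G, ∃ y : Y, ((y : M), (e y : N)) = z := fun z hz =>
    mem_of_mem_setMul hJ hleft hz
  have h1 : (setMul J G).map (LinearMap.fst A M N) = setMul J Y := by
    refine map_setMul _ _ _ fun y => ⟨fun hy => ⟨_, ⟨⟨y, hy⟩, rfl⟩, rfl⟩, ?_⟩
    rintro ⟨_, ⟨y, rfl⟩, rfl⟩
    exact y.2
  have h2 : (setMul J G).map (LinearMap.snd A M N) = setMul J Y' := by
    refine map_setMul _ _ _ fun y => ⟨fun hy => ⟨_, ⟨e.symm ⟨y, hy⟩, rfl⟩, by simp⟩, ?_⟩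
    rintro ⟨_, ⟨y, rfl⟩, rfl⟩
    exact (e y).2
  have i1 : Set.InjOn (LinearMap.fst A M N) (setMul J G) := by
    intro z hz w hw hzw
    obtain ⟨y, rfl⟩ := hG z hz
    obtain ⟨y', rfl⟩ := hG w hw
    obtain rfl : y = y' := Subtype.ext hzw
    rfl
  have i2 : Set.InjOn (LinearMap.snd A M N) (setMul J G) := by
    intro z hz w hw hzw
    obtain ⟨y, rfl⟩ := hG z hz
    obtain ⟨y', rfl⟩ := hG w hw
    obtain rfl : y = y' := e.injective (Subtype.ext hzw)
    rfl
  rw [← h1, ← h2]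
  exact ⟨(LinearEquiv.ofBijective _ ⟨LinearMap.submoduleMap_injective_of_injOn i1,
    LinearMap.submoduleMap_surjective _ _⟩).symm.trans
    (LinearEquiv.ofBijective _ ⟨LinearMap.submoduleMap_injective_of_injOn i2,
    LinearMap.submoduleMap_surjective _ _⟩)⟩

include hJ hleft in
lemma exists_finite_setMul_mem_closure [IsArtinianRing A] [IsNoetherianRing A] [IsArtinianRing B]
    [IsNoetherianRing B] [Module.Finite B A] (hB : RepFinite B) :
    ∃ U : Set (StableClass A), U.Finite ∧ ∀ (M : Type u) [AddCommGroup M] [Module A M]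
      [Module.Finite A M] (Y : Submodule B M),
      stableClass A (setMul J Y) ∈ AddSubmonoid.closure U := by
  obtain ⟨k, N, hN⟩ := hB
  have key : ∀ i, ∃ s : StableClass A, ∀ (M : FGMod A) (Y : Submodule B M),
      Nonempty (Y ≃ₗ[B] N i) → stableClass A (setMul J Y) = s := by
    intro i
    by_cases h : ∃ (M : FGMod A) (Y : Submodule B M), Nonempty (Y ≃ₗ[B] N i)
    · obtain ⟨M, Y, ⟨e⟩⟩ := h
      refine ⟨stableClass A (setMul J Y), fun M' Y' ⟨e'⟩ => ?_⟩
      obtain ⟨f⟩ := exists_setMul_equiv hJ hleft (e'.trans e.symm)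
      exact stableClass_congr f
    · exact ⟨0, fun M Y hY => (h ⟨M, Y, hY⟩).elim⟩
  choose s hs using key
  refine ⟨Set.range s, Set.finite_range s, fun M _ _ _ Y => ?_⟩
  have : Module.Finite B M := Module.Finite.trans A M
  induction Y using submodule_decomposition_induction with
  | bot =>
    rw [setMul_bot, stableClass_eq_zero_of_projective]
    exact zero_mem _
  | indec Y h0 h =>
    obtain ⟨i, hi⟩ := hN (ModuleCat.of B Y) (inferInstanceAs (Module.Finite B Y)) ⟨h0, h⟩
    rw [hs i ⟨M⟩ Y hi]
    exact AddSubmonoid.subset_closure ⟨i, rfl⟩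
  | sup Y Y' hd h h' =>
    have hdis : Disjoint (setMul J Y) (setMul J Y') := by
      rw [Submodule.disjoint_def] at hd ⊢
      exact fun z hz hz' =>
        hd z (mem_of_mem_setMul hJ hleft hz) (mem_of_mem_setMul hJ hleft hz')
    obtain ⟨e⟩ := exists_prod_equiv_sup _ _ hdis
    rw [setMul_sup, ← stableClass_congr e, stableClass_prod]
    exact add_mem h h'

end RadicalAction

/-- A submodule `L` of `M` with quotient `M ⧸ L` gives a short exact sequence ending in `M` whose
first term is a syzygy of `M ⧸ L` and whose second term is stably `L`. -/
lemma exists_isShortExact_quotient {A : Type u} [Ring A] [IsNoetherianRing A] {M : Type u}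
    [AddCommGroup M] [Module A M] [Module.Finite A M] (L : Submodule A M) :
    ∃ K Y : FGMod A, IsShortExact A K Y M ∧ IsSyz A K (M ⧸ L) ∧
      stableClass A Y = stableClass A L := by
  obtain ⟨n, f, hf⟩ := Module.Finite.exists_fin' A M
  have hF : Module.Projective A (Fin n → A) := inferInstance
  have hK : ∀ x, x ∈ LinearMap.ker (L.mkQ ∘ₗ f) ↔ f x ∈ L := fun x => by simp
  refine ⟨⟨LinearMap.ker (L.mkQ ∘ₗ f)⟩, ⟨L × (Fin n → A)⟩,
    ⟨(f.restrict fun x hx => (hK x).1 hx).prod (LinearMap.ker (L.mkQ ∘ₗ f)).subtype,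
      f.comp (LinearMap.snd A L (Fin n → A)) - L.subtype.comp (LinearMap.fst A L (Fin n → A)),
      fun x y hxy => Subtype.ext (congrArg (fun z => (z.2 : Fin n → A)) hxy), ?_, fun m => ?_⟩,
    ⟨⟨Fin n → A⟩, (LinearMap.ker (L.mkQ ∘ₗ f)).subtype, L.mkQ ∘ₗ f, hF, Subtype.val_injective,
      LinearMap.exact_subtype_ker_map _, L.mkQ_surjective.comp hf⟩, ?_⟩
  · rintro ⟨⟨l, hl⟩, x⟩
    constructor
    · intro h
      obtain rfl : f x = l := sub_eq_zero.1 h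
      exact ⟨⟨x, (hK x).2 hl⟩, rfl⟩
    · rintro ⟨y, hy⟩
      rw [← hy]
      exact sub_self _
  · obtain ⟨x, rfl⟩ := hf m
    exact ⟨(0, x), by simp⟩
  · exact (stableClass_prod L (Fin n → A)).trans
      (by rw [stableClass_eq_zero_of_projective (Fin n → A), add_zero])

/-- If `B ⊆ A` is a subalgebra with `rad B` a left ideal of `A` and
`rad B · A = rad A`, and `B` is representation-finite, then `fin.dim A < ∞`. -/
theorem statement6 (B : Subalgebra R A)
    (hleft : ∀ a : A, ∀ x ∈ radSet B, a * x ∈ radSet B)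
    (heq : AddSubgroup.closure {z : A | ∃ x ∈ radSet B, ∃ a : A, z = x * a} =
      (jacobsonRad A).toAddSubgroup)
    (hB : RepFinite ↥B) :
    FinFinDim A := by
  have : IsArtinianRing A := IsArtinianRing.of_finite R A
  have : IsNoetherianRing A := IsNoetherianRing.of_finite R A
  have : Module.Finite R B := inferInstanceAs (Module.Finite R (Subalgebra.toSubmodule B))
  have : IsArtinianRing B := IsArtinianRing.of_finite R B
  have : IsNoetherianRing B := IsNoetherianRing.of_finite R B
  have : Module.Finite B A := Module.Finite.of_restrictScalars_finite R B A
  have hJ : ∀ x ∈ radSet B, x ∈ B := by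
    rintro _ ⟨x, -, rfl⟩
    exact x.2
  obtain ⟨U, hU, hUM⟩ := exists_finite_setMul_mem_closure hJ hleft hB
  obtain ⟨T, hT, hTA⟩ := exists_finite_summandsIn (A := A) (A ⧸ Ring.jacobson A)
  obtain ⟨n, hn⟩ := exists_pdLT_of_mem_closure (hU.union (hT.image (syzygy A)))
  refine ⟨n, fun M hM ⟨k, hk⟩ => ?_⟩
  let L : Submodule A M := setMul (radSet B) (⊤ : Submodule B M)
  obtain ⟨K, Y, hex, hK, hY⟩ := exists_isShortExact_quotient L
  refine projDimLE_of_pdLT ((hn K Y M hex ?_ ?_ ⟨_, pdLT_of_projDimLE hk⟩).mono n.le_succ)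
  · rw [← syzygy_stableClass hK]
    refine AddSubmonoid.closure_mono Set.subset_union_right ?_
    rw [← AddMonoidHom.map_mclosure]
    refine ⟨_, SummandsIn.mem_closure (T := T) _ ?_, rfl⟩
    obtain ⟨m, hm⟩ := exists_retract_of_jacobson_smul (Z := M ⧸ L) (by
      intro a ha z
      obtain ⟨z, rfl⟩ := L.mkQ_surjective z
      rw [← map_smul, Submodule.mkQ_apply, Submodule.Quotient.mk_eq_zero]
      have hle : AddSubgroup.closure {z : A | ∃ x ∈ radSet B, ∃ a : A, z = x * a} ≤
          (L.comap (LinearMap.toSpanSingleton A M z)).toAddSubgroup := by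
        rw [AddSubgroup.closure_le]
        rintro _ ⟨x, hx, b, rfl⟩
        exact Submodule.subset_span ⟨x, hx, b • z, trivial, mul_smul x b z⟩
      rw [heq] at hle
      rw [Ring.jacobson_eq_sInf_isMaximal] at ha
      exact hle ha)
    exact (summandsIn_pi hTA m).retract hm
  · rw [hY]
    exact AddSubmonoid.closure_mono Set.subset_union_left (hUM M ⊤)
end
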